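/- arXiv:1508.05813 — 2 statements merged into one kernel-verified Lean document; each statement's English description precedes it below -/
import Mathlib

section
/- Let R be a commutative Noetherian ring and let C be a pointwise dualizing semidualizing R-module. Then for every prime ideal p of R and every nonzero free R_p-module F, the injective dimension id_R(C ⊗_R T_p) equals ht(p), where T_p denotes the pR_p-adic completion of F. -/
/-!
Write `A = R_p`, `D = C_p` and let `T` be the completion of `F`. The proof shows, for every natural
number `n`, that `id_R (C ⊗ T) ≤ n` if and only if `ht p ≤ n`, in three reductions.

* Since `T` is an `A`-module, `C ⊗[R] T ≃ D ⊗[A] T`, and for an `A`-module the injective dimensions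
  over `R` and over its localization `A` agree (`injDimLT_localization_iff`): an injective
  resolution over `A` is one over `R` because `A` is flat, and localization preserves injectives
  over a Noetherian ring.
* `T` is faithfully flat over `A` (`AdicCompletion.faithfullyFlat_of_free`), although `F` need not
  be finitely generated: by the Artin-Rees lemma, completing the direct sum of `X` copies of an
  exact sequence of finitely generated modules keeps it exact, and this gives the equational
  criterion for flatness. As `Ext` out of a finitely generated module commutes with flat base
  change, `id_A (D ⊗ T) = id_A D` (`injDimLT_tensor_iff`).
* `D` is finitely generated with full support, since `R → Hom(C, C)` is injective, and it has finite
  injective dimension, since it is a localization of `C_m` for a maximal ideal `m` containing `p`.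
  For such a module over a Noetherian local ring `A`, `id_A D = dim A`
  (`injDimLT_iff_height_le`).

The last fact is Bass's theorem. Let `k` be the residue field. Nakayama's lemma applied to
multiplication by `x ∈ m \ q` on `A/q` shows that `Ext^(n+1) (-, D) = 0` forces `Ext^n (A/q, D) = 0`
for every prime `q ≠ m`. By prime filtrations, `id D` is then detected by `Ext (k, D)`, and
localizing at a prime `q ≠ m` lowers the injective dimension strictly; induction on it
gives `dim A ≤ id D`. Conversely, if `Ext^n (k, D) ≠ 0` with `n = id D`, then a finitely generated
`N ≠ 0` with `Ext^i (N, D) = 0` for `i > j` satisfies `n ≤ j + dim N`: either `k` embeds in `N`, so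
that `Ext^n (N, D)` surjects onto `Ext^n (k, D)`, or `m` contains an `N`-regular element `x` and
one passes to `N/xN`. Taking `N = A` and `j = 0` gives `id D ≤ dim A`.
-/

open CategoryTheory

universe u

noncomputable section

variable (R : Type u) [CommRing R]

/-- The Ext module `Ext^i_R(M, N)`, via the derived functor definition. -/
noncomputable def extM (M N : Type u) [AddCommGroup M] [Module R M]
    [AddCommGroup N] [Module R N] (i : ℕ) : ModuleCat R :=
  ((Ext R (ModuleCat.{u} R) i).obj (Opposite.op (ModuleCat.of R M))).obj (ModuleCat.of R N)

/-- The Tor module `Tor_i^R(M, N)`, via the derived functor definition. -/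
noncomputable def torM (M N : Type u) [AddCommGroup M] [Module R M]
    [AddCommGroup N] [Module R N] (i : ℕ) : ModuleCat R :=
  ((Tor (ModuleCat.{u} R) i).obj (ModuleCat.of R M)).obj (ModuleCat.of R N)

/-- `C` is a semidualizing `R`-module: it is finitely generated, the homothety map
`R → Hom_R(C,C)` is bijective, and `Ext^i_R(C,C) = 0` for all `i > 0`. -/
def IsSemidualizing (C : Type u) [AddCommGroup C] [Module R C] : Prop :=
  Module.Finite R C ∧
  Function.Bijective (fun r : R => r • (LinearMap.id : C →ₗ[R] C)) ∧
  ∀ i : ℕ, 0 < i → Subsingleton (extM R C C i)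

/-- Injective dimension of a module, characterized via vanishing of Ext. -/
noncomputable def injDim (M : Type u) [AddCommGroup M] [Module R M] : ℕ∞ :=
  sInf {n : ℕ∞ | ∀ (N : Type u) (_ : AddCommGroup N) (_ : Module R N) (i : ℕ),
    n < i → Subsingleton (extM R N M i)}

/-- Flat dimension of a module, characterized via vanishing of Tor. -/
noncomputable def flatDim (M : Type u) [AddCommGroup M] [Module R M] : ℕ∞ :=
  sInf {n : ℕ∞ | ∀ (N : Type u) (_ : AddCommGroup N) (_ : Module R N) (i : ℕ),
    n < i → Subsingleton (torM R N M i)}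

/-- The length of a module, as the height of `⊤` in its submodule lattice. -/
noncomputable def mLength (M : Type u) [AddCommGroup M] [Module R M] : ℕ∞ :=
  Order.height (⊤ : Submodule R M)

/-- Depth of a module over a local ring: the least `i` with `Ext^i(k, M) ≠ 0`. -/
noncomputable def depth [IsLocalRing R] (M : Type u) [AddCommGroup M] [Module R M] : ℕ∞ :=
  sInf {n : ℕ∞ | ∃ i : ℕ, n = i ∧ Nontrivial (extM R (IsLocalRing.ResidueField R) M i)}

/-- Depth, as a natural number. -/
noncomputable def depthNat [IsLocalRing R] (M : Type u) [AddCommGroup M] [Module R M] : ℕ :=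
  sInf {i : ℕ | Nontrivial (extM R (IsLocalRing.ResidueField R) M i)}

/-- The type of a module: `r_R(M) = dim_k Ext^t_R(k, M)` where `t = depth_R(M)`. -/
noncomputable def rtype [IsLocalRing R] (M : Type u) [AddCommGroup M] [Module R M] : ℕ∞ :=
  mLength R (extM R (IsLocalRing.ResidueField R) M (depthNat R M))

/-- A dualizing module: a semidualizing module of finite injective dimension. -/
def IsDualizing (C : Type u) [AddCommGroup C] [Module R C] : Prop :=
  IsSemidualizing R C ∧ injDim R C < ⊤

/-- A pointwise dualizing module: the localization at every maximal ideal is dualizing. -/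
def IsPointwiseDualizing (C : Type u) [AddCommGroup C] [Module R C] : Prop :=
  IsSemidualizing R C ∧ ∀ (p : Ideal R) [p.IsPrime], p.IsMaximal →
    IsDualizing (Localization.AtPrime p) (LocalizedModule p.primeCompl C)

/-- Height of a prime ideal. -/
noncomputable def primeHeight (p : Ideal R) [hp : p.IsPrime] : ℕ∞ :=
  Order.height (⟨p, hp⟩ : PrimeSpectrum R)

/-- A totally `C`-reflexive module. -/
def IsTotallyCReflexive (C M : Type u) [AddCommGroup C] [Module R C]
    [AddCommGroup M] [Module R M] : Prop :=
  Module.Finite R M ∧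
  Function.Bijective ((LinearMap.id : (M →ₗ[R] C) →ₗ[R] (M →ₗ[R] C)).flip) ∧
  ∀ i : ℕ, 0 < i →
    Subsingleton (extM R M C i) ∧ Subsingleton (extM R (M →ₗ[R] C) C i)

/-- `G_C`-dimension of `M` is at most `n`. -/
def gcDimLE (C : Type u) [AddCommGroup C] [Module R C] :
    ℕ → (M : Type u) → [AddCommGroup M] → [Module R M] → Prop
  | 0, M, _, _ => IsTotallyCReflexive R C M
  | n+1, M, _, _ => ∃ (G K : Type u) (_ : AddCommGroup G) (_ : Module R G)
      (_ : AddCommGroup K) (_ : Module R K) (f : K →ₗ[R] G) (g : G →ₗ[R] M),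
      IsTotallyCReflexive R C G ∧ Function.Injective f ∧ Function.Surjective g ∧
      LinearMap.range f = LinearMap.ker g ∧ gcDimLE C n K

/-- `M` has finite `G_C`-dimension. -/
def HasFiniteGCDim (C M : Type u) [AddCommGroup C] [Module R C]
    [AddCommGroup M] [Module R M] : Prop :=
  ∃ n : ℕ, gcDimLE R C n M

/-- A finitely generated module over a local ring is Cohen-Macaulay if its depth
equals its Krull dimension. -/
def IsCohenMacaulayModule [IsLocalRing R] (M : Type u) [AddCommGroup M] [Module R M] : Prop :=
  Module.Finite R M ∧ (depth R M : WithBot ℕ∞) = Order.krullDim (Module.support R M)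

/-- The `S`-module structure on `Hom_R(S, M)` through the domain, for an `R`-algebra `S`. -/
instance homDomModule (S : Type u) [CommRing S] [Algebra R S]
    (M : Type u) [AddCommGroup M] [Module R M] : Module S (S →ₗ[R] M) where
  smul s f := f.comp (LinearMap.mul R S s)
  one_smul f := by ext x; show f (1 * x) = f x; rw [one_mul]
  mul_smul s t f := by ext x; show f (s * t * x) = f (t * (s * x)); ring_nf
  smul_zero s := by ext x; rfl
  smul_add s f g := by ext x; rfl
  add_smul s t f := by
    ext x; show f ((s + t) * x) = f (s * x) + f (t * x); rw [add_mul, map_add]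
  zero_smul f := by ext x; show f (0 * x) = 0; rw [zero_mul, map_zero]

/-- The Bass number `μ^i(p, M) = dim_{k(p)} Ext^i_{R_p}(k(p), M_p)`. -/
noncomputable def bassNumber (p : Ideal R) [p.IsPrime] (i : ℕ)
    (M : Type u) [AddCommGroup M] [Module R M] : ℕ∞ :=
  mLength (Localization.AtPrime p)
    (extM (Localization.AtPrime p) (IsLocalRing.ResidueField (Localization.AtPrime p))
      (LocalizedModule p.primeCompl M) i)

/-- The dual Bass number `π_i(p, M) = dim_{k(p)} Tor_i^{R_p}(k(p), Hom_R(R_p, M))`. -/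
noncomputable def dualBassNumber (p : Ideal R) [p.IsPrime] (i : ℕ)
    (M : Type u) [AddCommGroup M] [Module R M] : ℕ∞ :=
  mLength (Localization.AtPrime p)
    (torM (Localization.AtPrime p) (IsLocalRing.ResidueField (Localization.AtPrime p))
      (Localization.AtPrime p →ₗ[R] M) i)

/-- A cotorsion module: `Ext^1_R(F, M) = 0` for every flat module `F`. -/
def IsCotorsion (M : Type u) [AddCommGroup M] [Module R M] : Prop :=
  ∀ (F : Type u) (_ : AddCommGroup F) (_ : Module R F), Module.Flat R F →
    Subsingleton (extM R F M 1)

/-- A `C`-flat module: one isomorphic to `C ⊗_R F` with `F` flat. -/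
def IsCFlat (C M : Type u) [AddCommGroup C] [Module R C] [AddCommGroup M] [Module R M] : Prop :=
  ∃ (F : Type u) (_ : AddCommGroup F) (_ : Module R F), Module.Flat R F ∧
    Nonempty (M ≃ₗ[R] TensorProduct R C F)

/-- A `C`-injective module: one isomorphic to `Hom_R(C, I)` with `I` injective. -/
def IsCInjective (C M : Type u) [AddCommGroup C] [Module R C]
    [AddCommGroup M] [Module R M] : Prop :=
  ∃ (I : Type u) (_ : AddCommGroup I) (_ : Module R I), Module.Injective R I ∧
    Nonempty (M ≃ₗ[R] (C →ₗ[R] I))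

/-- `φ : F → M` is a flat cover of `M`. -/
def IsFlatCover (M F : Type u) [AddCommGroup M] [Module R M] [AddCommGroup F] [Module R F]
    (φ : F →ₗ[R] M) : Prop :=
  Module.Flat R F ∧
  (∀ (G : Type u) (_ : AddCommGroup G) (_ : Module R G), Module.Flat R G →
    ∀ ψ : G →ₗ[R] M, ∃ h : G →ₗ[R] F, φ.comp h = ψ) ∧
  (∀ ψ : F →ₗ[R] F, φ.comp ψ = φ → Function.Bijective ψ)

/-- `E` is an injective hull of `N`: `E` is injective and contains `N` as an
essential submodule. -/
def IsInjectiveHull (N E : Type u) [AddCommGroup N] [Module R N]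
    [AddCommGroup E] [Module R E] : Prop :=
  Module.Injective R E ∧ ∃ ι : N →ₗ[R] E, Function.Injective ι ∧
    ∀ K : Submodule R E, K ≠ ⊥ → K ⊓ LinearMap.range ι ≠ ⊥

end

/-! ### The injective dimension through `Abelian.Ext` -/

/-- `Ext^(j+1) (X, Y) = 0` says that `(j+1)`-cocycles of `Hom(P, Y)` are coboundaries, for a projective
resolution `P` of `X`; this is the common ground between the two constructions of `Ext`. -/
theorem subsingleton_ext_succ_iff {R : Type u} [CommRing R] {X Y : ModuleCat.{u} R}
    (P : ProjectiveResolution X) (j : ℕ) :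
    Subsingleton (Abelian.Ext X Y (j + 1)) ↔ ∀ f : P.complex.X (j + 1) ⟶ Y,
      P.complex.d (j + 2) (j + 1) ≫ f = 0 → ∃ g : P.complex.X j ⟶ Y,
        P.complex.d (j + 1) j ≫ g = f := by
  constructor
  · intro h f hf
    exact (P.extMk_eq_zero_iff f (j + 2) rfl hf j rfl).1 (Subsingleton.elim _ _)
  · intro h
    refine subsingleton_of_forall_eq 0 fun α => ?_
    obtain ⟨f, hf, rfl⟩ := P.extMk_surjective α (j + 2) rfl
    exact (P.extMk_eq_zero_iff f (j + 2) rfl hf j rfl).2 (h f hf)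

/-- The derived functor `extM` and `Abelian.Ext` vanish in the same positive degrees. -/
theorem subsingleton_extM_succ_iff {R : Type u} [CommRing R] (N M : Type u) [AddCommGroup M]
    [Module R M] [AddCommGroup N] [Module R N] (j : ℕ) :
    Subsingleton (extM R N M (j + 1)) ↔
      Subsingleton (Abelian.Ext (ModuleCat.of R N) (ModuleCat.of R M) (j + 1)) := by
  let P := projectiveResolution (ModuleCat.of R N)
  rw [subsingleton_ext_succ_iff P, extM, ← ModuleCat.isZero_iff_subsingleton,
    (P.isoExt (j + 1) (ModuleCat.of R M) (R := R)).isZero_iff,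
    ← HomologicalComplex.exactAt_iff_isZero_homology,
    HomologicalComplex.exactAt_iff' _ j (j + 1) (j + 2) (by simp) (by simp),
    ShortComplex.moduleCat_exact_iff]
  rfl

theorem injDim_le_iff {R : Type u} [CommRing R] (M : Type u) [AddCommGroup M] [Module R M]
    (n : ℕ) : injDim R M ≤ n ↔ HasInjectiveDimensionLT (ModuleCat.of R M) (n + 1) := by
  constructor
  · intro h
    refine HasInjectiveDimensionLT.mk fun i hi N e => ?_
    have hmem := csInf_mem (s := {n : ℕ∞ | ∀ (N : Type u) (_ : AddCommGroup N) (_ : Module R N)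
      (i : ℕ), n < i → Subsingleton (extM R N M i)}) ⟨⊤, fun N _ _ i hi => by simp at hi⟩
    obtain ⟨j, rfl⟩ : ∃ j, i = j + 1 := ⟨i - 1, by lia⟩
    have h1 := hmem N inferInstance inferInstance (j + 1)
      (lt_of_le_of_lt h (by exact_mod_cast (by lia : n < j + 1)))
    have := (subsingleton_extM_succ_iff N M j).1 h1
    exact Subsingleton.elim (α := Abelian.Ext (ModuleCat.of R N) (ModuleCat.of R M) (j + 1)) _ _
  · intro h
    refine sInf_le fun N _ _ i hi => ?_
    have hi' : n < i := by exact_mod_cast hi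
    obtain ⟨j, rfl⟩ : ∃ j, i = j + 1 := ⟨i - 1, by lia⟩
    rw [subsingleton_extM_succ_iff]
    exact HasInjectiveDimensionLT.subsingleton _ (n + 1) (j + 1) (by lia) _

/-! ### Vanishing of Ext and injective dimension -/

section vanishing
variable {A : Type u} [CommRing A]

/-- `Ext^i_A(N, M) = 0`. -/
abbrev ExtVanish (A : Type u) [CommRing A] (N M : Type u) [AddCommGroup N] [Module A N]
    [AddCommGroup M] [Module A M] (i : ℕ) : Prop :=
  Subsingleton (Abelian.Ext (ModuleCat.of A N) (ModuleCat.of A M) i)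

/-- The injective dimension of `M` over `A` is less than `n`. The strict bound lets `n = 0` mean
`M = 0`. -/
abbrev InjDimLT (A : Type u) [CommRing A] (M : Type u) [AddCommGroup M] [Module A M]
    (n : ℕ) : Prop :=
  HasInjectiveDimensionLT (ModuleCat.of A M) n

variable {M N : Type u} [AddCommGroup M] [Module A M] [AddCommGroup N] [Module A N]
variable {N₁ N₂ N₃ : Type u} [AddCommGroup N₁] [Module A N₁] [AddCommGroup N₂] [Module A N₂]
  [AddCommGroup N₃] [Module A N₃] {f : N₁ →ₗ[A] N₂} {g : N₂ →ₗ[A] N₃}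

theorem shortExact_of (hf : Function.Injective f) (hfg : Function.Exact f g)
    (hg : Function.Surjective g) :
    (ModuleCat.shortComplexOfCompEqZero f g hfg.linearMap_comp_eq_zero).ShortExact :=
  ModuleCat.shortComplex_shortExact _ hfg hf hg

section
variable (hf : Function.Injective f) (hfg : Function.Exact f g) (hg : Function.Surjective g)
include hf hfg hg

theorem ExtVanish.mid {n : ℕ} (h₁ : ExtVanish A N₁ M n) (h₃ : ExtVanish A N₃ M n) :
    ExtVanish A N₂ M n := by
  refine subsingleton_of_forall_eq 0 fun x => ?_
  obtain ⟨y, rfl⟩ := Abelian.Ext.contravariant_sequence_exact₂ (shortExact_of hf hfg hg)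
    (ModuleCat.of A M) x (h₁.elim _ _)
  rw [h₃.elim y 0, Abelian.Ext.comp_zero]

theorem ExtVanish.right {n : ℕ} (h₁ : ExtVanish A N₁ M n) (h₂ : ExtVanish A N₂ M (n + 1)) :
    ExtVanish A N₃ M (n + 1) := by
  refine subsingleton_of_forall_eq 0 fun x => ?_
  obtain ⟨y, rfl⟩ := Abelian.Ext.contravariant_sequence_exact₃ (shortExact_of hf hfg hg)
    (ModuleCat.of A M) x (h₂.elim _ _) (add_comm 1 n)
  rw [h₁.elim y 0, Abelian.Ext.comp_zero]

theorem ExtVanish.left {n : ℕ} (h₂ : ExtVanish A N₂ M n) (h₃ : ExtVanish A N₃ M (n + 1)) :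
    ExtVanish A N₁ M n := by
  refine subsingleton_of_forall_eq 0 fun x => ?_
  obtain ⟨y, rfl⟩ := Abelian.Ext.contravariant_sequence_exact₁ (shortExact_of hf hfg hg)
    (ModuleCat.of A M) x (add_comm 1 n) (h₃.elim _ _)
  rw [h₂.elim y 0, Abelian.Ext.comp_zero]

/-- Vanishing of `Ext (M, -)` along `0 → N₁ → N₂ → N₃ → 0` in the second variable. -/
theorem ExtVanish.cokernel {n : ℕ} (h₂ : ExtVanish A M N₂ n) (h₁ : ExtVanish A M N₁ (n + 1)) :
    ExtVanish A M N₃ n := by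
  refine subsingleton_of_forall_eq 0 fun x => ?_
  obtain ⟨y, rfl⟩ := Abelian.Ext.covariant_sequence_exact₃ (ModuleCat.of A M)
    (shortExact_of hf hfg hg) x rfl (h₁.elim _ _)
  rw [h₂.elim y 0, Abelian.Ext.zero_comp]

/-- Dimension shifting along `0 → N₁ → N₂ → N₃ → 0` with `N₂` injective. -/
theorem InjDimLT.cosyzygy_iff [Module.Injective A N₂] (n : ℕ) :
    InjDimLT A N₃ (n + 1) ↔ InjDimLT A N₁ (n + 2) :=
  (shortExact_of hf hfg hg).hasInjectiveDimensionLT_X₃_iff n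
    ((Module.injective_iff_injective_object A N₂).1 ‹_›)

/-- `Ext^1` as the obstruction to extending maps from the syzygy `N₁` to the projective `N₂`. -/
theorem extVanish_one_iff [Module.Projective A N₂] :
    ExtVanish A N₃ M 1 ↔ ∀ φ : N₁ →ₗ[A] M, ∃ ψ : N₂ →ₗ[A] M, ψ ∘ₗ f = φ := by
  have hS := shortExact_of hf hfg hg
  constructor
  · intro h φ
    obtain ⟨y, hy⟩ := Abelian.Ext.contravariant_sequence_exact₁ hS
      (ModuleCat.of A M) (Abelian.Ext.mk₀ (ModuleCat.ofHom φ)) (add_comm 1 0) (h.elim _ _)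
    obtain ⟨ψ, rfl⟩ := Abelian.Ext.homEquiv₀.symm.surjective y
    refine ⟨ψ.hom, ?_⟩
    erw [Abelian.Ext.mk₀_comp_mk₀] at hy
    have := (Abelian.Ext.mk₀_bijective _ _).1 hy
    exact congrArg ModuleCat.Hom.hom this
  · intro h
    refine subsingleton_of_forall_eq 0 fun x => ?_
    have : Projective (ModuleCat.of A N₂) := (IsProjective.iff_projective N₂).1 inferInstance
    obtain ⟨y, rfl⟩ := Abelian.Ext.contravariant_sequence_exact₃ hS
      (ModuleCat.of A M) x (Abelian.Ext.eq_zero_of_projective _) (add_comm 1 0)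
    obtain ⟨φ, rfl⟩ := Abelian.Ext.homEquiv₀.symm.surjective y
    obtain ⟨ψ, hψ⟩ := h φ.hom
    have : φ = ModuleCat.ofHom f ≫ ModuleCat.ofHom ψ := by
      ext1; exact hψ.symm
    subst this
    change hS.extClass.comp (Abelian.Ext.mk₀ (ModuleCat.ofHom f ≫ ModuleCat.ofHom ψ)) _ = 0
    rw [← Abelian.Ext.mk₀_comp_mk₀, ShortComplex.ShortExact.extClass_comp_assoc]

end

theorem extVanish_of_projective [Module.Projective A N] (n : ℕ) : ExtVanish A N M (n + 1) := by
  have : Projective (ModuleCat.of A N) := (IsProjective.iff_projective N).1 inferInstance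
  exact subsingleton_of_forall_eq 0 fun x => Abelian.Ext.eq_zero_of_projective _

theorem extVanish_of_injective [Module.Injective A M] (n : ℕ) : ExtVanish A N M (n + 1) := by
  have : Injective (ModuleCat.of A M) := (Module.injective_iff_injective_object A M).1 inferInstance
  exact subsingleton_of_forall_eq 0 fun x => Abelian.Ext.eq_zero_of_injective _

theorem InjDimLT.extVanish {n i : ℕ} (h : InjDimLT A M n) (hi : n ≤ i) : ExtVanish A N M i :=
  HasInjectiveDimensionLT.subsingleton _ n i hi _

theorem extVanish_congr_left {N' : Type u} [AddCommGroup N'] [Module A N'] (e : N ≃ₗ[A] N') (n : ℕ)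
    (h : ExtVanish A N M n) : ExtVanish A N' M n := by
  refine subsingleton_of_forall_eq 0 fun x => ?_
  have h1 : x = (Abelian.Ext.mk₀ (e.toModuleIso).inv).comp
      ((Abelian.Ext.mk₀ (e.toModuleIso).hom).comp x (zero_add n)) (zero_add n) := by
    rw [Abelian.Ext.mk₀_comp_mk₀_assoc, Iso.inv_hom_id, Abelian.Ext.mk₀_id_comp]
  rw [h1, h.elim (Abelian.Ext.comp _ _ _) 0, Abelian.Ext.comp_zero]

theorem InjDimLT.congr {N : Type u} [AddCommGroup N] [Module A N] (e : M ≃ₗ[A] N) (n : ℕ) :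
    InjDimLT A M n ↔ InjDimLT A N n :=
  ⟨fun _ => hasInjectiveDimensionLT_of_iso e.toModuleIso n,
    fun _ => hasInjectiveDimensionLT_of_iso e.symm.toModuleIso n⟩

theorem injDimLT_zero_iff : InjDimLT A M 0 ↔ Subsingleton M := by
  unfold InjDimLT
  rw [hasInjectiveDimensionLT_zero_iff_isZero, ModuleCat.isZero_iff_subsingleton]

theorem injDimLT_one_iff : InjDimLT A M 1 ↔ Module.Injective A M := by
  unfold InjDimLT
  rw [← injective_iff_hasInjectiveDimensionLT_one, Module.injective_iff_injective_object]

theorem InjDimLT.mono {m n : ℕ} (h : InjDimLT A M m) (hmn : m ≤ n) : InjDimLT A M n :=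
  hasInjectiveDimensionLT_of_ge _ m n hmn

theorem exists_cosyzygy (M : Type u) [AddCommGroup M] [Module A M] :
    ∃ (I : Type u) (_ : AddCommGroup I) (_ : Module A I) (f : M →ₗ[A] I), Module.Injective A I ∧
      Function.Injective f := by
  have ei : EnoughInjectives (ModuleCat.{u} A) := inferInstance
  obtain ⟨I, inj, f, monof⟩ := ei.1 (ModuleCat.of A M)
  exact ⟨I, inferInstance, inferInstance, f.hom,
    (Module.injective_iff_injective_object A I).2 inj, (ModuleCat.mono_iff_injective f).1 monof⟩

theorem subsingleton_of_extVanish_zero (h : ExtVanish A A M 0) : Subsingleton M := by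
  refine subsingleton_of_forall_eq 0 fun x => ?_
  have h1 := h.elim (Abelian.Ext.mk₀ (ModuleCat.ofHom (LinearMap.toSpanSingleton A M x)))
    (Abelian.Ext.mk₀ 0)
  have h2 := congrArg (fun t => t.hom (1 : A)) ((Abelian.Ext.mk₀_bijective _ _).1 h1)
  simpa using h2

/-- Over a Noetherian ring, injective dimension is detected by finitely generated modules: shift to
`n = 1` and apply the criterion of Baer. -/
theorem injDimLT_of_extVanish [IsNoetherianRing A] (n : ℕ)
    (h : ∀ (N : Type u) [AddCommGroup N] [Module A N], Module.Finite A N → ExtVanish A N M n) :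
    InjDimLT A M n := by
  induction n using Nat.strong_induction_on generalizing M with
  | _ n ih =>
  match n with
  | 0 => exact injDimLT_zero_iff.2 (subsingleton_of_extVanish_zero (h A inferInstance))
  | 1 =>
    rw [injDimLT_one_iff, ← Module.Baer.iff_injective]
    intro J φ
    obtain ⟨ψ, hψ⟩ := (extVanish_one_iff J.injective_subtype (LinearMap.exact_subtype_mkQ J)
      J.mkQ_surjective).1 (h (A ⧸ J) inferInstance) φ
    exact ⟨ψ, fun x hx => LinearMap.congr_fun hψ ⟨x, hx⟩⟩
  | n + 2 =>
    obtain ⟨I, _, _, f, hI, hf⟩ := exists_cosyzygy (A := A) M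
    rw [← InjDimLT.cosyzygy_iff hf (LinearMap.exact_map_mkQ_range f) (Submodule.mkQ_surjective _)]
    refine ih (n + 1) (by lia) fun N _ _ hN => ?_
    exact ExtVanish.cokernel hf (LinearMap.exact_map_mkQ_range f) (Submodule.mkQ_surjective _)
      (extVanish_of_injective n) (h N hN)

end vanishing

/-! ### Ext and flat base change -/

section tensor
open TensorProduct
variable {A : Type u} [CommRing A]
variable {P₀ P₁ P₂ : Type u} [AddCommGroup P₀] [Module A P₀] [AddCommGroup P₁] [Module A P₁]
  [AddCommGroup P₂] [Module A P₂]
  [Module.Free A P₀] [Module.Finite A P₀] [Module.Free A P₁] [Module.Finite A P₁]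
  [Module.Free A P₂] [Module.Finite A P₂]
variable (M T : Type u) [AddCommGroup M] [Module A M] [AddCommGroup T] [Module A T]

/-- `Hom(P, M) ⊗ T ≃ Hom(P, M ⊗ T)` for `P` finite free, applied to three consecutive terms of a
free resolution. -/
theorem exact_hom_tensor_iff (a : P₂ →ₗ[A] P₁) (b : P₁ →ₗ[A] P₀) :
    Function.Exact ((b.lcomp A M).rTensor T) ((a.lcomp A M).rTensor T) ↔
      Function.Exact (b.lcomp A (M ⊗[A] T)) (a.lcomp A (M ⊗[A] T)) := by
  symm
  refine Function.Exact.iff_of_ladder_linearEquiv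
    (e₁ := rTensorHomEquivHomRTensor A P₀ M T) (e₂ := rTensorHomEquivHomRTensor A P₁ M T)
    (e₃ := rTensorHomEquivHomRTensor A P₂ M T) ?_ ?_ <;>
  · apply TensorProduct.ext'
    intro f t
    ext x
    simp

omit [Module.Finite A P₀] [Module.Free A P₁] [Module.Finite A P₁] [Module.Free A P₂]
  [Module.Finite A P₂] in
/-- `Ext^1 (N, M) = 0` as exactness of `Hom(P₀, M) → Hom(P₁, M) → Hom(P₂, M)`, for a projective
`P₀ → N` with kernel `K` and a presentation `P₂ → P₁ → K → 0`. -/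
theorem extVanish_one_iff_exact {N K : Type u} [AddCommGroup N] [Module A N]
    [AddCommGroup K] [Module A K]
    (a : P₂ →ₗ[A] P₁) (b' : P₁ →ₗ[A] K) (i : K →ₗ[A] P₀) (c : P₀ →ₗ[A] N)
    (hab : Function.Exact a b') (hb' : Function.Surjective b')
    (hi : Function.Injective i) (hic : Function.Exact i c) (hc : Function.Surjective c) :
    ExtVanish A N M 1 ↔ Function.Exact ((i ∘ₗ b').lcomp A M) (a.lcomp A M) := by
  rw [extVanish_one_iff hi hic hc]
  constructor
  · intro h ψ
    constructor
    · intro hψ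
      have hker : LinearMap.ker b' ≤ LinearMap.ker ψ := by
        intro x hx
        obtain ⟨y, rfl⟩ := (hab x).1 hx
        exact LinearMap.congr_fun hψ y
      let e := b'.quotKerEquivOfSurjective hb'
      obtain ⟨χ, hχ⟩ := h ((LinearMap.ker b').liftQ ψ hker ∘ₗ e.symm.toLinearMap)
      refine ⟨χ, ?_⟩
      ext x
      have h1 := LinearMap.congr_fun hχ (b' x)
      have h2 : e.symm (b' x) = Submodule.Quotient.mk x := by
        rw [LinearEquiv.symm_apply_eq]; rfl
      simpa [h2] using h1
    · rintro ⟨χ, rfl⟩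
      ext x
      have := hab.apply_apply_eq_zero x
      simp [this]
  · intro h φ
    obtain ⟨χ, hχ⟩ := (h (φ ∘ₗ b')).1 (by
      ext x
      simp [hab.apply_apply_eq_zero x])
    refine ⟨χ, ?_⟩
    ext x
    obtain ⟨y, rfl⟩ := hb' x
    exact LinearMap.congr_fun hχ y

theorem extVanish_syzygy_iff {N K P M : Type u} [AddCommGroup N] [Module A N]
    [AddCommGroup K] [Module A K] [AddCommGroup P] [Module A P] [Module.Projective A P]
    [AddCommGroup M] [Module A M] {i : K →ₗ[A] P} {c : P →ₗ[A] N}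
    (hi : Function.Injective i) (hic : Function.Exact i c) (hc : Function.Surjective c) (n : ℕ) :
    ExtVanish A N M (n + 2) ↔ ExtVanish A K M (n + 1) :=
  ⟨fun h => ExtVanish.left hi hic hc (extVanish_of_projective n) h,
    fun h => ExtVanish.right hi hic hc h (extVanish_of_projective (n + 1))⟩

theorem exists_syzygy (N : Type u) [AddCommGroup N] [Module A N] [Module.Finite A N] :
    ∃ (P : Type u) (_ : AddCommGroup P) (_ : Module A P) (c : P →ₗ[A] N),
      Module.Free A P ∧ Module.Finite A P ∧ Function.Surjective c := by
  obtain ⟨n, c, hc⟩ := Module.Finite.exists_fin' A N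
  exact ⟨_, inferInstance, inferInstance, c, inferInstance, inferInstance, hc⟩

/-- Both directions of flat base change for the vanishing of `Ext^(n+1) (N, -)`. The case `n = 0` is
exactness of a complex of modules `Hom(Pᵢ, M)`; the general case follows by taking syzygies of `N`. -/
theorem extVanish_tensor_aux [IsNoetherianRing A] [Module.Flat A T] (n : ℕ) (N : Type u)
    [AddCommGroup N] [Module A N] [Module.Finite A N] :
    (ExtVanish A N M (n + 1) → ExtVanish A N (M ⊗[A] T) (n + 1)) ∧
    (Module.FaithfullyFlat A T → ExtVanish A N (M ⊗[A] T) (n + 1) → ExtVanish A N M (n + 1)) := by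
  induction n generalizing N with
  | zero =>
    obtain ⟨P₀, _, _, c, _, _, hc⟩ := exists_syzygy (A := A) N
    obtain ⟨P₁, _, _, b, _, _, hb⟩ := exists_syzygy (A := A) (LinearMap.ker c)
    obtain ⟨P₂, _, _, a, _, _, ha⟩ := exists_syzygy (A := A) (LinearMap.ker b)
    have hab : Function.Exact ((LinearMap.ker b).subtype ∘ₗ a) b := by
      rw [LinearMap.exact_iff, LinearMap.range_comp, LinearMap.range_eq_top.2 ha]
      simp
    have hi := (LinearMap.ker c).injective_subtype
    have hic : Function.Exact (LinearMap.ker c).subtype c := LinearMap.exact_subtype_ker_map c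
    rw [extVanish_one_iff_exact M _ b _ c hab hb hi hic hc,
      extVanish_one_iff_exact (M ⊗[A] T) _ b _ c hab hb hi hic hc, ← exact_hom_tensor_iff]
    exact ⟨fun h => Module.Flat.rTensor_exact _ h,
      fun _ h => (Module.FaithfullyFlat.rTensor_exact_iff_exact A T _ _).1 h⟩
  | succ n ih =>
    obtain ⟨P₀, _, _, c, _, _, hc⟩ := exists_syzygy (A := A) N
    have hi := (LinearMap.ker c).injective_subtype
    have hic : Function.Exact (LinearMap.ker c).subtype c := LinearMap.exact_subtype_ker_map c
    rw [extVanish_syzygy_iff hi hic hc, extVanish_syzygy_iff hi hic hc]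
    exact ih _

theorem ExtVanish.tensor {M : Type u} [AddCommGroup M] [Module A M] [IsNoetherianRing A]
    [Module.Flat A T] {n : ℕ} {N : Type u}
    [AddCommGroup N] [Module A N] [Module.Finite A N] (h : ExtVanish A N M (n + 1)) :
    ExtVanish A N (M ⊗[A] T) (n + 1) :=
  (extVanish_tensor_aux M T n N).1 h

/-- Tensoring with a faithfully flat module preserves the injective dimension over a Noetherian ring. -/
theorem injDimLT_tensor_iff [IsNoetherianRing A] [Module.FaithfullyFlat A T] (n : ℕ) :
    InjDimLT A (M ⊗[A] T) (n + 1) ↔ InjDimLT A M (n + 1) :=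
  ⟨fun h => injDimLT_of_extVanish _ fun N _ _ _ =>
    (extVanish_tensor_aux M T n N).2 ‹_› (h.extVanish le_rfl),
  fun h => injDimLT_of_extVanish _ fun N _ _ _ =>
    (extVanish_tensor_aux M T n N).1 (h.extVanish le_rfl)⟩

end tensor

/-! ### Restriction of scalars and localization -/

section basechange
open TensorProduct

/-- Restriction of scalars along a flat map is right adjoint to the exact functor `A ⊗[R] -`, so it
preserves injectives. -/
theorem Module.Injective.restrictScalars_of_flat (R : Type u) {A : Type u} [CommRing R]
    [CommRing A] [Algebra R A] [Module.Flat R A] (M : Type u) [AddCommGroup M] [Module R M]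
    [Module A M] [IsScalarTower R A M] [Module.Injective A M] : Module.Injective R M := by
  refine ⟨fun X Y _ _ _ _ f hf g => ?_⟩
  have hF : Function.Injective (f.baseChange A) := by
    have := Module.Flat.lTensor_preserves_injective_linearMap (M := A) f hf
    exact this
  obtain ⟨h, hh⟩ := Module.Injective.out (f.baseChange A) hF
    (AlgebraTensorModule.lift ((LinearMap.lsmul A (X →ₗ[R] M)).flip g))
  refine ⟨h.restrictScalars R ∘ₗ TensorProduct.mk R A Y 1, fun x => ?_⟩
  simpa using hh (1 ⊗ₜ x)

theorem InjDimLT.restrictScalars (R : Type u) {A : Type u} [CommRing R]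
    [CommRing A] [Algebra R A] [Module.Flat R A] (M : Type u) [AddCommGroup M] [Module R M]
    [Module A M] [IsScalarTower R A M] {n : ℕ} (h : InjDimLT A M n) : InjDimLT R M n := by
  induction n using Nat.strong_induction_on generalizing M with
  | _ n ih =>
  match n with
  | 0 => exact injDimLT_zero_iff.2 (injDimLT_zero_iff.1 h)
  | 1 =>
    have := injDimLT_one_iff.1 h
    exact injDimLT_one_iff.2 (Module.Injective.restrictScalars_of_flat R (A := A) M)
  | n + 2 =>
    obtain ⟨I, Q, _, _, _, _, f, g, hI, hf, hfg, hg⟩ :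
        ∃ (I Q : Type u) (_ : AddCommGroup I) (_ : Module A I) (_ : AddCommGroup Q)
          (_ : Module A Q) (f : M →ₗ[A] I) (g : I →ₗ[A] Q), Module.Injective A I ∧
          Function.Injective f ∧ Function.Exact f g ∧ Function.Surjective g := by
      obtain ⟨I, _, _, f, hI, hf⟩ := exists_cosyzygy (A := A) M
      exact ⟨I, _, _, _, _, _, f, _, hI, hf, LinearMap.exact_map_mkQ_range f,
        Submodule.mkQ_surjective _⟩
    rw [← InjDimLT.cosyzygy_iff hf hfg hg] at h
    let _ : Module R I := Module.compHom I (algebraMap R A)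
    let _ : Module R Q := Module.compHom Q (algebraMap R A)
    have : IsScalarTower R A I := IsScalarTower.of_algebraMap_smul fun _ _ => rfl
    have : IsScalarTower R A Q := IsScalarTower.of_algebraMap_smul fun _ _ => rfl
    have := Module.Injective.restrictScalars_of_flat R (A := A) I
    have hQ : InjDimLT R Q (n + 1) := ih (n + 1) (by lia) _ h
    exact (InjDimLT.cosyzygy_iff (f := f.restrictScalars R)
      (g := g.restrictScalars R) hf hfg hg n).1 hQ

theorem InjDimLT.localize {R : Type u} [CommRing R] [IsNoetherianRing R] (S : Submonoid R)
    {M M' : Type u} [AddCommGroup M] [Module R M] [AddCommGroup M'] [Module R M']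
    [Module (Localization S) M'] [IsScalarTower R (Localization S) M'] (f : M →ₗ[R] M')
    [IsLocalizedModule S f] {n : ℕ} (h : InjDimLT R M (n + 1)) :
    InjDimLT (Localization S) M' (n + 1) := by
  have h' : HasInjectiveDimensionLE (ModuleCat.of R M) n := h
  have hloc := ModuleCat.localizedModule_hasInjectiveDimensionLE n S (ModuleCat.of R M)
  have : IsLocalizedModule S (ModuleCat.localizedModuleMkLinearMap (ModuleCat.of R M) S) :=
    ModuleCat.localizedModule_isLocalizedModule (ModuleCat.of R M) S
  let e := LinearEquiv.extendScalarsOfIsLocalization S (Localization S)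
    (IsLocalizedModule.linearEquiv S ((ModuleCat.of R M).localizedModuleMkLinearMap S) f)
  exact (InjDimLT.congr e (n + 1)).1 hloc

theorem injDimLT_localization_iff {R : Type u} [CommRing R] [IsNoetherianRing R]
    (S : Submonoid R) (M : Type u) [AddCommGroup M] [Module R M]
    [Module (Localization S) M] [IsScalarTower R (Localization S) M] {n : ℕ} :
    InjDimLT R M (n + 1) ↔ InjDimLT (Localization S) M (n + 1) := by
  have := isLocalizedModule_id S M (Localization S)
  have : Module.Flat R (Localization S) := IsLocalization.flat _ S
  exact ⟨fun h => h.localize S LinearMap.id, fun h => h.restrictScalars R⟩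

end basechange

/-! ### Faithful flatness of completions of free modules -/

namespace AdicCompletion
variable {A : Type u} [CommRing A] (I : Ideal A)

section exact
variable {M N P : Type u} [AddCommGroup M] [Module A M] [AddCommGroup N] [Module A N]
  [AddCommGroup P] [Module A P]

/-- Completion keeps `M → N → P` exact when both maps satisfy an Artin-Rees condition, with constants
`c₂` and `c₁`. No finiteness of the modules is needed. -/
theorem exists_map_eq_of_artinRees (ψ : M →ₗ[A] N) (φ : N →ₗ[A] P) (c₁ c₂ : ℕ)
    (hex : ∀ z, φ z = 0 → ∃ w, ψ w = z)
    (h₁ : ∀ k v, φ v ∈ (I ^ (k + c₁) • ⊤ : Submodule A P) →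
      ∃ y ∈ (I ^ k • ⊤ : Submodule A N), φ y = φ v)
    (h₂ : ∀ k z, z ∈ (I ^ (k + c₂) • ⊤ : Submodule A N) → φ z = 0 →
      ∃ w ∈ (I ^ k • ⊤ : Submodule A M), ψ w = z)
    (x : AdicCompletion I N) (hx : map I φ x = 0) : ∃ w, map I ψ w = x := by
  obtain ⟨b, rfl⟩ := mk_surjective I N x
  have hb (n : ℕ) : φ (b n) ∈ (I ^ n • ⊤ : Submodule A P) := by
    simpa using congrArg (fun x ↦ x.val n) hx
  choose y hy hyφ using fun k => h₁ k (b (k + c₁)) (hb _)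
  -- `z k` lies in the kernel of `φ` and approximates the `k`-th term of the sequence
  let z : ℕ → N := fun k => b (k + c₁) - y k
  have hz0 (k) : φ (z k) = 0 := by simp [z, hyφ]
  have hbc {m n : ℕ} (h : m ≤ n) : b n - b m ∈ (I ^ m • ⊤ : Submodule A N) := by
    rw [← Submodule.Quotient.eq]; exact AdicCauchySequence.mk_eq_mk h b
  have hle {m n : ℕ} (h : m ≤ n) : (I ^ n • ⊤ : Submodule A N) ≤ I ^ m • ⊤ :=
    Submodule.smul_mono_left (Ideal.pow_le_pow_right h)
  have hzz (k) : z (k + 1) - z k ∈ (I ^ k • ⊤ : Submodule A N) := by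
    have : z (k + 1) - z k = (b (k + 1 + c₁) - b (k + c₁)) - y (k + 1) + y k := by
      simp only [z]; abel
    rw [this]
    exact add_mem (sub_mem (hle (by lia) (hbc (by lia))) (hle (by lia) (hy _))) (hy _)
  choose w hw hwψ using fun k => h₂ k (z (k + c₂ + 1) - z (k + c₂)) (hzz _) (by simp [hz0])
  obtain ⟨w₀, hw₀⟩ := hex (z c₂) (hz0 _)
  let W : ℕ → M := fun k => w₀ + ∑ j ∈ Finset.range k, w j
  have hW (k) : ψ (W k) = z (k + c₂) := by
    induction k with
    | zero => simp [W, hw₀]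
    | succ k ih =>
      have : W (k + 1) = W k + w k := by simp [W, Finset.sum_range_succ, add_assoc]
      rw [this, map_add, ih, hwψ, show k + 1 + c₂ = k + c₂ + 1 by lia]; abel
  have hWc (n) : W n ≡ W (n + 1) [SMOD (I ^ n • ⊤ : Submodule A M)] := by
    refine SModEq.symm ?_
    rw [SModEq.sub_mem]
    simpa [W, Finset.sum_range_succ] using hw n
  refine ⟨mk I M (AdicCauchySequence.mk I M W hWc), ?_⟩
  · rw [map_mk, ← sub_eq_zero, ← map_sub]
    refine mk_zero_of I N _ ⟨0, fun n _ => ⟨n, le_rfl, n, le_rfl, ?_⟩⟩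
    have : (AdicCauchySequence.map I ψ (AdicCauchySequence.mk I M W hWc) - b) n
      = (b (n + c₂ + c₁) - b n) - y (n + c₂) := by
      change ψ (W n) - b n = _
      rw [hW]; simp only [z]; abel
    rw [this]
    exact sub_mem (hbc (by lia)) (hle (by lia) (hy _))

end exact

section finsupp
variable {X : Type u} {K L : Type u} [AddCommGroup K] [Module A K] [AddCommGroup L] [Module A L]

/-- Coordinatewise choice for finitely supported functions. -/
theorem finsupp_exists (v : X →₀ L) (Q : L → K → Prop) (h0 : Q 0 0)
    (h : ∀ x, ∃ y, Q (v x) y) : ∃ w : X →₀ K, ∀ x, Q (v x) (w x) := by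
  classical
  choose g hg using h
  refine ⟨Finsupp.onFinset v.support (fun x => if v x = 0 then 0 else g x) fun x hx => ?_, ?_⟩
  · by_contra h'
    simp_all
  · intro x
    by_cases hx : v x = 0
    · simp [hx, h0]
    · simp [hx, hg]

variable (J : Ideal A)
theorem mem_smul_top_finsupp (v : X →₀ K) :
    v ∈ (J • ⊤ : Submodule A (X →₀ K)) ↔ ∀ x, v x ∈ (J • ⊤ : Submodule A K) := by
  constructor
  · intro h x
    have := Submodule.mem_map_of_mem (f := Finsupp.lapply (R := A) x) h
    rw [Submodule.map_smul''] at this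
    exact Submodule.smul_mono le_rfl le_top this
  · intro h
    rw [← Finsupp.sum_single v]
    refine Submodule.sum_mem _ fun x _ => ?_
    have := Submodule.mem_map_of_mem (f := Finsupp.lsingle (R := A) x) (h x)
    rw [Submodule.map_smul''] at this
    exact Submodule.smul_mono le_rfl le_top this

end finsupp

/-- Completion keeps the direct sum of `X` copies of an exact sequence `K → L → P` exact when `L` and `P`
are finitely generated: the Artin-Rees constants of `K → L → P` serve all coordinates at once. -/
theorem exists_map_finsupp_eq [IsNoetherianRing A] {X K L P : Type u}
    [AddCommGroup K] [Module A K] [AddCommGroup L] [Module A L] [Module.Finite A L]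
    [AddCommGroup P] [Module A P] [Module.Finite A P] (ψ : K →ₗ[A] L) (φ : L →ₗ[A] P)
    (h : Function.Exact ψ φ)
    (x : AdicCompletion I (X →₀ L)) (hx : map I (Finsupp.mapRange.linearMap φ) x = 0) :
    ∃ w, map I (Finsupp.mapRange.linearMap ψ : (X →₀ K) →ₗ[A] _) w = x := by
  obtain ⟨c₁, hc₁⟩ := Ideal.exists_pow_inf_eq_pow_smul I (LinearMap.range φ)
  obtain ⟨c₂, hc₂⟩ := Ideal.exists_pow_inf_eq_pow_smul I (LinearMap.range ψ)
  have key {U V : Type u} [AddCommGroup U] [Module A U] [AddCommGroup V] [Module A V]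
      (f : U →ₗ[A] V) (c : ℕ) (hc : ∀ n ≥ c, I ^ n • ⊤ ⊓ LinearMap.range f =
        I ^ (n - c) • (I ^ c • ⊤ ⊓ LinearMap.range f)) (k : ℕ) (v : V)
      (hv : v ∈ (I ^ (k + c) • ⊤ : Submodule A V)) (hv' : v ∈ LinearMap.range f) :
      ∃ y ∈ (I ^ k • ⊤ : Submodule A U), f y = v := by
    have h1 : v ∈ I ^ (k + c) • ⊤ ⊓ LinearMap.range f := ⟨hv, hv'⟩
    rw [hc _ (by lia), Nat.add_sub_cancel] at h1
    have h2 : v ∈ I ^ k • LinearMap.range f := Submodule.smul_mono le_rfl inf_le_right h1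
    rw [← Submodule.map_top, ← Submodule.map_smul''] at h2
    exact h2
  refine exists_map_eq_of_artinRees I _ _ c₁ c₂ ?_ ?_ ?_ x hx
  · intro z hz
    obtain ⟨w, hw⟩ := finsupp_exists (K := K) z (fun l k => ψ k = l) (by simp) fun x =>
      (h (z x)).1 (by simpa using DFunLike.congr_fun hz x)
    exact ⟨w, by ext x; simpa using hw x⟩
  · intro k v hv
    rw [mem_smul_top_finsupp] at hv
    obtain ⟨w, hw⟩ := finsupp_exists (K := L) v (fun l y => y ∈ (I ^ k • ⊤ : Submodule A L) ∧
      φ y = φ l) (by simp) fun x => key φ c₁ hc₁ k _ (by simpa using hv x) ⟨_, rfl⟩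
    exact ⟨w, by rw [mem_smul_top_finsupp]; exact fun x => (hw x).1, by
      ext x; simpa using (hw x).2⟩
  · intro k v hv hv'
    rw [mem_smul_top_finsupp] at hv
    obtain ⟨w, hw⟩ := finsupp_exists (K := K) v (fun l y => y ∈ (I ^ k • ⊤ : Submodule A K) ∧
      ψ y = l) (by simp) fun x => key ψ c₂ hc₂ k _ (by simpa using hv x)
        ((h (v x)).1 (by simpa using DFunLike.congr_fun hv' x))
    exact ⟨w, by rw [mem_smul_top_finsupp]; exact fun x => (hw x).1, by
      ext x; simpa using (hw x).2⟩

theorem map_add' {M N : Type u} [AddCommGroup M] [Module A M] [AddCommGroup N] [Module A N]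
    (f g : M →ₗ[A] N) (x : AdicCompletion I M) : map I (f + g) x = map I f x + map I g x := by
  induction x using induction_on with | _ b =>
  simp only [map_mk, ← _root_.map_add]; rfl

theorem map_smul' {M N : Type u} [AddCommGroup M] [Module A M] [AddCommGroup N] [Module A N]
    (a : A) (f : M →ₗ[A] N) (x : AdicCompletion I M) : map I (a • f) x = a • map I f x := by
  induction x using induction_on with | _ b =>
  simp only [map_mk]; rfl

theorem map_sum' {M N : Type u} [AddCommGroup M] [Module A M] [AddCommGroup N] [Module A N]
    {ι : Type*} (s : Finset ι) (f : ι → M →ₗ[A] N) (x : AdicCompletion I M) :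
    map I (∑ i ∈ s, f i) x = ∑ i ∈ s, map I (f i) x := by
  classical
  induction s using Finset.induction_on with
  | empty => simp
  | insert a s ha ih => simp [Finset.sum_insert ha, map_add', ih]

/-- Flatness of the completion of a free module, by the equational criterion: a relation `∑ fᵢ xᵢ = 0`
is an element of the kernel of the completion of `φ : (A^l)^(X) → A^(X)`, hence comes from the
relations `B` among the `fᵢ` in `A`. -/
theorem flat_finsupp [IsNoetherianRing A] (X : Type u) :
    Module.Flat A (AdicCompletion I (X →₀ A)) := by
  classical
  refine Module.Flat.of_forall_isTrivialRelation fun {l f x} hfx => ?_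
  -- the row `f` and a finite presentation of its kernel
  let φ : (Fin l → A) →ₗ[A] A := Fintype.linearCombination A f
  obtain ⟨m, ψ, hψ⟩ := Module.Finite.exists_fin' A (LinearMap.ker φ)
  let B : (Fin m → A) →ₗ[A] (Fin l → A) := (LinearMap.ker φ).subtype ∘ₗ ψ
  have hB : Function.Exact B φ := by
    intro v
    constructor
    · intro hv
      obtain ⟨w, hw⟩ := hψ ⟨v, hv⟩
      exact ⟨w, by simp [B, hw]⟩
    · rintro ⟨w, rfl⟩
      exact (ψ w).2
  let mr {U V : Type u} [AddCommGroup U] [Module A U] [AddCommGroup V] [Module A V]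
    (g : U →ₗ[A] V) : (X →₀ U) →ₗ[A] (X →₀ V) := Finsupp.mapRange.linearMap g
  have mrc {U V W : Type u} [AddCommGroup U] [Module A U] [AddCommGroup V] [Module A V]
    [AddCommGroup W] [Module A W] (g : U →ₗ[A] V) (h : V →ₗ[A] W) (t : AdicCompletion I (X →₀ U)) :
      map I (mr h) (map I (mr g) t) = map I (mr (h ∘ₗ g)) t := by
    rw [map_comp_apply]; congr 2; ext; simp [mr]
  let xt : AdicCompletion I (X →₀ (Fin l → A)) :=
    ∑ i, map I (mr (LinearMap.single A (fun _ => A) i)) (x i)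
  have hxt (i) : map I (mr (LinearMap.proj i)) xt = x i := by
    simp only [xt, map_sum, mrc]
    rw [Finset.sum_eq_single i]
    · rw [LinearMap.proj_comp_single_same]
      have : mr (LinearMap.id : A →ₗ[A] A) = LinearMap.id := by ext; simp [mr]
      rw [this, map_id]; rfl
    · intro j _ hj
      rw [LinearMap.proj_comp_single_ne A (fun _ => A) i j hj.symm]
      have : mr (0 : A →ₗ[A] A) = 0 := by ext; simp [mr]
      rw [this, map_zero]; rfl
    · simp
  have hx : map I (mr φ) xt = 0 := by
    have : mr φ = ∑ i, f i • mr (LinearMap.proj i) := by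
      refine LinearMap.ext fun v => Finsupp.ext fun a => ?_
      simp [mr, φ, Fintype.linearCombination_apply, Finsupp.finsetSum_apply, mul_comm]
    rw [this, map_sum']
    simp only [map_smul', hxt]
    exact hfx
  obtain ⟨W, hW⟩ := exists_map_finsupp_eq I B φ hB xt hx
  refine ⟨m, fun i j => B (Pi.single j 1) i, fun j => map I (mr (LinearMap.proj j)) W,
    fun i => ?_, fun j => ?_⟩
  · rw [← hxt i, ← hW]
    simp only [← map_smul', ← map_sum']
    change map I (mr _) (map I (mr B) W) = _
    rw [mrc]
    congr 2
    refine LinearMap.ext fun v => Finsupp.ext fun a => ?_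
    have hv : B (v a) = ∑ j, v a j • B (Pi.single j 1) := by
      conv_lhs => rw [← Finset.univ_sum_single (v a)]
      simp only [_root_.map_sum]
      refine Finset.sum_congr rfl fun j _ => ?_
      rw [← _root_.map_smul, ← Pi.single_smul]; simp
    simp [mr, hv, Finsupp.finsetSum_apply, mul_comm]
  · have := LinearMap.mem_ker.1 (ψ (Pi.single j 1)).2
    simpa only [φ, Fintype.linearCombination_apply, mul_comm, B, smul_eq_mul,
      LinearMap.comp_apply, Submodule.subtype_apply] using this

theorem faithfullyFlat_of_free [IsNoetherianRing A] [IsLocalRing A] (F : Type u) [AddCommGroup F]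
    [Module A F] [Module.Free A F] [Nontrivial F] :
    Module.FaithfullyFlat A (AdicCompletion (IsLocalRing.maximalIdeal A) F) := by
  set m := IsLocalRing.maximalIdeal A
  have hflat : Module.Flat A (AdicCompletion m F) :=
    have := flat_finsupp m (Module.Free.ChooseBasisIndex A F)
    Module.Flat.of_linearEquiv
      ((congr m (Module.Free.chooseBasis A F).repr).restrictScalars A)
  rw [Module.FaithfullyFlat.iff_flat_and_proper_ideal]
  refine ⟨hflat, fun J hJ htop => ?_⟩
  have hJm : J ≤ m := IsLocalRing.le_maximalIdeal hJ
  -- the completion surjects onto `F / mF`, which would have to vanish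
  have h1 : (⊤ : Submodule A F) ≤ m • ⊤ := by
    intro v _
    have hv : of m F v ∈ (J • ⊤ : Submodule A (AdicCompletion m F)) := by rw [htop]; trivial
    have hv' := Submodule.mem_map_of_mem (f := eval m F 1) hv
    rw [Submodule.map_smul''] at hv'
    have h0 : (J • Submodule.map (eval m F 1) ⊤ :
        Submodule A (F ⧸ (m ^ 1 • ⊤ : Submodule A F))) = ⊥ := by
      rw [eq_bot_iff, Submodule.smul_le]
      intro r hr n _
      obtain ⟨n, rfl⟩ := Submodule.Quotient.mk_surjective _ n
      rw [Submodule.mem_bot, ← Submodule.Quotient.mk_smul, Submodule.Quotient.mk_eq_zero, pow_one]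
      exact Submodule.smul_mem_smul (hJm hr) trivial
    rw [h0, Submodule.mem_bot, eval_of, Submodule.mkQ_apply, Submodule.Quotient.mk_eq_zero,
      pow_one] at hv'
    exact hv'
  obtain ⟨i⟩ : Nonempty (Module.Free.ChooseBasisIndex A F) := by
    exact (Module.Free.chooseBasis A F).index_nonempty
  let b := Module.Free.chooseBasis A F
  have := Submodule.mem_map_of_mem (f := b.coord i) (h1 (show b i ∈ ⊤ from trivial))
  rw [Submodule.map_smul''] at this
  have h2 := Submodule.smul_mono le_rfl le_top this
  simp [m] at h2

end AdicCompletion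

/-! ### Injective dimension of finitely generated modules over a local ring -/

section core
open IsLocalRing

section
variable {A : Type u} [CommRing A] {M : Type u} [AddCommGroup M] [Module A M]

/-- Multiplication by `x` on `N` induces multiplication by `x` on `Ext (N, M)`. -/
theorem mk₀_lsmul_comp {N : Type u} [AddCommGroup N] [Module A N] (x : A) {n : ℕ}
    (β : Abelian.Ext (ModuleCat.of A N) (ModuleCat.of A M) n) :
    (Abelian.Ext.mk₀ (ModuleCat.ofHom (LinearMap.lsmul A N x))).comp β (zero_add n) = x • β := by
  change (Abelian.Ext.mk₀ (x • 𝟙 (ModuleCat.of A N))).comp β (zero_add n) = x • β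
  rw [Abelian.Ext.mk₀_smul, Abelian.Ext.smul_comp, Abelian.Ext.mk₀_id_comp]

/-- If `x` kills `N` and is invertible on `M`, then every `Ext (N, M)` vanishes. -/
theorem extVanish_of_smul_comp_eq_id {N : Type u} [AddCommGroup N] [Module A N] (x : A)
    (hx : x ∈ Module.annihilator A N) (y : M →ₗ[A] M) (hy : x • y = LinearMap.id) (n : ℕ) :
    ExtVanish A N M n := by
  refine subsingleton_of_forall_eq 0 fun α => ?_
  have h1 : α = x • α.comp (Abelian.Ext.mk₀ (ModuleCat.ofHom y)) (add_zero n) := by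
    rw [← Abelian.Ext.comp_smul, ← Abelian.Ext.mk₀_smul]
    have : x • ModuleCat.ofHom y = 𝟙 (ModuleCat.of A M) := by
      ext1; exact hy
    rw [this, Abelian.Ext.comp_mk₀_id]
  have h2 : LinearMap.lsmul A N x = 0 := by
    ext z
    exact Module.mem_annihilator.1 hx z
  have h3 (β : Abelian.Ext (ModuleCat.of A N) (ModuleCat.of A M) n) : x • β = 0 := by
    rw [← mk₀_lsmul_comp, h2]
    change (Abelian.Ext.mk₀ 0).comp β _ = 0
    rw [Abelian.Ext.mk₀_zero, Abelian.Ext.zero_comp]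
  rw [h1, h3]

/-- Reduction to cyclic modules `A/q` by a prime filtration of `N`. -/
theorem extVanish_of_forall_prime [IsNoetherianRing A] {n : ℕ}
    (h : ∀ q : Ideal A, q.IsPrime → ExtVanish A (A ⧸ q) M n) (N : Type u) [AddCommGroup N]
    [Module A N] [hN : Module.Finite A N] : ExtVanish A N M n := by
  induction hN using IsNoetherianRing.induction_on_isQuotientEquivQuotientPrime A with
  | subsingleton N =>
    refine extVanish_of_smul_comp_eq_id 1 ?_ LinearMap.id (one_smul _ _) n
    exact Module.mem_annihilator.2 fun _ => Subsingleton.elim _ _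
  | quotient N p e => exact extVanish_congr_left e.symm n (h p.1 p.2)
  | exact N₁ N₂ N₃ f g hf hg hfg h₁ h₃ => exact ExtVanish.mid hf hfg hg h₁ h₃

theorem support_eq_univ_of_isLocalizedModule (S : Submonoid A) {M' : Type u}
    [AddCommGroup M'] [Module A M'] [Module (Localization S) M']
    [IsScalarTower A (Localization S) M'] (f : M →ₗ[A] M') [IsLocalizedModule S f]
    (h : Module.support A M = Set.univ) : Module.support (Localization S) M' = Set.univ := by
  refine Set.eq_univ_of_forall fun P => ?_
  have hP : PrimeSpectrum.comap (algebraMap A (Localization S)) P ∈ Module.support A M :=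
    h ▸ Set.mem_univ _
  obtain ⟨m, hm⟩ := Module.mem_support_iff'.1 hP
  refine Module.mem_support_iff'.2 ⟨f m, fun r hr h0 => ?_⟩
  obtain ⟨⟨a, s⟩, hs⟩ := IsLocalization.surj S r
  have h1 : f (a • m) = f 0 := by
    rw [map_smul, ← algebraMap_smul (Localization S) a (f m), ← hs, mul_comm, mul_smul, h0,
      smul_zero, map_zero]
  obtain ⟨c, hc⟩ := (IsLocalizedModule.eq_iff_exists S f).1 h1
  refine hm (c * a) ?_ ?_
  · intro hmem
    have h2 : algebraMap A (Localization S) (c * a) ∈ P.asIdeal := hmem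
    have hu (s : S) : algebraMap A (Localization S) s ∉ P.asIdeal := fun h =>
      P.2.ne_top (Ideal.eq_top_of_isUnit_mem _ h (IsLocalization.map_units _ s))
    rw [map_mul, ← hs] at h2
    rcases P.2.mem_or_mem h2 with h2 | h2
    · exact hu _ h2
    · rcases P.2.mem_or_mem h2 with h2 | h2
      · exact hr h2
      · exact hu _ h2
  · rw [mul_smul]
    simpa [Submonoid.smul_def] using hc

end

variable {A : Type u} [CommRing A] [IsNoetherianRing A] [IsLocalRing A]
variable {D : Type u} [AddCommGroup D] [Module A D] [Module.Finite A D]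

/-- By the long exact sequence of `0 → N → N → N/xN → 0`, multiplication by `x` is surjective on the
finitely generated module `Ext^n (N, D)`, which vanishes by the lemma of Nakayama. -/
theorem ExtVanish.of_quotSMulTop {N : Type u} [AddCommGroup N] [Module A N] [Module.Finite A N]
    {x : A} (hx : x ∈ maximalIdeal A) (hreg : IsSMulRegular N x) {n : ℕ}
    (h : ExtVanish A (QuotSMulTop x N) D (n + 1)) : ExtVanish A N D n := by
  have hfin : Module.Finite A (Abelian.Ext (ModuleCat.of A N) (ModuleCat.of A D) n) :=
    ModuleCat.finite_ext A _ _ n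
  have key : (⊤ : Submodule A (Abelian.Ext (ModuleCat.of A N) (ModuleCat.of A D) n)) = ⊥ := by
    refine Submodule.eq_bot_of_le_smul_of_le_jacobson_bot (maximalIdeal A) _ hfin.1 ?_
      (maximalIdeal_le_jacobson _)
    intro α _
    obtain ⟨β, hβ⟩ := Abelian.Ext.contravariant_sequence_exact₁
      (shortExact_of (f := LinearMap.lsmul A N x) hreg (LinearMap.exact_lsmul_mkQ_smul_top N x)
        (Submodule.mkQ_surjective _)) (ModuleCat.of A D) α (add_comm 1 n) (h.elim _ _)
    have hα : α = x • β := hβ.symm.trans (mk₀_lsmul_comp x β)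
    rw [hα]
    exact Submodule.smul_mem_smul hx trivial
  exact subsingleton_of_forall_eq 0 fun α => by
    have : α ∈ (⊤ : Submodule A (Abelian.Ext (ModuleCat.of A N) (ModuleCat.of A D) n)) := trivial
    rw [key] at this
    exact this

/-- Apply `ExtVanish.of_quotSMulTop` to `A/q` and an element of the maximal ideal outside `q`. -/
theorem InjDimLT.extVanish_quotient_prime {n : ℕ} (h : InjDimLT A D (n + 1)) {q : Ideal A}
    (hq : q.IsPrime) (hqm : q ≠ maximalIdeal A) : ExtVanish A (A ⧸ q) D n := by
  obtain ⟨x, hx, hxq⟩ := SetLike.exists_of_lt (lt_of_le_of_ne (le_maximalIdeal hq.ne_top) hqm)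
  refine ExtVanish.of_quotSMulTop hx ?_ (h.extVanish le_rfl)
  rw [isSMulRegular_iff_right_eq_zero_of_smul]
  intro y hy
  obtain ⟨y, rfl⟩ := Ideal.Quotient.mk_surjective y
  change Ideal.Quotient.mk q (x * y) = 0 at hy
  rw [Ideal.Quotient.eq_zero_iff_mem] at hy ⊢
  exact (hq.mem_or_mem hy).resolve_left hxq

/-- The injective dimension is detected by Ext out of the residue field. -/
theorem InjDimLT.of_residue {n : ℕ} (h : InjDimLT A D (n + 1))
    (hk : ExtVanish A (A ⧸ maximalIdeal A) D n) : InjDimLT A D n := by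
  refine injDimLT_of_extVanish n fun N _ _ _ => extVanish_of_forall_prime (fun q hq => ?_) N
  by_cases hqm : q = maximalIdeal A
  · exact hqm ▸ hk
  · exact h.extVanish_quotient_prime hq hqm

/-- Localizing at a nonmaximal prime `q` lowers the injective dimension strictly. By a prime filtration,
only `Ext (A/r, D_q)` matters: for `r ≠ m` it vanishes already before localization, and for `r = m`
because an element of `m \ q` kills `A/m` and is invertible on `D_q`. -/
theorem InjDimLT.atPrime {n : ℕ} (h : InjDimLT A D (n + 2)) {q : Ideal A} [hq : q.IsPrime]
    (hqm : q ≠ maximalIdeal A) :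
    InjDimLT (Localization.AtPrime q) (LocalizedModule q.primeCompl D) (n + 1) := by
  have hflat : Module.Flat A (Localization.AtPrime q) := IsLocalization.flat _ q.primeCompl
  let e := ((LocalizedModule.equivTensorProduct q.primeCompl D).restrictScalars A).trans
    (TensorProduct.comm A (Localization.AtPrime q) D)
  rw [← injDimLT_localization_iff]
  refine injDimLT_of_extVanish _ fun N _ _ _ => extVanish_of_forall_prime (fun r hr => ?_) N
  by_cases hrm : r = maximalIdeal A
  · subst hrm
    obtain ⟨x, hx, hxq⟩ := SetLike.exists_of_lt (lt_of_le_of_ne (le_maximalIdeal hq.ne_top) hqm)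
    let s : q.primeCompl := ⟨x, hxq⟩
    have hu := IsLocalizedModule.map_units (LocalizedModule.mkLinearMap q.primeCompl D) s
    obtain ⟨u, hu⟩ := hu
    refine extVanish_of_smul_comp_eq_id x ?_ (u⁻¹ : (Module.End A _)ˣ).1 ?_ _
    · rw [Ideal.annihilator_quotient]; exact hx
    · have : x • (u⁻¹ : (Module.End A _)ˣ).1 = u.1 * (u⁻¹ : (Module.End A _)ˣ).1 := by
        rw [hu]; rfl
      rw [this, Units.mul_inv]; rfl
  · have h1 := (h.extVanish_quotient_prime hr hrm).tensor (Localization.AtPrime q)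
    refine subsingleton_of_forall_eq 0 fun α => ?_
    have h2 : α = (α.comp (Abelian.Ext.mk₀ e.toModuleIso.hom) (add_zero _)).comp
        (Abelian.Ext.mk₀ e.toModuleIso.inv) (add_zero _) := by
      rw [Abelian.Ext.comp_assoc_of_third_deg_zero, Abelian.Ext.mk₀_comp_mk₀, Iso.hom_inv_id,
        Abelian.Ext.comp_mk₀_id]
    rw [h2, h1.elim (α.comp _ _) 0, Abelian.Ext.zero_comp]

/-- The dimension of `A` is at most the injective dimension of `D`, by induction on the latter: each
prime `q ≠ m` satisfies `ht q = dim A_q ≤ id D_q < id D`. If `D` is injective, `q` contains an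
associated prime `r ≠ m` of `D`, and `Hom (A/r, D) ≠ 0` contradicts
`InjDimLT.extVanish_quotient_prime`. -/
theorem InjDimLT.height_lt {k : ℕ} (h : InjDimLT A D k)
    (hsupp : Module.support A D = Set.univ) : (maximalIdeal A).height < k := by
  induction k generalizing A D with
  | zero =>
    have := injDimLT_zero_iff.1 h
    have h1 : closedPoint A ∈ Module.support A D := hsupp ▸ Set.mem_univ _
    simp [Module.support_eq_empty] at h1
  | succ n ih =>
    rw [Nat.cast_add, Nat.cast_one, ENat.lt_natCast_add_one_iff, Ideal.height_le_iff]
    intro q hq hqm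
    match n with
    | 0 =>
      exfalso
      obtain ⟨r, hr, hrq⟩ := Ideal.exists_minimalPrimes_le (I := Module.annihilator A D) (J := q)
        (Module.annihilator_le_of_mem_support (p := ⟨q, hq⟩) (hsupp ▸ Set.mem_univ _))
      have hass := Module.associatedPrimes.minimalPrimes_annihilator_subset_associatedPrimes A D hr
      obtain ⟨hrp, f, hf⟩ := (isAssociatedPrime_iff_exists_injective_linearMap _ _).1 hass
      have hv := h.extVanish_quotient_prime hrp (hrq.trans_lt hqm).ne
      have h1 := (Abelian.Ext.mk₀_bijective _ _).1 (hv.elim (Abelian.Ext.mk₀ (ModuleCat.ofHom f))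
        (Abelian.Ext.mk₀ 0))
      have h2 : f = 0 := congrArg ModuleCat.Hom.hom h1
      have : Subsingleton (A ⧸ r) := ⟨fun a b => hf (by simp [h2])⟩
      exact hrp.ne_top (Ideal.Quotient.subsingleton_iff.1 this)
    | n + 1 =>
      have h1 := ih (A := Localization.AtPrime q) (h.atPrime hqm.ne)
        (support_eq_univ_of_isLocalizedModule q.primeCompl
          (LocalizedModule.mkLinearMap q.primeCompl D) hsupp)
      have h2 : (((maximalIdeal (Localization.AtPrime q)).height : ℕ∞) : WithBot ℕ∞) = q.height := by
        rw [maximalIdeal_height_eq_ringKrullDim, IsLocalization.AtPrime.ringKrullDim_eq_height q]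
      rwa [WithBot.coe_inj.1 h2] at h1

omit [Module.Finite A D] in
/-- If `id D ≤ n` and `Ext^n (k, D) ≠ 0`, then `n ≤ j + dim N` for every finitely generated `N ≠ 0` with
`Ext^i (N, D) = 0` for `i > j`; here `e` bounds `dim N`. -/
theorem le_add_of_not_extVanish_residue {n : ℕ} (h : InjDimLT A D (n + 1))
    (hk : ¬ ExtVanish A (A ⧸ maximalIdeal A) D n) (e j : ℕ) (N : Type u) [AddCommGroup N]
    [Module A N] [Module.Finite A N] [Nontrivial N] (he : Module.supportDim A N ≤ e)
    (hj : ∀ i, j < i → ExtVanish A N D i) : n ≤ j + e := by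
  induction e generalizing N j with
  | zero | succ e ih =>
    by_cases hN : Subsingleton (A ⧸ maximalIdeal A →ₗ[A] N)
    · obtain ⟨x, hx, hreg⟩ := IsSMulRegular.subsingleton_linearMap_iff.1 hN
      rw [Ideal.annihilator_quotient] at hx
      have hnt : Nontrivial (QuotSMulTop x N) := by
        rw [Submodule.Quotient.nontrivial_iff]
        exact (Submodule.top_ne_pointwise_smul_of_mem_jacobson_annihilator
          (maximalIdeal_le_jacobson _ hx)).symm
      have hdim := Module.supportDim_quotSMulTop_succ_eq_supportDim hreg hx
      rw [← hdim] at he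
      have hnb := Module.supportDim_ne_bot_of_nontrivial A (QuotSMulTop x N)
      have hvan (i : ℕ) (hi : j + 1 < i) : ExtVanish A (QuotSMulTop x N) D i := by
        obtain ⟨i, rfl⟩ := Nat.exists_eq_succ_of_ne_zero (Nat.ne_zero_of_lt hi)
        exact ExtVanish.right (f := LinearMap.lsmul A N x) hreg
          (LinearMap.exact_lsmul_mkQ_smul_top N x) (Submodule.mkQ_surjective _)
          (hj i (by lia)) (hj (i + 1) (by lia))
      obtain ⟨c, hc⟩ := WithBot.ne_bot_iff_exists.1 hnb
      rw [← hc] at he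
      first
      | (have he' : c + 1 ≤ 0 := by exact_mod_cast he
         simp at he')
      | (have he' : c + 1 ≤ (e : ℕ∞) + 1 := by exact_mod_cast he
         have he'' : Module.supportDim A (QuotSMulTop x N) ≤ (e : ℕ) := by
           have := (ENat.add_le_add_iff_right (by simp)).1 he'
           rw [← hc]
           exact_mod_cast this
         have := ih (j + 1) (QuotSMulTop x N) he'' hvan
         lia)
    · by_contra! hlt
      obtain ⟨f, hf0⟩ : ∃ f : A ⧸ maximalIdeal A →ₗ[A] N, f ≠ 0 := by
        by_contra! hall
        exact hN ⟨fun f g => by rw [hall f, hall g]⟩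
      have hsimple : IsSimpleModule A (A ⧸ maximalIdeal A) :=
        isSimpleModule_iff_quot_maximal.2 ⟨_, inferInstance, ⟨LinearEquiv.refl _ _⟩⟩
      have hf : Function.Injective f := (LinearMap.injective_or_eq_zero f).resolve_right hf0
      exact hk (ExtVanish.left hf (LinearMap.exact_map_mkQ_range f) (Submodule.mkQ_surjective _)
        (hj n (by lia)) (h.extVanish le_rfl))

/-- A finitely generated module with full support and finite injective dimension over a Noetherian local
ring has injective dimension equal to the dimension of the ring. -/
theorem injDimLT_iff_height_le (hsupp : Module.support A D = Set.univ)
    (hfin : ∃ k, InjDimLT A D k) (n : ℕ) :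
    InjDimLT A D (n + 1) ↔ (maximalIdeal A).height ≤ n := by
  constructor
  · intro h
    have := h.height_lt hsupp
    rwa [Nat.cast_add, Nat.cast_one, ENat.lt_natCast_add_one_iff] at this
  · intro hn
    classical
    have hlt := (Nat.find_spec hfin).height_lt hsupp
    obtain ⟨k, hk⟩ := Nat.exists_eq_succ_of_ne_zero (n := Nat.find hfin) (by
      rintro h0
      simp [h0] at hlt)
    have hk1 : InjDimLT A D (k + 1) := by
      have := Nat.find_spec hfin
      rwa [hk] at this
    have hk2 : ¬ InjDimLT A D k := Nat.find_min hfin (by lia)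
    have hdim : Module.supportDim A A ≤ (n : ℕ) := by
      rw [Module.supportDim_self_eq_ringKrullDim, ← maximalIdeal_height_eq_ringKrullDim]
      exact_mod_cast hn
    have hle := le_add_of_not_extVanish_residue hk1 (fun hr => hk2 (hk1.of_residue hr)) n 0 A hdim
      (fun i hi => by
        obtain ⟨i, rfl⟩ := Nat.exists_eq_succ_of_ne_zero hi.ne'
        exact extVanish_of_projective i)
    exact hk1.mono (by lia)

end core

/-! ### Pointwise dualizing modules -/

/-- A semidualizing module is faithful because the homothety map is injective. -/
theorem support_eq_univ_of_isSemidualizing {R : Type u} [CommRing R] {C : Type u} [AddCommGroup C]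
    [Module R C] (hC : IsSemidualizing R C) : Module.support R C = Set.univ := by
  have : Module.Finite R C := hC.1
  refine Set.eq_univ_of_forall fun q => Module.mem_support_iff_of_finite.2 fun r hr => ?_
  have hr0 : r = 0 := hC.2.1.1 <| by
    ext x
    simpa using Module.mem_annihilator.1 hr x
  exact hr0 ▸ zero_mem _

/-- `C_p` is a localization of `C_m` for any maximal `m` containing `p`, so it has finite injective
dimension. -/
theorem IsPointwiseDualizing.exists_injDimLT {R : Type u} [CommRing R] [IsNoetherianRing R]
    {C : Type u} [AddCommGroup C] [Module R C] (hC : IsPointwiseDualizing R C)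
    (p : Ideal R) [hp : p.IsPrime] :
    ∃ k, InjDimLT (Localization.AtPrime p) (LocalizedModule p.primeCompl C) k := by
  obtain ⟨m, hm, hpm⟩ := Ideal.exists_le_maximal p hp.ne_top
  have hmp := hm.isPrime
  have hlt := (hC.2 m hm).2
  obtain ⟨n, hn⟩ := ENat.ne_top_iff_exists.1 hlt.ne
  have h := (injDim_le_iff _ n).1 hn.symm.le
  have hle : m.primeCompl ≤ p.primeCompl := fun x hx hxp => hx (hpm hxp)
  exact ⟨n + 1, ((injDimLT_localization_iff m.primeCompl _).2 h).localize p.primeCompl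
    (LocalizedModule.liftOfLE m.primeCompl p.primeCompl hle)⟩

/-- `C ⊗[R] T ≃ S⁻¹C ⊗[S⁻¹R] T` for an `S⁻¹R`-module `T`, obtained from
`C ⊗[R] T ≃ (S⁻¹R ⊗[R] C) ⊗[S⁻¹R] T`. It is only recorded as an `R`-linear equivalence, as this is
what comparing injective dimensions over `R` requires. -/
noncomputable def tensorLocalizedEquiv {R : Type u} [CommRing R] (S : Submonoid R)
    (C T : Type u) [AddCommGroup C] [Module R C] [AddCommGroup T] [Module R T]
    [Module (Localization S) T] [IsScalarTower R (Localization S) T] :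
    TensorProduct R C T ≃ₗ[R] TensorProduct (Localization S) (LocalizedModule S C) T :=
  (TensorProduct.comm R C T).trans <|
    ((TensorProduct.AlgebraTensorModule.cancelBaseChange R (Localization S) (Localization S) T
      C).symm.restrictScalars R).trans <|
    (((TensorProduct.comm (Localization S) T (TensorProduct R (Localization S) C)).trans
      (TensorProduct.congr (LocalizedModule.equivTensorProduct S C).symm
        (LinearEquiv.refl (Localization S) T))).restrictScalars R)

theorem height_maximalIdeal_atPrime {R : Type u} [CommRing R] (p : Ideal R) [hp : p.IsPrime] :
    (IsLocalRing.maximalIdeal (Localization.AtPrime p)).height = p.height := by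
  have h : (((IsLocalRing.maximalIdeal (Localization.AtPrime p)).height : ℕ∞) : WithBot ℕ∞) =
      p.height := by
    rw [IsLocalRing.maximalIdeal_height_eq_ringKrullDim,
      IsLocalization.AtPrime.ringKrullDim_eq_height p]
  exact WithBot.coe_inj.1 h

theorem enat_eq_of_forall_le_natCast_iff {a b : ℕ∞} (h : ∀ n : ℕ, a ≤ n ↔ b ≤ n) : a = b := by
  have key {a b : ℕ∞} (h : ∀ n : ℕ, b ≤ n → a ≤ n) : a ≤ b := by
    cases b with
    | top => exact le_top
    | coe n => exact h n le_rfl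
  exact le_antisymm (key fun n => (h n).2) (key fun n => (h n).1)

/-- If `C` is a pointwise dualizing module over a Noetherian ring `R`, then for
every prime `p` and every nonzero free `R_p`-module `F`, the injective dimension of
`C ⊗_R T_p` equals `ht(p)`, where `T_p` is the `pR_p`-adic completion of `F`. -/
theorem injDim_tensor_adicCompletion (R : Type u) [CommRing R] [IsNoetherianRing R]
    (C : Type u) [AddCommGroup C] [Module R C] (hC : IsPointwiseDualizing R C)
    (p : Ideal R) [p.IsPrime] (F : Type u) [AddCommGroup F]
    [Module (Localization.AtPrime p) F] [Module.Free (Localization.AtPrime p) F]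
    [Nontrivial F] :
    letI : Module R (AdicCompletion (IsLocalRing.maximalIdeal (Localization.AtPrime p)) F) :=
      Module.compHom _ (algebraMap R (Localization.AtPrime p))
    injDim R (TensorProduct R C
      (AdicCompletion (IsLocalRing.maximalIdeal (Localization.AtPrime p)) F)) =
      primeHeight R p := by
  let _ : Module R (AdicCompletion (IsLocalRing.maximalIdeal (Localization.AtPrime p)) F) :=
    Module.compHom _ (algebraMap R (Localization.AtPrime p))
  have : IsScalarTower R (Localization.AtPrime p)
      (AdicCompletion (IsLocalRing.maximalIdeal (Localization.AtPrime p)) F) :=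
    IsScalarTower.of_algebraMap_smul fun _ _ => rfl
  have := AdicCompletion.faithfullyFlat_of_free (A := Localization.AtPrime p) F
  have : Module.Finite R C := hC.1.1
  have hsupp := support_eq_univ_of_isLocalizedModule p.primeCompl
    (LocalizedModule.mkLinearMap p.primeCompl C) (support_eq_univ_of_isSemidualizing hC.1)
  refine enat_eq_of_forall_le_natCast_iff fun n => ?_
  rw [injDim_le_iff]
  change InjDimLT R _ (n + 1) ↔ _
  rw [InjDimLT.congr (tensorLocalizedEquiv p.primeCompl C _),
    injDimLT_localization_iff p.primeCompl, injDimLT_tensor_iff,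
    injDimLT_iff_height_le hsupp (hC.exists_injDimLT p), height_maximalIdeal_atPrime, primeHeight,
    ← PrimeSpectrum.height_eq_orderHeight]
end

section
/- Let R be a commutative Noetherian ring and let C be a semidualizing R-module. Then C is pointwise dualizing if and only if the following holds: an R-module M is C-flat if and only if μ^i(p, M) = 0 for all prime ideals p of R and all i ≠ ht(p). -/
open CategoryTheory

universe u

/-!
The whole argument is about the vanishing of `Ext^i(R/p, M_p)` (`EV`), which by flat base change
along `R → R_p` is the vanishing of the Bass number `μ^i(p, M)` (`bassNumber_eq_zero_iff`).

Suppose `C` is pointwise dualizing. For each prime `p`, `Ext(R/p, C_p)` lives in a single degree: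
if `n` is the last nonvanishing degree of `Ext(k, C_p)`, then `C_p` can be divided successively by
`n` elements of the maximal ideal, each regular on the previous quotient, because otherwise `k`
embeds in a quotient `N` and, as `Ext^{n+1}(-, C_p) = 0`, `Ext^n(k, C_p)` would vanish along with
`Ext^n(N, C_p)`; such a sequence forces `Ext^i(k, C_p) = 0` for `i < n` (`exists_unique_degree`).
By Nakayama, a nonvanishing degree rises when the prime grows (`not_EV_climb`), and this identifies
the degree with `ht p` (`local_degree_eq_height`). As `Ext(N, C) ⊗ F = Ext(N, C ⊗ F)` for `F` flat
and `N` finitely generated, every `C`-flat module has its Bass numbers concentrated at the heights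
(`bass_of_isCFlat`).

Conversely let `M` be a module with this property. Then `F = Hom(C, M)` is flat and evaluation
`C ⊗ F → M` is bijective. Both claims can be checked after localizing at a maximal ideal `m`, of
height `d` say, so that only primes of height at most `d` matter. More generally consider the class
`HtClass n d` of modules with Bass numbers in degree `ht p - n` only; the cokernel `M'` of an
injective hull `M → E` lies in `HtClass (n + 1) d`, and the class is zero for `n > d`. For the
injective module `E` evaluation is bijective, and `Tor_j(N, Hom(C, E)) = Hom(Ext^j(N, C), E)`
vanishes for `j > n` since the associated primes of `E` have height `n` and `C_p` has injective
dimension `ht p`; for `N = C` it vanishes for all `j > 0`. A downward induction on `n`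
(`HtClass.main`) transfers this to `M` along `0 → Hom(C, M) → Hom(C, E) → Hom(C, M') → 0`, giving
`Tor_j(N, Hom(C, M)) = 0` for `j > n`, and flatness is the case `n = 0`.

Finally, if `C`-flatness is characterized by Bass numbers, then the `C`-flat module `C` itself has
`Ext^i(R/m, C_m) = 0` for `i > ht m`, hence `Ext^i(N, C_m) = 0` for all finitely generated
`R_m`-modules `N` and `i > ht m`. By Baer's criterion (`EV_of_cyclic`) `C_m` has finite injective
dimension, and being semidualizing localizes.
-/

/-! ### Vanishing of Ext -/

/-- `EV R N M i` means `Ext^i_R(N, M) = 0`. It uses `Abelian.Ext` in `ModuleCat R`, which comes with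
both long exact sequences, rather than the derived functor `extM`; `extM_subsingleton_iff` compares
the two. -/
def EV (R : Type u) [CommRing R] (N M : Type u) [AddCommGroup N] [Module R N]
    [AddCommGroup M] [Module R M] (i : ℕ) : Prop :=
  Subsingleton (Abelian.Ext (ModuleCat.of R N) (ModuleCat.of R M) i)

section
variable {R : Type u} [CommRing R]

lemma EV.eq_zero {N M : Type u} [AddCommGroup N] [Module R N]
    [AddCommGroup M] [Module R M] {i : ℕ} (h : EV R N M i)
    (x : Abelian.Ext (ModuleCat.of R N) (ModuleCat.of R M) i) : x = 0 := by
  have : Subsingleton (Abelian.Ext (ModuleCat.of R N) (ModuleCat.of R M) i) := h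
  exact Subsingleton.elim _ _

lemma EV.of_forall {N M : Type u} [AddCommGroup N] [Module R N]
    [AddCommGroup M] [Module R M] {i : ℕ}
    (h : ∀ x : Abelian.Ext (ModuleCat.of R N) (ModuleCat.of R M) i, x = 0) : EV R N M i :=
  ⟨fun a b => (h a).trans (h b).symm⟩

lemma EV_zero_iff (N M : Type u) [AddCommGroup N] [Module R N] [AddCommGroup M] [Module R M] :
    EV R N M 0 ↔ ∀ f : N →ₗ[R] M, f = 0 := by
  constructor
  · intro h f
    have h1 := h.eq_zero (Abelian.Ext.mk₀ (ModuleCat.ofHom f))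
    have h2 : ModuleCat.ofHom f = 0 := by simpa using h1
    simpa using congrArg ModuleCat.Hom.hom h2
  · intro h
    apply EV.of_forall
    intro x
    obtain ⟨f, rfl⟩ := Abelian.Ext.addEquiv₀.symm.surjective x
    have : f = 0 := by
      ext1
      exact h _
    simp [this]

/-- The two notions of `Ext` vanish simultaneously: both are computed from a projective resolution
of `N`. -/
lemma extM_subsingleton_iff (N M : Type u) [AddCommGroup N] [Module R N]
    [AddCommGroup M] [Module R M] (i : ℕ) :
    Subsingleton (extM R N M i) ↔ EV R N M i := by
  let P := (ProjectiveResolution.of (ModuleCat.of R N))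
  let Y := ModuleCat.of R M
  unfold extM
  rw [← ModuleCat.isZero_iff_subsingleton, (P.isoExt i Y).isZero_iff,
    ← HomologicalComplex.exactAt_iff_isZero_homology]
  cases i with
  | zero =>
    rw [HomologicalComplex.exactAt_iff' _ 0 0 1 (by simp) (by simp)]
    rw [EV_zero_iff]
    have hepi : Epi (P.π.f 0) := inferInstance
    let π : P.complex.X 0 ⟶ ModuleCat.of R N := P.π.f 0
    have hπ : Epi π := hepi
    have hdπ : P.complex.d 1 0 ≫ π = 0 := P.complex_d_comp_π_f_zero
    constructor
    · intro h f
      obtain ⟨g, hg⟩ := (ShortComplex.moduleCat_exact_iff _).1 h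
        (π ≫ (ModuleCat.ofHom f : _ ⟶ Y)) (by
          change P.complex.d 1 0 ≫ π ≫ _ = 0
          rw [← Category.assoc, hdπ, Limits.zero_comp])
      have h2 : (P.complex.linearYonedaObj R Y).d 0 0 = 0 :=
        HomologicalComplex.shape _ _ _ (by simp)
      have h3 : π ≫ (ModuleCat.ofHom f : _ ⟶ Y) = 0 := by
        rw [← hg]
        change (P.complex.linearYonedaObj R Y).d 0 0 g = 0
        rw [h2]; rfl
      have h4 : (ModuleCat.ofHom f : ModuleCat.of R N ⟶ Y) = 0 := by
        rwa [← cancel_epi π, Limits.comp_zero]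
      exact congrArg ModuleCat.Hom.hom h4
    · intro h
      rw [ShortComplex.moduleCat_exact_iff]
      intro f hf
      refine ⟨0, ?_⟩
      rw [map_zero]
      obtain ⟨g, hg⟩ := Limits.CokernelCofork.IsColimit.desc' P.isColimitCokernelCofork f hf
      have h5 : g = 0 := by
        have : (g : ModuleCat.of R N ⟶ Y) = 0 := by
          ext1
          exact h _
        exact this
      have h6 : P.cokernelCofork.π ≫ g = 0 := by rw [h5, Limits.comp_zero]
      exact h6.symm.trans hg
  | succ n =>
    rw [HomologicalComplex.exactAt_iff' _ n (n+1) (n+2) (by simp) (by simp)]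
    rw [ShortComplex.moduleCat_exact_iff]
    constructor
    · intro h
      apply EV.of_forall
      intro x
      obtain ⟨f, hf, rfl⟩ := P.extMk_surjective x (n+2) rfl
      rw [P.extMk_eq_zero_iff f _ _ _ n rfl]
      obtain ⟨g, hg⟩ := h f hf
      exact ⟨g, hg⟩
    · intro h f hf
      have := h.eq_zero (P.extMk (Y := Y) f (n+2) rfl hf)
      obtain ⟨g, hg⟩ := (P.extMk_eq_zero_iff (Y := Y) f (n+2) rfl hf n rfl).1 this
      exact ⟨g, hg⟩

end

section
variable {R : Type u} [CommRing R]

/-! ### Long exact sequences and dimension shifting -/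

section exact
variable {A B C : Type u} [AddCommGroup A] [Module R A] [AddCommGroup B] [Module R B]
  [AddCommGroup C] [Module R C] {f : A →ₗ[R] B} {g : B →ₗ[R] C}

/-- A short exact sequence of modules as a short complex in `ModuleCat R`. -/
abbrev mkS (hfg : Function.Exact f g) : ShortComplex (ModuleCat.{u} R) :=
  ModuleCat.shortComplexOfCompEqZero f g hfg.linearMap_comp_eq_zero

lemma mkS_shortExact (hf : Function.Injective f) (hg : Function.Surjective g)
    (hfg : Function.Exact f g) : (mkS hfg).ShortExact :=
  ModuleCat.shortComplex_shortExact _ hfg hf hg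

variable (hf : Function.Injective f) (hg : Function.Surjective g) (hfg : Function.Exact f g)
  {N : Type u} [AddCommGroup N] [Module R N] {i : ℕ}
include hf hg hfg

/- The six following lemmas read off vanishing from the covariant (`cov`) and contravariant (`con`)
long exact sequences of `0 → A → B → C → 0`; the index says which of `A`, `B`, `C` the conclusion is
about. -/

lemma EV.cov₂ (h1 : EV R N A i) (h3 : EV R N C i) : EV R N B i := by
  apply EV.of_forall
  intro x
  obtain ⟨y, rfl⟩ := Abelian.Ext.covariant_sequence_exact₂ (ModuleCat.of R N)
    (mkS_shortExact hf hg hfg) x (h3.eq_zero _)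
  rw [show y = 0 from h1.eq_zero y, Abelian.Ext.zero_comp]

lemma EV.cov₃ (h2 : EV R N B i) (h1 : EV R N A (i + 1)) : EV R N C i := by
  apply EV.of_forall
  intro x
  obtain ⟨y, rfl⟩ := Abelian.Ext.covariant_sequence_exact₃ (ModuleCat.of R N)
    (mkS_shortExact hf hg hfg) x rfl (h1.eq_zero _)
  rw [show y = 0 from h2.eq_zero y, Abelian.Ext.zero_comp]

lemma EV.cov₁ (h3 : EV R N C i) (h2 : EV R N B (i + 1)) : EV R N A (i + 1) := by
  apply EV.of_forall
  intro x
  obtain ⟨y, rfl⟩ := Abelian.Ext.covariant_sequence_exact₁ (ModuleCat.of R N)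
    (mkS_shortExact hf hg hfg) x (h2.eq_zero _) rfl
  rw [show y = 0 from h3.eq_zero y, Abelian.Ext.zero_comp]

lemma EV.con₂ (h1 : EV R A N i) (h3 : EV R C N i) : EV R B N i := by
  apply EV.of_forall
  intro x
  obtain ⟨y, rfl⟩ := Abelian.Ext.contravariant_sequence_exact₂
    (mkS_shortExact hf hg hfg) (ModuleCat.of R N) x (h1.eq_zero _)
  rw [show y = 0 from h3.eq_zero y, Abelian.Ext.comp_zero]

lemma EV.con₁ (h2 : EV R B N i) (h3 : EV R C N (i + 1)) : EV R A N i := by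
  apply EV.of_forall
  intro x
  obtain ⟨y, rfl⟩ := Abelian.Ext.contravariant_sequence_exact₁
    (mkS_shortExact hf hg hfg) (ModuleCat.of R N) x (add_comm 1 i) (h3.eq_zero _)
  rw [show y = 0 from h2.eq_zero y, Abelian.Ext.comp_zero]

lemma EV.con₃ (h1 : EV R A N i) (h2 : EV R B N (i + 1)) : EV R C N (i + 1) := by
  apply EV.of_forall
  intro x
  obtain ⟨y, rfl⟩ := Abelian.Ext.contravariant_sequence_exact₃
    (mkS_shortExact hf hg hfg) (ModuleCat.of R N) x (h2.eq_zero _) (add_comm 1 i)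
  rw [show y = 0 from h1.eq_zero y, Abelian.Ext.comp_zero]

/-- For `0 → A → B → C → 0` with `B` projective, `Ext^1(C, N)` vanishes iff all maps `A → N` extend
to `B`. -/
lemma EV_one_iff [Module.Projective R B] :
    EV R C N 1 ↔ ∀ φ : A →ₗ[R] N, ∃ ψ : B →ₗ[R] N, ψ ∘ₗ f = φ := by
  have hP : Projective (ModuleCat.of R B) := (IsProjective.iff_projective B).1 inferInstance
  have S := mkS_shortExact hf hg hfg
  constructor
  · intro h φ
    obtain ⟨y, hy⟩ := Abelian.Ext.contravariant_sequence_exact₁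
      S (ModuleCat.of R N) (Abelian.Ext.mk₀ (ModuleCat.ofHom φ)) (add_zero 1) (h.eq_zero _)
    obtain ⟨ψ, rfl⟩ := Abelian.Ext.addEquiv₀.symm.surjective y
    refine ⟨ψ.hom, ?_⟩
    simp only [Abelian.Ext.addEquiv₀_symm_apply, Abelian.Ext.mk₀_comp_mk₀] at hy
    have := (Abelian.Ext.mk₀_bijective _ _).1 hy
    exact congrArg ModuleCat.Hom.hom this
  · intro h
    apply EV.of_forall
    intro x
    obtain ⟨y, rfl⟩ := Abelian.Ext.contravariant_sequence_exact₃ S (ModuleCat.of R N) x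
      (Abelian.Ext.eq_zero_of_projective _) (add_zero 1)
    obtain ⟨φ, rfl⟩ := Abelian.Ext.addEquiv₀.symm.surjective y
    obtain ⟨ψ, hψ⟩ := h φ.hom
    have : φ = (mkS hfg).f ≫ ModuleCat.ofHom ψ := by
      ext1
      exact hψ.symm
    rw [Abelian.Ext.addEquiv₀_symm_apply, this, ← Abelian.Ext.mk₀_comp_mk₀]
    exact S.extClass_comp_assoc _

end exact

lemma EV.of_projective (P N : Type u) [AddCommGroup P] [Module R P] [AddCommGroup N] [Module R N]
    [Module.Projective R P] (i : ℕ) : EV R P N (i + 1) := by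
  have hP : Projective (ModuleCat.of R P) := (IsProjective.iff_projective P).1 inferInstance
  exact EV.of_forall fun x => Abelian.Ext.eq_zero_of_projective x

lemma EV.of_injective (N I : Type u) [AddCommGroup I] [Module R I] [AddCommGroup N] [Module R N]
    [Module.Injective R I] (i : ℕ) : EV R N I (i + 1) := by
  have hP : Injective (ModuleCat.of R I) := Module.injective_object_of_injective_module R I
  exact EV.of_forall fun x => Abelian.Ext.eq_zero_of_injective x

lemma EV.congr {N N' M M' : Type u} [AddCommGroup N] [Module R N] [AddCommGroup N'] [Module R N']
    [AddCommGroup M] [Module R M] [AddCommGroup M'] [Module R M'] (e : N ≃ₗ[R] N')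
    (e' : M ≃ₗ[R] M') {i : ℕ} (h : EV R N M i) : EV R N' M' i := by
  have h0 : ∀ X : Type u, [AddCommGroup X] → [Module R X] → ∀ j, EV R X PUnit.{u+1} j ∧
      EV R PUnit.{u+1} X j := by
    intro X _ _ j
    cases j with
    | zero =>
      exact ⟨(EV_zero_iff _ _).2 fun f => by ext, (EV_zero_iff _ _).2 fun f => by
        ext x; exact map_zero f⟩
    | succ j =>
      refine ⟨?_, EV.of_projective _ _ _⟩
      have : Module.Injective R PUnit.{u+1} := ⟨fun _ _ _ _ _ _ _ _ _ => ⟨0, fun _ => rfl⟩⟩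
      exact EV.of_injective _ _ _
  have h1 : EV R N' M i := by
    refine EV.con₂ (f := (0 : PUnit.{u+1} →ₗ[R] N')) (g := e.symm.toLinearMap) ?_ ?_ ?_
      (h0 _ _).2 h
    · intro a b _; rfl
    · exact e.symm.surjective
    · intro x; simp
      exact eq_comm
  refine EV.cov₂ (f := (0 : PUnit.{u+1} →ₗ[R] M')) (g := e'.symm.toLinearMap) ?_ ?_ ?_
      (h0 _ _).1 h1
  · intro a b _; rfl
  · exact e'.symm.surjective
  · intro x; simp
    exact eq_comm

lemma EV.of_subsingleton_left {N M : Type u} [AddCommGroup N] [Module R N] [AddCommGroup M]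
    [Module R M] [Subsingleton N] (i : ℕ) : EV R N M i := by
  cases i with
  | zero => exact (EV_zero_iff _ _).2 fun f => by ext x; rw [Subsingleton.elim x 0]; simp
  | succ i => exact EV.of_projective _ _ _

/-- Dimension shifting along `0 → A → B → C → 0` with `B` projective. -/
lemma EV_shift {A B C : Type u} [AddCommGroup A] [Module R A] [AddCommGroup B] [Module R B]
    [AddCommGroup C] [Module R C] {f : A →ₗ[R] B} {g : B →ₗ[R] C}
    (hf : Function.Injective f) (hg : Function.Surjective g) (hfg : Function.Exact f g)
    [Module.Projective R B] {N : Type u} [AddCommGroup N] [Module R N] {i : ℕ} :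
    EV R C N (i + 2) ↔ EV R A N (i + 1) :=
  ⟨fun h => EV.con₁ hf hg hfg (EV.of_projective _ _ _) h,
   fun h => EV.con₃ hf hg hfg h (EV.of_projective _ _ _)⟩

/-- If `x` kills `N` and is regular on `M` with `C = M/xM`, then `Ext^{i+1}(N, M)` is a quotient of
`Ext^i(N, C)`, because `x` acts on it both as zero and as the next map of the long exact
sequence. -/
lemma EV.of_quotSMulTop {N M : Type u} [AddCommGroup N] [Module R N] [AddCommGroup M] [Module R M]
    {C : Type u} [AddCommGroup C] [Module R C] {x : R} (hx : ∀ n : N, x • n = 0)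
    {g : M →ₗ[R] C} (hinj : Function.Injective (LinearMap.lsmul R M x))
    (hg : Function.Surjective g) (hfg : Function.Exact (LinearMap.lsmul R M x) g) {i : ℕ}
    (h : EV R N C i) : EV R N M (i + 1) := by
  have S := mkS_shortExact hinj hg hfg
  apply EV.of_forall
  intro e
  have h1 : e.comp (Abelian.Ext.mk₀ (mkS hfg).f) (add_zero (i+1)) = 0 := by
    have e1 : (mkS hfg).f = x • 𝟙 (ModuleCat.of R M) := by ext; rfl
    have e2 : x • 𝟙 (ModuleCat.of R N) = 0 := by ext n; exact hx n
    have e3 : x • e = (Abelian.Ext.mk₀ (x • 𝟙 (ModuleCat.of R N))).comp e (zero_add (i+1)) := by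
      simp [Abelian.Ext.mk₀_smul]
    rw [e1]
    have e4 : e.comp (Abelian.Ext.mk₀ (x • 𝟙 (ModuleCat.of R M))) (add_zero (i+1)) = x • e := by
      simp [Abelian.Ext.mk₀_smul]
    refine e4.trans ?_
    rw [e3, e2]; simp
  obtain ⟨y, rfl⟩ := Abelian.Ext.covariant_sequence_exact₁ (ModuleCat.of R N) S e h1 rfl
  rw [show y = 0 from h.eq_zero y, Abelian.Ext.zero_comp]

/-- If `x` kills `N` and acts bijectively on `M`, all Ext vanish. -/
lemma EV.of_bijective {N M : Type u} [AddCommGroup N] [Module R N] [AddCommGroup M] [Module R M]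
    {x : R} (hx : ∀ n : N, x • n = 0)
    (hb : Function.Bijective (LinearMap.lsmul R M x)) (i : ℕ) : EV R N M i := by
  cases i with
  | zero =>
    rw [EV_zero_iff]
    intro f
    ext n
    apply hb.1
    simp [← map_smul, hx]
  | succ i =>
    refine EV.of_quotSMulTop hx (g := (0 : M →ₗ[R] PUnit.{u+1})) hb.1 (fun _ => ⟨0, rfl⟩) ?_ ?_
    · intro y; simpa using hb.2 y
    · cases i with
      | zero => exact (EV_zero_iff _ _).2 fun f => by ext
      | succ j =>
        have : Module.Injective R PUnit.{u+1} := ⟨fun _ _ _ _ _ _ _ _ _ => ⟨0, fun _ => rfl⟩⟩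
        exact EV.of_injective _ _ _

/-- If `x` lies in the Jacobson radical and is regular on `N` with `C = N/xN`, then
`Ext^{i+1}(C, M) = 0` makes `x` act surjectively on the finitely generated module `Ext^i(N, M)`,
which vanishes by Nakayama. -/
lemma EV.of_nakayama [IsNoetherianRing R] {N M C : Type u} [AddCommGroup N] [Module R N]
    [AddCommGroup M] [Module R M] [AddCommGroup C] [Module R C] [Module.Finite R N]
    [Module.Finite R M] {x : R} (hxJ : x ∈ Ideal.jacobson (⊥ : Ideal R))
    {g : N →ₗ[R] C} (hinj : Function.Injective (LinearMap.lsmul R N x))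
    (hg : Function.Surjective g) (hfg : Function.Exact (LinearMap.lsmul R N x) g) {i : ℕ}
    (h : EV R C M (i + 1)) : EV R N M i := by
  have S := mkS_shortExact hinj hg hfg
  have hfin : Module.Finite R (Abelian.Ext (ModuleCat.of R N) (ModuleCat.of R M) i) :=
    ModuleCat.finite_ext R (ModuleCat.of R N) (ModuleCat.of R M) i
  have key : ∀ e : Abelian.Ext (ModuleCat.of R N) (ModuleCat.of R M) i, ∃ e', x • e' = e := by
    intro e
    obtain ⟨y, hy⟩ := Abelian.Ext.contravariant_sequence_exact₁ S (ModuleCat.of R M) e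
      (add_comm 1 i) (h.eq_zero _)
    refine ⟨y, ?_⟩
    rw [← hy]
    have e1 : (mkS hfg).f = x • 𝟙 (ModuleCat.of R N) := by ext; rfl
    have e3 : x • y = (Abelian.Ext.mk₀ (x • 𝟙 (ModuleCat.of R N))).comp y (zero_add i) := by
      simp [Abelian.Ext.mk₀_smul]
    rw [e3, ← e1]
  have htop : (⊤ : Submodule R (Abelian.Ext (ModuleCat.of R N) (ModuleCat.of R M) i)) = ⊥ := by
    apply Submodule.eq_bot_of_le_smul_of_le_jacobson_bot (Ideal.span {x}) _ hfin.fg_top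
    · intro e _
      obtain ⟨e', rfl⟩ := key e
      exact Submodule.smul_mem_smul (Ideal.mem_span_singleton_self x) trivial
    · rwa [Ideal.span_singleton_le_iff_mem]
  exact (Submodule.subsingleton_iff R).1 ((subsingleton_iff_bot_eq_top).1 htop.symm)

end

section
variable {R : Type u} [CommRing R]
open TensorProduct

/-! ### Flat tensor products and base change -/

lemma exact_subtype_ker {M N : Type u} [AddCommGroup M] [Module R M] [AddCommGroup N]
    [Module R N] (g : M →ₗ[R] N) : Function.Exact (LinearMap.ker g).subtype g := by
  intro x; simp

lemma exists_free_cover (N : Type u) [AddCommGroup N] [Module R N] :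
    ∃ (P : Type u) (_ : AddCommGroup P) (_ : Module R P) (_ : Module.Free R P) (p : P →ₗ[R] N),
      Function.Surjective p :=
  ⟨N →₀ R, inferInstance, inferInstance, inferInstance, Finsupp.linearCombination R id,
    Finsupp.linearCombination_id_surjective R N⟩

/-- For `K` finitely presented and `F` flat, every map `K → M ⊗ F` comes from
`Hom(K, M) ⊗ F`. -/
lemma rTensorHom_surjective [IsNoetherianRing R] (K M F : Type u) [AddCommGroup K] [Module R K]
    [AddCommGroup M] [Module R M] [AddCommGroup F] [Module R F] [Module.Finite R K]
    [Module.Flat R F] :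
    Function.Surjective (rTensorHomToHomRTensor (.id R) K M F) := by
  obtain ⟨n, p, hp⟩ := Module.Finite.exists_fin' R K
  obtain ⟨m, q, hq⟩ := Module.Finite.exists_fin' R (LinearMap.ker p)
  let a : (Fin m → R) →ₗ[R] (Fin n → R) := (LinearMap.ker p).subtype ∘ₗ q
  have hpa : p ∘ₗ a = 0 := by
    ext x; simp [a]
  have nat : ∀ {X Y : Type u} [AddCommGroup X] [AddCommGroup Y] [Module R X] [Module R Y]
      (b : X →ₗ[R] Y) (z : (Y →ₗ[R] M) ⊗[R] F),
      rTensorHomToHomRTensor (.id R) X M F ((LinearMap.lcomp R M b).rTensor F z) =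
      (rTensorHomToHomRTensor (.id R) Y M F z) ∘ₗ b := by
    intro X Y _ _ _ _ b z
    induction z with
    | zero => simp
    | tmul x y => ext w; simp
    | add x y hx hy => simp [hx, hy, LinearMap.add_comp]
  have hex : Function.Exact (LinearMap.lcomp R M p) (LinearMap.lcomp R M a) := by
    intro φ
    constructor
    · intro h
      have h1 : LinearMap.ker p ≤ LinearMap.ker φ := by
        intro x hx
        obtain ⟨y, hy⟩ := hq ⟨x, hx⟩
        have := LinearMap.congr_fun h y
        simpa [a, hy] using this
      obtain ⟨ψ, hψ⟩ : ∃ ψ : K →ₗ[R] M, ψ ∘ₗ p = φ := by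
        refine ⟨(LinearMap.ker p).liftQ φ h1 ∘ₗ
          (p.quotKerEquivOfSurjective hp).symm.toLinearMap, ?_⟩
        ext x
        have : (p.quotKerEquivOfSurjective hp).symm (p (Pi.single x 1)) =
            (LinearMap.ker p).mkQ (Pi.single x 1) := by
          rw [LinearEquiv.symm_apply_eq]; rfl
        simp [this]
      exact ⟨ψ, hψ⟩
    · rintro ⟨ψ, rfl⟩
      ext x
      have := LinearMap.congr_fun hpa (Pi.single x 1)
      simp at this
      simp [this]
  have hex' := Module.Flat.rTensor_exact F hex
  have bij : ∀ k, Function.Bijective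
      (rTensorHomToHomRTensor (.id R) (Fin k → R) M F) := by
    intro k
    rw [← rTensorHomEquivHomRTensor_toLinearMap]
    exact (rTensorHomEquivHomRTensor R (Fin k → R) M F).bijective
  intro φ
  obtain ⟨z, hz⟩ := (bij n).2 (φ ∘ₗ p)
  have h0 : (LinearMap.lcomp R M a).rTensor F z = 0 := by
    apply (bij m).1
    rw [nat, hz, map_zero, LinearMap.comp_assoc, hpa, LinearMap.comp_zero]
  obtain ⟨w, rfl⟩ := (hex' z).1 h0
  refine ⟨w, ?_⟩
  rw [nat] at hz
  ext x
  obtain ⟨y, rfl⟩ := hp x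
  exact LinearMap.congr_fun hz y

/-- Vanishing of `Ext(N, M)` for finitely generated `N` passes to `M ⊗ F` with `F` flat. -/
lemma EV.tensor_flat [IsNoetherianRing R] (M F : Type u) [AddCommGroup M] [Module R M]
    [AddCommGroup F] [Module R F] [Module.Flat R F] (i : ℕ) :
    ∀ (N : Type u) [AddCommGroup N] [Module R N] [Module.Finite R N],
      EV R N M i → EV R N (M ⊗[R] F) i := by
  induction i using Nat.twoStepInduction with
  | zero =>
    intro N _ _ _ h
    rw [EV_zero_iff] at *
    intro f
    obtain ⟨z, rfl⟩ := rTensorHom_surjective N M F f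
    have : Subsingleton (N →ₗ[R] M) := ⟨fun a b => by rw [h a, h b]⟩
    rw [Subsingleton.elim z 0, map_zero]
  | one =>
    intro N _ _ _ h
    obtain ⟨n, p, hp⟩ := Module.Finite.exists_fin' R N
    rw [EV_one_iff (f := (LinearMap.ker p).subtype) (LinearMap.ker p).injective_subtype hp
      (exact_subtype_ker p)] at *
    intro φ
    obtain ⟨z, rfl⟩ := rTensorHom_surjective _ M F φ
    induction z with
    | zero => exact ⟨0, by simp⟩
    | tmul x y =>
      obtain ⟨ψ, rfl⟩ := h x
      exact ⟨rTensorHomToHomRTensor (.id R) _ M F (ψ ⊗ₜ y), by ext; simp⟩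
    | add x y hx hy =>
      obtain ⟨a, ha⟩ := hx
      obtain ⟨b, hb⟩ := hy
      exact ⟨a + b, by rw [LinearMap.add_comp, ha, hb, map_add]⟩
  | more i _ ih =>
    intro N _ _ _ h
    obtain ⟨n, p, hp⟩ := Module.Finite.exists_fin' R N
    have hk := exact_subtype_ker p
    rw [EV_shift (f := (LinearMap.ker p).subtype) (LinearMap.ker p).injective_subtype hp hk] at *
    exact ih _ h

/-- Ext vanishing and flat base change: for an `A`-module `X`, `Ext_R(N, X)` is
`Ext_A(A ⊗ N, X)`. -/
lemma EV_baseChange_iff (A : Type u) [CommRing A] [Algebra R A] [Module.Flat R A]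
    (X : Type u) [AddCommGroup X] [Module R X] [Module A X] [IsScalarTower R A X] (i : ℕ) :
    ∀ (N : Type u) [AddCommGroup N] [Module R N],
      EV R N X i ↔ EV A (A ⊗[R] N) X i := by
  have lift : ∀ {K : Type u} [AddCommGroup K] [Module R K] (f : K →ₗ[R] X),
      ∃ f' : A ⊗[R] K →ₗ[A] X, ∀ x, f' (1 ⊗ₜ x) = f x := by
    intro K _ _ f
    exact ⟨(TensorProduct.isBaseChange R K A).lift f,
      (TensorProduct.isBaseChange R K A).lift_eq f⟩
  induction i using Nat.twoStepInduction with
  | zero =>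
    intro N _ _
    rw [EV_zero_iff, EV_zero_iff]
    constructor
    · intro h f
      apply (TensorProduct.isBaseChange R N A).algHom_ext
      intro x
      exact LinearMap.congr_fun (h ((f.restrictScalars R) ∘ₗ TensorProduct.mk R A N 1)) x
    · intro h f
      obtain ⟨f', hf'⟩ := lift f
      ext x
      rw [← hf' x, h f']; rfl
  | one =>
    intro N _ _
    obtain ⟨P, _, _, _, p, hp⟩ := exists_free_cover (R := R) N
    have hk := exact_subtype_ker p
    rw [EV_one_iff (f := (LinearMap.ker p).subtype) (LinearMap.ker p).injective_subtype hp hk,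
      EV_one_iff (f := (LinearMap.ker p).subtype.baseChange A) (g := p.baseChange A)
        (Module.Flat.lTensor_preserves_injective_linearMap (M := A) _
          (LinearMap.ker p).injective_subtype)
        (LinearMap.lTensor_surjective A hp) (Module.Flat.lTensor_exact A hk)]
    constructor
    · intro h φ
      obtain ⟨ψ, hψ⟩ := h ((φ.restrictScalars R) ∘ₗ TensorProduct.mk R A _ 1)
      obtain ⟨ψ', hψ'⟩ := lift ψ
      refine ⟨ψ', ?_⟩
      apply (TensorProduct.isBaseChange R _ A).algHom_ext
      intro x
      have := LinearMap.congr_fun hψ x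
      simpa [hψ'] using this
    · intro h φ
      obtain ⟨φ', hφ'⟩ := lift φ
      obtain ⟨ψ, hψ⟩ := h φ'
      refine ⟨(ψ.restrictScalars R) ∘ₗ TensorProduct.mk R A _ 1, ?_⟩
      ext x
      have := LinearMap.congr_fun hψ (1 ⊗ₜ x)
      rw [hφ'] at this
      simpa using this
  | more i _ ih =>
    intro N _ _
    obtain ⟨P, _, _, _, p, hp⟩ := exists_free_cover (R := R) N
    have hk := exact_subtype_ker p
    rw [EV_shift (f := (LinearMap.ker p).subtype) (LinearMap.ker p).injective_subtype hp hk,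
      EV_shift (f := (LinearMap.ker p).subtype.baseChange A) (g := p.baseChange A)
        (Module.Flat.lTensor_preserves_injective_linearMap (M := A) _
          (LinearMap.ker p).injective_subtype)
        (LinearMap.lTensor_surjective A hp) (Module.Flat.lTensor_exact A hk)]
    exact ih _

lemma EV_isLocalized_iff (S : Submonoid R) (A : Type u) [CommRing A] [Algebra R A]
    [IsLocalization S A]
    (X : Type u) [AddCommGroup X] [Module R X] [Module A X] [IsScalarTower R A X] {i : ℕ}
    {N N' : Type u} [AddCommGroup N] [Module R N] [AddCommGroup N'] [Module R N'] [Module A N']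
    [IsScalarTower R A N'] (f : N →ₗ[R] N') [IsLocalizedModule S f] :
    EV R N X i ↔ EV A N' X i := by
  have : Module.Flat R A := IsLocalization.flat A S
  rw [EV_baseChange_iff A X i N]
  have e := (IsLocalizedModule.isBaseChange S A f).equiv
  exact ⟨fun h => h.congr e (.refl _ _), fun h => h.congr e.symm (.refl _ _)⟩

/-- `Ext` from `R/p` into an `R_p`-module is `Ext` over `R_p` from the residue field. -/
lemma EV_residue_iff (p : Ideal R) [p.IsPrime] (X : Type u) [AddCommGroup X] [Module R X]
    [Module (Localization.AtPrime p) X] [IsScalarTower R (Localization.AtPrime p) X] {i : ℕ} :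
    EV R (R ⧸ p) X i ↔
      EV (Localization.AtPrime p)
        (Localization.AtPrime p ⧸ IsLocalRing.maximalIdeal (Localization.AtPrime p)) X i := by
  let A := Localization.AtPrime p
  have : Module.Flat R A := IsLocalization.flat A p.primeCompl
  rw [EV_baseChange_iff A _ i (R ⧸ p)]
  have e1 := (Algebra.TensorProduct.quotIdealMapEquivTensorQuot A p).toLinearEquiv
  have e2 : (A ⧸ (p.map (algebraMap R A))) ≃ₗ[A] A ⧸ IsLocalRing.maximalIdeal A :=
    Submodule.quotEquivOfEq _ _ (Localization.AtPrime.map_eq_maximalIdeal)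
  have e := e1.symm.trans e2
  exact ⟨fun h => h.congr e (.refl _ _), fun h => h.congr e.symm (.refl _ _)⟩

/-- The Bass number vanishes iff `Ext_R(R/p, M_p)` does. -/
lemma bassNumber_eq_zero_iff (p : Ideal R) [p.IsPrime] (i : ℕ) (M : Type u) [AddCommGroup M]
    [Module R M] :
    bassNumber R p i M = 0 ↔ EV R (R ⧸ p) (LocalizedModule p.primeCompl M) i := by
  unfold bassNumber mLength
  rw [Order.height_eq_zero, isMin_iff_eq_bot, eq_comm, subsingleton_iff_bot_eq_top,
    Submodule.subsingleton_iff, extM_subsingleton_iff, EV_residue_iff]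
  rfl

end

section
variable {R : Type u} [CommRing R]
open IsLocalRing
open scoped Pointwise

/-! ### Local rings: climbing chains of primes -/

lemma exact_lsmul_mkQ (N : Type u) [AddCommGroup N] [Module R N] (x : R) :
    Function.Exact (LinearMap.lsmul R N x) (x • (⊤ : Submodule R N)).mkQ := by
  intro y
  rw [Submodule.mkQ_apply, Submodule.Quotient.mk_eq_zero, Submodule.mem_smul_pointwise_iff_exists]
  simp

/-- Devissage: vanishing on `R/q` for all primes `q ⊇ I` gives vanishing on all finitely generated
modules killed by `I`. -/
lemma EV.of_primes [IsNoetherianRing R] {D : Type u} [AddCommGroup D] [Module R D] {i : ℕ}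
    (I : Ideal R) (h : ∀ q : Ideal R, q.IsPrime → I ≤ q → EV R (R ⧸ q) D i)
    (N : Type u) [AddCommGroup N] [Module R N] [hN : Module.Finite R N]
    (hI : I ≤ Module.annihilator R N) : EV R N D i := by
  induction hN using IsNoetherianRing.induction_on_isQuotientEquivQuotientPrime R with
  | subsingleton N => exact EV.of_subsingleton_left i
  | quotient N p f =>
    refine (h p.1 p.2 ?_).congr f.symm (.refl _ _)
    rwa [f.annihilator_eq, Ideal.annihilator_quotient] at hI
  | exact N₁ N₂ N₃ f g hf hg hfg h₁ h₃ =>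
    exact EV.con₂ hf hg hfg (h₁ (hI.trans (f.annihilator_le_of_injective hf)))
      (h₃ (hI.trans (g.annihilator_le_of_surjective hg)))

variable [IsLocalRing R] [IsNoetherianRing R]
variable (D : Type u) [AddCommGroup D] [Module R D] [Module.Finite R D]

/-- Contrapositively: a nonvanishing `Ext^i(R/p, D)` with `p` not maximal forces
`Ext^{i+1}(R/q, D) ≠ 0` for some prime `q > p`. -/
lemma EV.of_bigger_primes (p : Ideal R) [hp : p.IsPrime] (hpm : p ≠ maximalIdeal R) {i : ℕ}
    (h : ∀ q : Ideal R, q.IsPrime → p < q → EV R (R ⧸ q) D (i + 1)) : EV R (R ⧸ p) D i := by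
  obtain ⟨x, hxm, hxp⟩ : ∃ x ∈ maximalIdeal R, x ∉ p := by
    by_contra! hcon
    exact hpm ((IsLocalRing.le_maximalIdeal hp.ne_top).antisymm hcon)
  refine EV.of_nakayama (x := x) (g := (x • (⊤ : Submodule R (R ⧸ p))).mkQ) ?_ ?_
    (Submodule.mkQ_surjective _) (exact_lsmul_mkQ _ x) ?_
  · rwa [IsLocalRing.jacobson_eq_maximalIdeal ⊥ bot_ne_top]
  · rw [← LinearMap.ker_eq_bot, LinearMap.ker_eq_bot']
    intro y hy
    obtain ⟨y, rfl⟩ := Ideal.Quotient.mk_surjective y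
    have : Ideal.Quotient.mk p (x * y) = 0 := hy
    rw [Ideal.Quotient.eq_zero_iff_mem] at this ⊢
    exact (hp.mem_or_mem this).resolve_left hxp
  · refine EV.of_primes (p ⊔ Ideal.span {x}) (fun q hq hle => h q hq ?_) _ ?_
    · refine lt_of_le_of_ne (le_sup_left.trans hle) ?_
      rintro rfl
      exact hxp (hle (Ideal.mem_sup_right (Ideal.mem_span_singleton_self x)))
    · rw [sup_le_iff, Ideal.span_singleton_le_iff_mem]
      constructor
      · intro r hr
        rw [Module.mem_annihilator]
        intro z
        obtain ⟨y, rfl⟩ := Submodule.mkQ_surjective _ z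
        obtain ⟨y, rfl⟩ := Ideal.Quotient.mk_surjective y
        rw [← map_smul]
        have : r • Ideal.Quotient.mk p y = 0 := by
          change Ideal.Quotient.mk p (r * y) = 0
          rw [Ideal.Quotient.eq_zero_iff_mem]
          exact p.mul_mem_right _ hr
        rw [this, map_zero]
      · rw [Module.mem_annihilator]
        intro z
        obtain ⟨y, rfl⟩ := Submodule.mkQ_surjective _ z
        rw [← map_smul]
        exact ((exact_lsmul_mkQ _ x) _).2 ⟨y, rfl⟩

/-- Vanishing of `Ext^i(k, D)` for `i ≥ n` propagates to all finitely generated modules. -/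
lemma EV.of_residue {n : ℕ} (h : ∀ i ≥ n, EV R (R ⧸ maximalIdeal R) D i)
    (N : Type u) [AddCommGroup N] [Module R N] [Module.Finite R N] : ∀ i ≥ n, EV R N D i := by
  have key : ∀ p : Ideal R, p.IsPrime → ∀ i ≥ n, EV R (R ⧸ p) D i := by
    intro p
    induction p using WellFoundedGT.induction with
    | ind p ih =>
      intro hp i hi
      by_cases hpm : p = maximalIdeal R
      · subst hpm; exact h i hi
      · exact EV.of_bigger_primes D p hpm fun q hq hpq => ih q hpq hq (i + 1) (by omega)
  intro i hi
  exact EV.of_primes ⊥ (fun q hq _ => key q hq i hi) N bot_le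

variable {D} in
/-- If `Ext(k, D)` lives in degree `n` only, then climbing from a nonvanishing `Ext^i(R/p, D)` to
the maximal ideal `m` gives `i ≤ n ≤ i + dim R/p`, and `i < n` unless `p = m`. -/
lemma not_EV_climb {n : ℕ} (hn : ∀ i ≠ n, EV R (R ⧸ maximalIdeal R) D i) :
    ∀ (p : PrimeSpectrum R) (i : ℕ), ¬ EV R (R ⧸ p.asIdeal) D i →
      i ≤ n ∧ (n : ℕ∞) ≤ i + Order.coheight p ∧ (p.asIdeal ≠ maximalIdeal R → i < n) := by
  have : WellFoundedGT (PrimeSpectrum R) :=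
    ⟨InvImage.wf PrimeSpectrum.asIdeal (wellFounded_gt (α := Ideal R))⟩
  intro p
  induction p using WellFoundedGT.induction with
  | ind p ih =>
    intro i hi
    by_cases hpm : p.asIdeal = maximalIdeal R
    · have : i = n := by
        by_contra hne
        exact hi (hpm ▸ hn i hne)
      subst this
      exact ⟨le_rfl, le_self_add, fun h => (h hpm).elim⟩
    · have := p.2
      have h1 : ∃ q : PrimeSpectrum R, p < q ∧ ¬ EV R (R ⧸ q.asIdeal) D (i + 1) := by
        by_contra! hcon
        exact hi (EV.of_bigger_primes D p.asIdeal hpm fun q hq hpq => hcon ⟨q, hq⟩ hpq)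
      obtain ⟨q, hpq, hq⟩ := h1
      obtain ⟨h1, h2, -⟩ := ih q hpq _ hq
      refine ⟨by omega, h2.trans ?_, fun _ => by omega⟩
      have := Order.coheight_add_one_le hpq
      calc ((i + 1 : ℕ) : ℕ∞) + Order.coheight q = i + (Order.coheight q + 1) := by
            push_cast; ring
        _ ≤ _ := by gcongr

/-- If a nonzero finitely generated module `D` has trivial higher self-extensions and finite
injective dimension, then `Ext(k, D)` is concentrated in one degree. -/
lemma exists_unique_degree [Nontrivial D] (hD : ∀ i, EV R D D (i + 1)) {b : ℕ}
    (hb : ∀ i ≥ b, EV R (R ⧸ maximalIdeal R) D i) :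
    ∃ n, ¬ EV R (R ⧸ maximalIdeal R) D n ∧ ∀ i ≠ n, EV R (R ⧸ maximalIdeal R) D i := by
  classical
  have hex : ∃ n, ∀ i ≥ n, EV R (R ⧸ maximalIdeal R) D i := ⟨b, hb⟩
  -- The threshold is nonzero, for otherwise `Hom(D, D) = 0`.
  obtain ⟨n, hn⟩ : ∃ n, Nat.find hex = n + 1 := by
    apply Nat.exists_eq_succ_of_ne_zero
    intro h0
    have h1 := EV.of_residue D (n := 0) (h0 ▸ Nat.find_spec hex) D 0 le_rfl
    obtain ⟨d, hd⟩ := exists_ne (0 : D)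
    exact hd (LinearMap.congr_fun ((EV_zero_iff D D).1 h1 LinearMap.id) d)
  have hgt : ∀ i ≥ n + 1, EV R (R ⧸ maximalIdeal R) D i := hn ▸ Nat.find_spec hex
  have hnn : ¬ EV R (R ⧸ maximalIdeal R) D n := by
    intro h
    have := Nat.find_min' hex (m := n) (by
      intro i hi
      rcases hi.eq_or_lt with rfl | hi
      · exact h
      · exact hgt i hi)
    omega
  refine ⟨n, hnn, ?_⟩
  -- Divide `D` by a sequence of length `n` to get `N` with `Ext^j(k, D) = 0` for `j < n`.
  have S : ∀ t ≤ n, ∃ (N : Type u) (_ : AddCommGroup N) (_ : Module R N), Module.Finite R N ∧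
      Nontrivial N ∧ (∀ i > t, EV R N D i) ∧
      (∀ i, (∀ j < i, EV R (R ⧸ maximalIdeal R) N j) →
        ∀ j < i + t, EV R (R ⧸ maximalIdeal R) D j) := by
    intro t
    induction t with
    | zero =>
      intro _
      refine ⟨D, inferInstance, inferInstance, inferInstance, inferInstance, ?_, fun i h => h⟩
      intro i hi
      obtain ⟨j, rfl⟩ := Nat.exists_eq_succ_of_ne_zero hi.ne'
      exact hD j
    | succ t ih =>
      intro ht
      obtain ⟨N, _, _, _, _, h1, h2⟩ := ih (by omega)
      have hreg : Subsingleton ((R ⧸ maximalIdeal R) →ₗ[R] N) := by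
        by_contra hns
        rw [not_subsingleton_iff_nontrivial] at hns
        obtain ⟨f, hf⟩ := exists_ne (0 : (R ⧸ maximalIdeal R) →ₗ[R] N)
        have hinj : Function.Injective f := by
          rw [← LinearMap.ker_eq_bot, LinearMap.ker_eq_bot']
          intro y hy
          by_contra hy0
          obtain ⟨y, rfl⟩ := Ideal.Quotient.mk_surjective y
          have hu : IsUnit y := by
            by_contra hu
            exact hy0 (Ideal.Quotient.eq_zero_iff_mem.2 ((mem_maximalIdeal y).2 hu))
          apply hf
          ext
          obtain ⟨u, rfl⟩ := hu
          have : (1 : R ⧸ maximalIdeal R) = (↑u⁻¹ : R) • Ideal.Quotient.mk _ (u : R) := by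
            change _ = Ideal.Quotient.mk _ ((↑u⁻¹ : R) * u)
            simp
          simp only [LinearMap.comp_apply, Submodule.mkQ_apply, LinearMap.zero_apply]
          change f (1 : R ⧸ maximalIdeal R) = 0
          rw [this, map_smul, hy, smul_zero]
        apply hnn
        refine EV.con₁ hinj (Submodule.mkQ_surjective (LinearMap.range f))
          (LinearMap.exact_map_mkQ_range f) (h1 n (by omega)) ?_
        exact EV.of_residue D hgt _ _ le_rfl
      obtain ⟨x, hx, hxr⟩ := IsSMulRegular.subsingleton_linearMap_iff.1 hreg
      rw [Ideal.annihilator_quotient] at hx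
      have hk : ∀ y : R ⧸ maximalIdeal R, x • y = 0 := by
        intro y
        obtain ⟨y, rfl⟩ := Ideal.Quotient.mk_surjective y
        exact Ideal.Quotient.eq_zero_iff_mem.2 (Ideal.mul_mem_right _ _ hx)
      refine ⟨N ⧸ (x • (⊤ : Submodule R N)), inferInstance, inferInstance, inferInstance,
        ?_, ?_, ?_⟩
      · rw [Submodule.Quotient.nontrivial_iff]
        intro htop
        have := Submodule.eq_bot_of_le_smul_of_le_jacobson_bot (Ideal.span {x})
          (⊤ : Submodule R N) (Module.Finite.fg_top) (by
            rw [Submodule.ideal_span_singleton_smul]; exact htop.ge) (by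
            rw [IsLocalRing.jacobson_eq_maximalIdeal ⊥ bot_ne_top]
            rwa [Ideal.span_singleton_le_iff_mem])
        exact bot_ne_top this.symm
      · intro i hi
        obtain ⟨j, rfl⟩ := Nat.exists_eq_succ_of_ne_zero (by omega : i ≠ 0)
        exact EV.con₃ (f := LinearMap.lsmul R N x) hxr (Submodule.mkQ_surjective _)
          (exact_lsmul_mkQ N x) (h1 j (by omega)) (h1 _ (by omega))
      · intro i hi j hj
        refine h2 (i + 1) ?_ j (by omega)
        intro l hl
        cases l with
        | zero => exact (EV_zero_iff _ _).2 fun f => Subsingleton.elim _ _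
        | succ l =>
          exact EV.of_quotSMulTop hk hxr (Submodule.mkQ_surjective _) (exact_lsmul_mkQ N x)
            (hi l (by omega))
  obtain ⟨N, _, _, _, _, h1, h2⟩ := S n le_rfl
  intro i hi
  rcases lt_or_gt_of_ne hi with hi | hi
  · exact h2 0 (by simp) i (by omega)
  · exact hgt i hi

end

section
variable {R : Type u} [CommRing R]
open IsLocalRing TensorProduct

/-! ### Localization, and the nonvanishing degree of `Ext(R/p, C_p)` -/

/-- `M_T` is its own localization at `S ≤ T`. -/
lemma isLocalizedModule_id_of_le {S T : Submonoid R} (hST : S ≤ T) (M : Type u) [AddCommGroup M]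
    [Module R M] :
    IsLocalizedModule S (LinearMap.id : LocalizedModule T M →ₗ[R] LocalizedModule T M) where
  map_units x := IsLocalizedModule.map_units (LocalizedModule.mkLinearMap T M) ⟨x, hST x.2⟩
  surj y := ⟨(y, 1), by simp⟩
  exists_of_eq h := ⟨1, by simpa using h⟩

lemma locTensorEquiv (S : Submonoid R) (M : Type u) [AddCommGroup M] [Module R M] :
    Nonempty (LocalizedModule S M ≃ₗ[R] Localization S ⊗[R] M) :=
  ⟨(LocalizedModule.equivTensorProduct S M).restrictScalars R⟩

lemma locTensorEquiv_of_le {S T : Submonoid R} (hST : S ≤ T) (M : Type u) [AddCommGroup M]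
    [Module R M] :
    Nonempty (Localization S ⊗[R] LocalizedModule T M ≃ₗ[R] LocalizedModule T M) := by
  have := isLocalizedModule_id_of_le hST M
  obtain ⟨e⟩ := locTensorEquiv S (LocalizedModule T M)
  exact ⟨e.symm ≪≫ₗ IsLocalizedModule.iso S
    (LinearMap.id : LocalizedModule T M →ₗ[R] LocalizedModule T M)⟩

/-- `(M_S) ⊗ R_T ≅ M_T` for `S ≤ T`. -/
lemma locLocEquiv {S T : Submonoid R} (hST : S ≤ T) (M : Type u) [AddCommGroup M]
    [Module R M] :
    Nonempty (LocalizedModule S M ⊗[R] Localization T ≃ₗ[R] LocalizedModule T M) := by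
  obtain ⟨e1⟩ := locTensorEquiv S M
  obtain ⟨e2⟩ := locTensorEquiv T M
  obtain ⟨e3⟩ := locTensorEquiv_of_le hST M
  exact ⟨TensorProduct.congr e1 (.refl R _) ≪≫ₗ TensorProduct.assoc R _ _ _ ≪≫ₗ
    TensorProduct.congr (.refl R _) (TensorProduct.comm R _ _ ≪≫ₗ e2.symm) ≪≫ₗ e3⟩

lemma EV.localize [IsNoetherianRing R] {S T : Submonoid R} (hST : S ≤ T) {M N : Type u}
    [AddCommGroup M] [Module R M] [AddCommGroup N] [Module R N] [Module.Finite R N] {i : ℕ}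
    (h : EV R N (LocalizedModule S M) i) : EV R N (LocalizedModule T M) i := by
  obtain ⟨e⟩ := locLocEquiv hST M
  have : Module.Flat R (Localization T) := IsLocalization.flat _ T
  exact (h.tensor_flat _ (Localization T) i N).congr (.refl _ _) e

lemma EV.localize' [IsNoetherianRing R] (T : Submonoid R) {M N : Type u}
    [AddCommGroup M] [Module R M] [AddCommGroup N] [Module R N] [Module.Finite R N] {i : ℕ}
    (h : EV R N M i) : EV R N (LocalizedModule T M) i := by
  obtain ⟨e⟩ := locTensorEquiv T M
  have : Module.Flat R (Localization T) := IsLocalization.flat _ T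
  exact (h.tensor_flat _ (Localization T) i N).congr (.refl _ _)
    (TensorProduct.comm R _ _ ≪≫ₗ e.symm)

lemma primeCompl_le_of_le {p q : Ideal R} [p.IsPrime] [q.IsPrime] (h : q ≤ p) :
    p.primeCompl ≤ q.primeCompl := fun _ hx hq => hx (h hq)

section T4
variable [IsNoetherianRing R] (C : Type u) [AddCommGroup C] [Module R C] [Module.Finite R C]

lemma EV.self_localize (S : Submonoid R) {i : ℕ} (h : EV R C C i) :
    EV (Localization S) (LocalizedModule S C) (LocalizedModule S C) i :=
  (EV_isLocalized_iff S (Localization S) _ (LocalizedModule.mkLinearMap S C)).1 (h.localize' S)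

omit [IsNoetherianRing R] in
lemma nontrivial_localizedModule
    (h0 : Function.Injective (fun r : R => r • (LinearMap.id : C →ₗ[R] C)))
    (p : Ideal R) [hp : p.IsPrime] : Nontrivial (LocalizedModule p.primeCompl C) := by
  have := (Module.mem_support_iff_of_finite (R := R) (M := C) (p := ⟨p, hp⟩)).2 (by
    intro r hr
    have : r = 0 := by
      apply h0
      ext c
      simpa using Module.mem_annihilator.1 hr c
    rw [this]; exact p.zero_mem)
  exact Module.mem_support_iff.1 this

/-- The local degree: there is exactly one `n` with `Ext^n(R/p, C_p) ≠ 0`. -/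
lemma exists_local_degree
    (h0 : Function.Injective (fun r : R => r • (LinearMap.id : C →ₗ[R] C)))
    (hE : ∀ i, EV R C C (i + 1))
    (H : ∀ m : Ideal R, ∀ _ : m.IsMaximal, ∃ b : ℕ, ∀ i ≥ b,
      EV R (R ⧸ m) (LocalizedModule m.primeCompl C) i)
    (p : Ideal R) [p.IsPrime] :
    ∃ n : ℕ, ¬ EV R (R ⧸ p) (LocalizedModule p.primeCompl C) n ∧
      ∀ i ≠ n, EV R (R ⧸ p) (LocalizedModule p.primeCompl C) i := by
  obtain ⟨m, hm, hpm⟩ := p.exists_le_maximal (Ideal.IsPrime.ne_top inferInstance)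
  obtain ⟨b, hb⟩ := H m hm
  have h1 : ∀ i ≥ b, EV R (R ⧸ p) (LocalizedModule p.primeCompl C) i := by
    intro i hi
    refine EV.localize (primeCompl_le_of_le hpm) ?_
    have hfl : Module.Flat R (Localization.AtPrime m) := IsLocalization.flat _ m.primeCompl
    rw [EV_baseChange_iff (Localization.AtPrime m)]
    exact EV.of_residue _ (fun i hi => (EV_residue_iff m _).1 (hb i hi)) _ i hi
  have := nontrivial_localizedModule C h0 p
  simp only [EV_residue_iff]
  exact exists_unique_degree (R := Localization.AtPrime p) (LocalizedModule p.primeCompl C)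
    (fun i => EV.self_localize C p.primeCompl (hE i))
    (fun i hi => (EV_residue_iff p _).1 (h1 i hi))

/-- If `C` is locally of finite injective dimension, then `Ext^i(R/p, C_p) ≠ 0` only for `i = ht p`.
The unique nonvanishing degree is a strictly monotone function of `p`, hence at least the height;
climbing from an associated prime of `C_p`, where the degree is `0`, bounds it by `dim R_p`. -/
theorem local_degree_eq_height
    (h0 : Function.Injective (fun r : R => r • (LinearMap.id : C →ₗ[R] C)))
    (hE : ∀ i, EV R C C (i + 1))
    (H : ∀ m : Ideal R, ∀ _ : m.IsMaximal, ∃ b : ℕ, ∀ i ≥ b,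
      EV R (R ⧸ m) (LocalizedModule m.primeCompl C) i)
    (p : Ideal R) [hp : p.IsPrime] (i : ℕ) (hi : (i : ℕ∞) ≠ primeHeight R p) :
      EV R (R ⧸ p) (LocalizedModule p.primeCompl C) i := by
  have key := exists_local_degree C h0 hE H
  choose n hn hn' using key
  suffices hs : ∀ (p : Ideal R) [hp : p.IsPrime], primeHeight R p = n p by
    refine hn' p i ?_
    rintro rfl
    exact hi (hs p).symm
  clear hi i hp p
  intro p hp
  let A := Localization.AtPrime p
  let D := LocalizedModule p.primeCompl C
  have hcl : ∀ i ≠ n p, EV A (A ⧸ maximalIdeal A) D i := fun i hi =>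
    (EV_residue_iff p _).1 (hn' p i hi)
  apply le_antisymm
  · -- heights are bounded by any strictly monotone function
    let f : PrimeSpectrum R → ℕ := fun q => @n q.asIdeal q.2
    have hf : StrictMono f := by
      intro q p' hlt
      have := q.2
      have := p'.2
      let A := Localization.AtPrime p'.asIdeal
      have hdisj : Disjoint (p'.asIdeal.primeCompl : Set R) q.asIdeal := by
        rw [Set.disjoint_left]
        exact fun x hx hq => hx (hlt.le hq)
      have hprime := IsLocalization.isPrime_of_isPrime_disjoint p'.asIdeal.primeCompl A q.asIdeal
        q.2 hdisj
      have hund := IsLocalization.under_map_of_isPrime_disjoint p'.asIdeal.primeCompl A q.2 hdisj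
      have hne : ¬ EV A (A ⧸ q.asIdeal.map (algebraMap R A))
          (LocalizedModule p'.asIdeal.primeCompl C) (n q.asIdeal) := by
        intro h
        apply hn q.asIdeal
        refine EV.localize (primeCompl_le_of_le hlt.le) ?_
        have : Module.Flat R A := IsLocalization.flat A p'.asIdeal.primeCompl
        rw [EV_baseChange_iff A]
        exact h.congr (Algebra.TensorProduct.quotIdealMapEquivTensorQuot A q.asIdeal).toLinearEquiv
          (.refl _ _)
      refine (not_EV_climb (fun i hi => (EV_residue_iff p'.asIdeal _).1 (hn' p'.asIdeal i hi))
        ⟨_, hprime⟩ _ hne).2.2 ?_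
      intro heq
      change q.asIdeal.map (algebraMap R A) = _ at heq
      rw [heq, Localization.AtPrime.under_maximalIdeal] at hund
      exact hlt.ne (PrimeSpectrum.ext hund.symm)
    have := Order.height_le_height_apply_of_strictMono f hf ⟨p, hp⟩
    simpa [primeHeight, f] using this
  · have := nontrivial_localizedModule C h0 p
    obtain ⟨P, hP⟩ := associatedPrimes.nonempty A D
    have hP' := isAssociatedPrime_iff_exists_injective_linearMap P D |>.1 hP
    obtain ⟨hPp, g, hg⟩ := hP'
    have hne : ¬ EV A (A ⧸ P) D 0 := by
      intro h
      rw [EV_zero_iff] at h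
      have h1 : (1 : A ⧸ P) = 0 := hg (by rw [h g]; rfl)
      exact hPp.ne_top ((Ideal.eq_top_iff_one P).2 (Ideal.Quotient.eq_zero_iff_mem.1 h1))
    have h1 := (not_EV_climb hcl ⟨P, hPp⟩ 0 hne).2.1
    have h2 : ringKrullDim A = p.height := IsLocalization.AtPrime.ringKrullDim_eq_height p A
    have h3 := Order.coheight_le_krullDim (⟨P, hPp⟩ : PrimeSpectrum A)
    have h4 : p.height = primeHeight R p := PrimeSpectrum.height_eq_orderHeight ⟨p, hp⟩
    rw [← h4, ← WithBot.coe_le_coe, ← h2]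
    refine le_trans ?_ h3
    rw [WithBot.coe_le_coe]
    simpa using h1

/-- Above the height of `p`, all Ext modules into `C_p` vanish. -/
lemma EV_of_gt_height
    (h : ∀ (p : Ideal R) [p.IsPrime] (i : ℕ) (_ : (i : ℕ∞) ≠ primeHeight R p),
      EV R (R ⧸ p) (LocalizedModule p.primeCompl C) i)
    (p : Ideal R) [p.IsPrime] (N : Type u) [AddCommGroup N] [Module R N] [Module.Finite R N]
    (i : ℕ) (hi : primeHeight R p < i) : EV R N (LocalizedModule p.primeCompl C) i := by
  have hfl : Module.Flat R (Localization.AtPrime p) := IsLocalization.flat _ p.primeCompl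
  rw [EV_baseChange_iff (Localization.AtPrime p)]
  refine EV.of_residue _ (n := i) (fun j hj => (EV_residue_iff p _).1 (h p j ?_)) _ i le_rfl
  exact (hi.trans_le (by exact_mod_cast hj)).ne'

end T4
end

section
variable {R : Type u} [CommRing R]
open TensorProduct

/-! ### Vanishing of Tor, and modules of the form `Hom(C, E)` with `E` injective -/

/-- The vanishing of `Tor_{j+1}(N, F)` for a finitely generated module `N`, phrased without derived
functors: by dimension shifting along presentations `0 → K → Rⁿ → N → 0` one reduces to `j = 0`,
where it says that `K ⊗ F → Rⁿ ⊗ F` is injective. All finite presentations are quantified over, so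
that no independence of the choice has to be shown. -/
def TorV (R : Type u) [CommRing R] (F : Type u) [AddCommGroup F] [Module R F] :
    ℕ → ∀ (N : Type u) [AddCommGroup N] [Module R N], Prop
  | 0, N, _, _ => ∀ (n : ℕ) (g : (Fin n → R) →ₗ[R] N), Function.Surjective g →
      Function.Injective ((LinearMap.ker g).subtype.rTensor F)
  | j + 1, N, _, _ => ∀ (n : ℕ) (g : (Fin n → R) →ₗ[R] N), Function.Surjective g →
      TorV R F j (LinearMap.ker g)

section snake
variable {K P N : Type u} [AddCommGroup K] [Module R K] [AddCommGroup P] [Module R P]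
  [AddCommGroup N] [Module R N] {a : K →ₗ[R] P} {b : P →ₗ[R] N}
  {F' F F'' : Type u} [AddCommGroup F'] [Module R F'] [AddCommGroup F] [Module R F]
  [AddCommGroup F''] [Module R F''] {i : F' →ₗ[R] F} {q : F →ₗ[R] F''}

lemma tensor_swap {A B X Y : Type u} [AddCommGroup A] [Module R A] [AddCommGroup B] [Module R B]
    [AddCommGroup X] [Module R X] [AddCommGroup Y] [Module R Y] (f : A →ₗ[R] B) (g : X →ₗ[R] Y)
    (z : A ⊗[R] X) : f.rTensor Y (g.lTensor A z) = g.lTensor B (f.rTensor X z) := by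
  rw [← LinearMap.comp_apply, ← LinearMap.comp_apply, LinearMap.rTensor_comp_lTensor,
    LinearMap.lTensor_comp_rTensor]

/-- Let `K → P → N → 0` be exact with `P` flat and `K ⊗ F'' → P ⊗ F''` injective. Then
`N ⊗ -` preserves injectivity of `F' → F` when `0 → F' → F → F'' → 0` is exact. -/
lemma lTensor_injective_of_quotient [Module.Flat R P] (hb : Function.Surjective b)
    (hab : Function.Exact a b) (hi : Function.Injective i) (hq : Function.Surjective q)
    (hiq : Function.Exact i q) (h : Function.Injective (a.rTensor F'')) :
    Function.Injective (i.lTensor N) := by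
  rw [injective_iff_map_eq_zero]
  intro z hz
  obtain ⟨y, rfl⟩ := LinearMap.rTensor_surjective F' hb z
  rw [← tensor_swap] at hz
  obtain ⟨x, hx⟩ := (rTensor_exact F hab hb _).1 hz
  have h1 : q.lTensor K x = 0 := by
    apply h
    rw [tensor_swap, hx, map_zero, ← LinearMap.comp_apply, ← LinearMap.lTensor_comp,
      hiq.linearMap_comp_eq_zero, LinearMap.lTensor_zero, LinearMap.zero_apply]
  obtain ⟨w, rfl⟩ := (lTensor_exact K hiq hq _).1 h1
  rw [tensor_swap] at hx
  rw [← Module.Flat.lTensor_preserves_injective_linearMap (M := P) i hi hx,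
    ← LinearMap.comp_apply, ← LinearMap.rTensor_comp, hab.linearMap_comp_eq_zero,
    LinearMap.rTensor_zero, LinearMap.zero_apply]

/-- `Tor_{j+1}(N, F')` vanishes if `Tor_{j+1}(N, F)` and `Tor_{j+2}(N, F'')` do. -/
lemma TorV.step [IsNoetherianRing R] (hi : Function.Injective i) (hq : Function.Surjective q)
    (hiq : Function.Exact i q) : ∀ (j : ℕ) (N : Type u) [AddCommGroup N] [Module R N],
      TorV R F j N → TorV R F'' (j + 1) N → TorV R F' j N := by
  intro j
  induction j with
  | zero =>
    intro N _ _ h1 h2 n g hg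
    obtain ⟨m, g', hg'⟩ := Module.Finite.exists_fin' R (LinearMap.ker g)
    have h3 := lTensor_injective_of_quotient (a := (LinearMap.ker g').subtype) hg'
      (exact_subtype_ker g') hi hq hiq (h2 n g hg m g' hg')
    have h4 : Function.Injective
        (i.lTensor (Fin n → R) ∘ (LinearMap.ker g).subtype.rTensor F') := by
      have := (h1 n g hg).comp h3
      convert this using 1
      ext z
      exact (tensor_swap _ _ _).symm
    exact h4.of_comp
  | succ j ih =>
    intro N _ _ h1 h2 n g hg
    exact ih _ (h1 n g hg) (h2 n g hg)

end snake

section theta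
variable (C E : Type u) [AddCommGroup C] [Module R C] [AddCommGroup E] [Module R E]

variable (R) in
/-- The natural map `N ⊗ Hom(C, E) → Hom(Hom(N, C), E)`. -/
def thetaMap (N : Type u) [AddCommGroup N] [Module R N] :
    N ⊗[R] (C →ₗ[R] E) →ₗ[R] ((N →ₗ[R] C) →ₗ[R] E) :=
  TensorProduct.lift (LinearMap.mk₂ R (fun x f => f ∘ₗ LinearMap.applyₗ x)
    (fun x y f => by ext; simp) (fun r x f => by ext; simp)
    (fun x f g => by ext; simp) (fun r x f => by ext; simp))

@[simp] lemma thetaMap_tmul (N : Type u) [AddCommGroup N] [Module R N] (x : N) (f : C →ₗ[R] E)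
    (h : N →ₗ[R] C) : thetaMap R C E N (x ⊗ₜ f) h = f (h x) := rfl

lemma thetaMap_natural {X Y : Type u} [AddCommGroup X] [Module R X] [AddCommGroup Y] [Module R Y]
    (b : X →ₗ[R] Y) (z : X ⊗[R] (C →ₗ[R] E)) :
    thetaMap R C E Y (b.rTensor _ z) = (thetaMap R C E X z) ∘ₗ LinearMap.lcomp R C b := by
  induction z with
  | zero => simp
  | tmul x y => ext w; simp
  | add x y hx hy => simp [hx, hy, LinearMap.add_comp]

lemma thetaMap_bijective_free (n : ℕ) : Function.Bijective (thetaMap R C E (Fin n → R)) := by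
  classical
  have hsum : ∀ z : (Fin n → R) ⊗[R] (C →ₗ[R] E), ∃ f : Fin n → (C →ₗ[R] E),
      z = ∑ k, (Pi.single k 1 : Fin n → R) ⊗ₜ f k := by
    intro z
    induction z with
    | zero => exact ⟨0, by simp⟩
    | tmul x y =>
      refine ⟨fun k => x k • y, ?_⟩
      conv_lhs => rw [← Finset.univ_sum_single x, TensorProduct.sum_tmul]
      refine Finset.sum_congr rfl fun k _ => ?_
      rw [← TensorProduct.smul_tmul, ← Pi.single_smul, smul_eq_mul, mul_one]
    | add x y hx hy =>
      obtain ⟨f, rfl⟩ := hx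
      obtain ⟨g, rfl⟩ := hy
      exact ⟨f + g, by simp [TensorProduct.tmul_add, Finset.sum_add_distrib]⟩
  constructor
  · rw [injective_iff_map_eq_zero]
    intro z hz
    obtain ⟨f, rfl⟩ := hsum z
    refine Finset.sum_eq_zero fun k _ => ?_
    suffices f k = 0 by rw [this, TensorProduct.tmul_zero]
    ext c
    have := LinearMap.congr_fun hz ((LinearMap.proj k).smulRight c)
    simp only [map_sum, LinearMap.sum_apply, thetaMap_tmul, LinearMap.zero_apply,
      LinearMap.smulRight_apply, LinearMap.proj_apply] at this
    rw [Finset.sum_eq_single k] at this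
    · simpa using this
    · intro j _ hj; simp [Pi.single_eq_of_ne hj.symm]
    · simp
  · intro φ
    let s : Fin n → C →ₗ[R] ((Fin n → R) →ₗ[R] C) := fun k =>
      LinearMap.smulRightₗ (LinearMap.proj k)
    refine ⟨∑ k, (Pi.single k 1 : Fin n → R) ⊗ₜ (φ ∘ₗ s k), ?_⟩
    ext h
    simp only [map_sum, LinearMap.sum_apply, thetaMap_tmul, LinearMap.comp_apply]
    rw [← map_sum]
    congr 1
    ext k
    simp [s, Pi.single_apply]

variable {E} in
/-- Maps into an injective module factor through any map with small enough kernel. -/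
lemma Module.Injective.exists_factor [Module.Injective R E] {X Y : Type u} [AddCommGroup X]
    [Module R X] [AddCommGroup Y] [Module R Y] (f : X →ₗ[R] Y) (φ : X →ₗ[R] E)
    (h : LinearMap.ker f ≤ LinearMap.ker φ) : ∃ ψ : Y →ₗ[R] E, ψ ∘ₗ f = φ := by
  obtain ⟨ψ, hψ⟩ := Module.Injective.out (Q := E) ((LinearMap.ker f).liftQ f le_rfl)
    (LinearMap.ker_eq_bot.1 (Submodule.ker_liftQ_eq_bot _ _ _ le_rfl))
    ((LinearMap.ker f).liftQ φ h)
  exact ⟨ψ, by ext x; simpa using hψ ((LinearMap.ker f).mkQ x)⟩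

/-- For finitely generated `N` and injective `E`, both sides of `thetaMap` are right exact in `N`,
which reduces bijectivity to the case of free modules. -/
lemma thetaMap_bijective [IsNoetherianRing R] [Module.Injective R E] (N : Type u) [AddCommGroup N]
    [Module R N] [Module.Finite R N] : Function.Bijective (thetaMap R C E N) := by
  obtain ⟨n, p, hp⟩ := Module.Finite.exists_fin' R N
  obtain ⟨m, q, hq⟩ := Module.Finite.exists_fin' R (LinearMap.ker p)
  let a : (Fin m → R) →ₗ[R] (Fin n → R) := (LinearMap.ker p).subtype ∘ₗ q
  have hpa : p ∘ₗ a = 0 := by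
    ext x; simp [a]
  have hkp : LinearMap.ker (LinearMap.lcomp R C p) ≤ ⊥ := by
    intro φ hφ
    rw [Submodule.mem_bot]
    ext x
    obtain ⟨y, rfl⟩ := hp x
    exact LinearMap.congr_fun hφ y
  constructor
  · rw [injective_iff_map_eq_zero]
    intro z hz
    obtain ⟨y, rfl⟩ := LinearMap.rTensor_surjective _ hp z
    rw [thetaMap_natural] at hz
    obtain ⟨ψ, hψ⟩ := Module.Injective.exists_factor (LinearMap.lcomp R C a)
      (thetaMap R C E _ y) (by
        intro h hh
        have h1 : LinearMap.ker p ≤ LinearMap.ker h := by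
          intro x hx
          obtain ⟨w, hw⟩ := hq ⟨x, hx⟩
          have := LinearMap.congr_fun hh w
          simpa [a, hw] using this
        obtain ⟨ψ, rfl⟩ : ∃ ψ : N →ₗ[R] C, ψ ∘ₗ p = h := by
          refine ⟨(LinearMap.ker p).liftQ h h1 ∘ₗ
            (p.quotKerEquivOfSurjective hp).symm.toLinearMap, ?_⟩
          ext x
          have : (p.quotKerEquivOfSurjective hp).symm (p (Pi.single x 1)) =
              (LinearMap.ker p).mkQ (Pi.single x 1) := by
            rw [LinearEquiv.symm_apply_eq]; rfl
          simp [this]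
        exact LinearMap.congr_fun hz ψ)
    obtain ⟨w, rfl⟩ := (thetaMap_bijective_free C E m).2 ψ
    rw [← thetaMap_natural] at hψ
    rw [← (thetaMap_bijective_free C E n).1 hψ, ← LinearMap.comp_apply, ← LinearMap.rTensor_comp,
      hpa, LinearMap.rTensor_zero, LinearMap.zero_apply]
  · intro φ
    obtain ⟨ψ, hψ⟩ := Module.Injective.exists_factor (LinearMap.lcomp R C p) φ
      (hkp.trans bot_le)
    obtain ⟨y, rfl⟩ := (thetaMap_bijective_free C E n).2 ψ
    exact ⟨p.rTensor _ y, by rw [thetaMap_natural, hψ]⟩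

variable (R) in
/-- The evaluation map `C ⊗ Hom(C, M) → M`. -/
def evMap (M : Type u) [AddCommGroup M] [Module R M] : C ⊗[R] (C →ₗ[R] M) →ₗ[R] M :=
  TensorProduct.lift LinearMap.applyₗ

@[simp] lemma evMap_tmul (M : Type u) [AddCommGroup M] [Module R M] (c : C) (f : C →ₗ[R] M) :
    evMap R C M (c ⊗ₜ f) = f c := rfl

lemma evMap_natural {X Y : Type u} [AddCommGroup X] [Module R X] [AddCommGroup Y] [Module R Y]
    (b : X →ₗ[R] Y) (z : C ⊗[R] (C →ₗ[R] X)) :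
    evMap R C Y ((LinearMap.llcomp R C X Y b).lTensor C z) = b (evMap R C X z) := by
  induction z with
  | zero => simp
  | tmul x y => simp
  | add x y hx hy => simp [hx, hy]

/-- If `R ≅ Hom(C, C)`, then injective modules satisfy `C ⊗ Hom(C, E) ≅ E`. -/
lemma evMap_bijective_of_injective [IsNoetherianRing R] [Module.Injective R E] [Module.Finite R C]
    (hC : Function.Bijective (fun r : R => r • (LinearMap.id : C →ₗ[R] C))) :
    Function.Bijective (evMap R C E) := by
  have h1 : (evMap R C E : _ → E) = (fun φ : (C →ₗ[R] C) →ₗ[R] E => φ LinearMap.id) ∘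
      thetaMap R C E C := by
    ext z
    induction z with
    | zero => simp
    | tmul x y => simp
    | add x y hx hy => simp_all
  rw [h1]
  refine Function.Bijective.comp ⟨?_, ?_⟩ (thetaMap_bijective C E C)
  · intro φ ψ h
    apply LinearMap.ext
    intro f
    obtain ⟨r, rfl⟩ := hC.2 f
    simp only [map_smul]
    exact congrArg (r • ·) h
  · intro e
    let eqv : R ≃ₗ[R] (C →ₗ[R] C) := LinearEquiv.ofBijective
      (LinearMap.toSpanSingleton R _ LinearMap.id) hC
    refine ⟨LinearMap.toSpanSingleton R E e ∘ₗ eqv.symm.toLinearMap, ?_⟩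
    have : eqv.symm LinearMap.id = 1 := by
      rw [LinearEquiv.symm_apply_eq]
      exact (one_smul R _).symm
    simp [this]

end theta

lemma exists_injective_embedding (L : Type u) [AddCommGroup L] [Module R L] :
    ∃ (E : Type u) (_ : AddCommGroup E) (_ : Module R E)
      (_ : Module.Injective R E) (j : L →ₗ[R] E), Function.Injective j := by
  let I := (EnoughInjectives.presentation (ModuleCat.of R L)).some
  have := I.injective
  have := I.mono
  exact ⟨I.J, inferInstance, inferInstance, Module.injective_module_of_injective_object R _,
    I.f.hom, (ModuleCat.mono_iff_injective _).1 inferInstance⟩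

/-- A finitely generated faithful module over a Noetherian ring tensors nonzero modules to nonzero
modules. -/
lemma subsingleton_of_tensor [IsNoetherianRing R] (C : Type u) [AddCommGroup C] [Module R C]
    [Module.Finite R C] (h0 : Function.Injective (fun r : R => r • (LinearMap.id : C →ₗ[R] C)))
    (L : Type u) [AddCommGroup L] [Module R L] [Subsingleton (C ⊗[R] L)] : Subsingleton L := by
  obtain ⟨E, _, _, hE, j, hj⟩ := exists_injective_embedding (R := R) L
  -- `Hom(C, Hom(L, E)) = 0`, so `Hom(L, E)` has no associated primes.
  have h1 : ∀ f : C →ₗ[R] (L →ₗ[R] E), f = 0 := by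
    intro f
    ext c l
    have := congrArg (TensorProduct.lift f) (Subsingleton.elim (c ⊗ₜ[R] l) 0)
    simpa using this
  have h2 : Subsingleton (L →ₗ[R] E) := by
    by_contra hne
    rw [not_subsingleton_iff_nontrivial] at hne
    obtain ⟨p, hp⟩ := associatedPrimes.nonempty R (L →ₗ[R] E)
    obtain ⟨hpp, g, hg⟩ := isAssociatedPrime_iff_exists_injective_linearMap p _ |>.1 hp
    have h3 : Subsingleton (C →ₗ[R] (R ⧸ p)) := by
      refine ⟨fun a b => ?_⟩
      have : g ∘ₗ a = g ∘ₗ b := by rw [h1 (g ∘ₗ a), h1 (g ∘ₗ b)]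
      ext c
      exact hg (LinearMap.congr_fun this c)
    obtain ⟨r, hr, hreg⟩ := IsSMulRegular.subsingleton_linearMap_iff.1 h3
    have hr0 : r = 0 := h0 (by ext c; simpa using Module.mem_annihilator.1 hr c)
    have h4 : (1 : R ⧸ p) = 0 := hreg (by simp [hr0])
    exact hpp.ne_top ((Ideal.eq_top_iff_one p).2 (Ideal.Quotient.eq_zero_iff_mem.1 h4))
  refine ⟨fun a b => hj ?_⟩
  rw [Subsingleton.elim j 0]; rfl

end

section
variable {R : Type u} [CommRing R]
open TensorProduct

/-! ### Injective hulls and associated primes -/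

/-- Every module has an injective hull: it embeds in an injective module every nonzero element of
which has a nonzero multiple in the submodule. -/
lemma exists_injective_hull (M : Type u) [AddCommGroup M] [Module R M] :
    ∃ (E : Type u) (_ : AddCommGroup E) (_ : Module R E) (_ : Module.Injective R E)
      (ι : M →ₗ[R] E), Function.Injective ι ∧
        ∀ e : E, e ≠ 0 → ∃ (r : R) (m : M), r • e = ι m ∧ m ≠ 0 := by
  obtain ⟨I, _, _, hI, i, hi⟩ := exists_injective_embedding (R := R) M
  -- `S` is a maximal essential extension of `M` inside the injective module `I`.
  obtain ⟨S, hMS, hS⟩ := zorn_le_nonempty₀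
    {S : Submodule R I | ∀ e ∈ S, e ≠ 0 → ∃ (r : R) (m : M), r • e = i m ∧ m ≠ 0}
    (by
      intro c hc hchain y hy
      refine ⟨sSup c, ?_, fun z hz => le_sSup hz⟩
      intro e he he0
      obtain ⟨T, hT, heT⟩ := (Submodule.mem_sSup_of_directed ⟨y, hy⟩ hchain.directedOn).1 he
      exact hc hT e heT he0)
    (LinearMap.range i) (by
      rintro _ ⟨m, rfl⟩ he0
      exact ⟨1, m, one_smul _ _, by rintro rfl; exact he0 (map_zero i)⟩)
  -- `T` is a maximal complement of `S`.
  obtain ⟨T, -, hT⟩ := zorn_le_nonempty₀ {T : Submodule R I | Disjoint S T}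
    (by
      intro c hc hchain y hy
      refine ⟨sSup c, ?_, fun z hz => le_sSup hz⟩
      rw [Set.mem_ofPred_eq, Submodule.disjoint_def]
      intro e heS he
      obtain ⟨T, hT, heT⟩ := (Submodule.mem_sSup_of_directed ⟨y, hy⟩ hchain.directedOn).1 he
      exact Submodule.disjoint_def.1 (hc hT) e heS heT)
    ⊥ disjoint_bot_right
  have hST : Disjoint S T := hT.prop
  -- `S → I/T` is essential, hence so is the image of `I/T` in `I`, which then equals `S`.
  have hess : ∀ e : I, e ∉ T → ∃ (r : R) (s : I), s ∈ S ∧ s ≠ 0 ∧ ∃ t ∈ T, r • e = s + t := by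
    intro e he
    have hnd : ¬ Disjoint S (T ⊔ Submodule.span R {e}) := by
      intro hd
      exact he (hT.le_of_ge hd le_sup_left
        (le_sup_right (a := T) (Submodule.mem_span_singleton_self e)))
    rw [Submodule.disjoint_def] at hnd
    push Not at hnd
    obtain ⟨s, hsS, hs, hs0⟩ := hnd
    obtain ⟨t, ht, w, hw, rfl⟩ := Submodule.mem_sup.1 hs
    obtain ⟨r, rfl⟩ := Submodule.mem_span_singleton.1 hw
    exact ⟨r, t + r • e, hsS, hs0, -t, T.neg_mem ht, by abel⟩
  obtain ⟨k, hk⟩ := Module.Injective.exists_factor (E := I) (T.mkQ ∘ₗ S.subtype) S.subtype (by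
    intro s hs
    have h1 : (s : I) ∈ T := by simpa using hs
    have : (s : I) = 0 := Submodule.disjoint_def.1 hST _ s.2 h1
    simpa using this)
  have hkS : ∀ s ∈ S, k (T.mkQ s) = s := fun s hs => LinearMap.congr_fun hk ⟨s, hs⟩
  have hrange : ∀ x, k x ∈ S := by
    have hle : S ≤ LinearMap.range k := fun s hs => ⟨_, hkS s hs⟩
    have : LinearMap.range k ≤ S := by
      refine hS.le_of_ge ?_ hle
      rintro _ ⟨x, rfl⟩ hx0
      obtain ⟨e, rfl⟩ := T.mkQ_surjective x
      have heT : e ∉ T := by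
        intro he
        apply hx0
        rw [show T.mkQ e = 0 by simpa using he, map_zero]
      obtain ⟨r, s, hsS, hs0, t, ht, hr⟩ := hess e heT
      obtain ⟨r', m, hm, hm0⟩ := hS.prop s hsS hs0
      refine ⟨r' * r, m, ?_, hm0⟩
      rw [mul_smul, ← map_smul k r, ← map_smul T.mkQ r, hr, map_add, map_add,
        show T.mkQ t = 0 by simpa using ht, map_zero,
        add_zero, hkS s hsS, hm]
    exact fun x => this ⟨x, rfl⟩
  refine ⟨S, inferInstance, inferInstance, ⟨?_⟩, i.codRestrict S (fun m => hMS ⟨m, rfl⟩), ?_, ?_⟩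
  · intro X Y _ _ _ _ f hf g
    obtain ⟨h, hh⟩ := hI.out f hf (S.subtype ∘ₗ g)
    refine ⟨(k ∘ₗ T.mkQ ∘ₗ h).codRestrict S (fun x => hrange _), fun x => ?_⟩
    apply Subtype.ext
    change k (T.mkQ (h (f x))) = _
    rw [hh x]
    exact hkS _ (g x).2
  · intro a b hab
    exact hi (congrArg Subtype.val hab)
  · intro e he
    obtain ⟨r, m, h1, h2⟩ := hS.prop e e.2 (by simpa using he)
    exact ⟨r, m, Subtype.ext h1, h2⟩

lemma ker_one_mem_iff {M : Type u} [AddCommGroup M] [Module R M] {p : Ideal R}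
    {g : (R ⧸ p) →ₗ[R] M} (hg : Function.Injective g) (a : R) : a • g 1 = 0 ↔ a ∈ p := by
  rw [← map_smul, map_eq_zero_iff g hg, ← Ideal.Quotient.eq_zero_iff_mem, Algebra.smul_def, mul_one]
  rfl

/-- `Hom(R/p, M_p)` is nonzero when `R/p` embeds in `M`. -/
lemma not_EV_zero_of_injective {M : Type u} [AddCommGroup M] [Module R M] (p : Ideal R)
    [hp : p.IsPrime] {g : (R ⧸ p) →ₗ[R] M} (hg : Function.Injective g) :
    ¬ EV R (R ⧸ p) (LocalizedModule p.primeCompl M) 0 := by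
  rw [EV_zero_iff]
  intro h
  have h1 := LinearMap.congr_fun (h (LocalizedModule.mkLinearMap p.primeCompl M ∘ₗ g)) 1
  obtain ⟨s, hs⟩ := (IsLocalizedModule.eq_zero_iff p.primeCompl
    (LocalizedModule.mkLinearMap p.primeCompl M)).1 h1
  exact s.2 ((ker_one_mem_iff hg _).1 hs)

/-- If `Ext^{j+1}(N, C_p) = 0` for all associated primes `p` of the injective module `E`, then
`Tor_{j+1}(N, Hom(C, E)) = 0`, since this module is `Hom(Ext^{j+1}(N, C), E)`. -/
lemma TorV.of_injective [IsNoetherianRing R] (C E : Type u) [AddCommGroup C] [Module R C]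
    [AddCommGroup E] [Module R E] [Module.Injective R E] :
    ∀ (j : ℕ) (N : Type u) [AddCommGroup N] [Module R N] [Module.Finite R N],
      (∀ (p : Ideal R) [p.IsPrime] (g : (R ⧸ p) →ₗ[R] E), Function.Injective g →
        EV R N (LocalizedModule p.primeCompl C) (j + 1)) → TorV R (C →ₗ[R] E) j N := by
  intro j
  induction j with
  | zero =>
    intro N _ _ _ h n g hg
    rw [injective_iff_map_eq_zero]
    intro z hz
    apply (thetaMap_bijective C E (LinearMap.ker g)).1
    rw [map_zero]
    have hφ : thetaMap R C E (LinearMap.ker g) z ∘ₗ LinearMap.lcomp R C (LinearMap.ker g).subtype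
        = 0 := by
      rw [← thetaMap_natural, hz, map_zero]
    set φ := thetaMap R C E (LinearMap.ker g) z
    by_contra hne
    have hnt : Nontrivial (LinearMap.range φ) := by
      rw [Submodule.nontrivial_iff_ne_bot]
      exact fun h => hne (LinearMap.range_eq_bot.1 h)
    obtain ⟨p, hp⟩ := associatedPrimes.nonempty R (LinearMap.range φ)
    obtain ⟨hpp, e, he⟩ := isAssociatedPrime_iff_exists_injective_linearMap p _ |>.1 hp
    have he' : Function.Injective ((LinearMap.range φ).subtype ∘ₗ e) :=
      Subtype.val_injective.comp he
    obtain ⟨f, hf⟩ := (e 1).2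
    obtain ⟨ψ, hψ⟩ := (EV_one_iff (LinearMap.ker g).injective_subtype hg
      (exact_subtype_ker g)).1 (h p _ he') (LocalizedModule.mkLinearMap p.primeCompl C ∘ₗ f)
    obtain ⟨ψ', s, hs⟩ := Module.FinitePresentation.exists_lift_of_isLocalizedModule p.primeCompl
      (LocalizedModule.mkLinearMap p.primeCompl C) ψ
    obtain ⟨t, ht⟩ := Module.Finite.exists_smul_of_comp_eq_of_isLocalizedModule p.primeCompl
      (LocalizedModule.mkLinearMap p.primeCompl C) (ψ' ∘ₗ (LinearMap.ker g).subtype)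
      (s • f) (by rw [← LinearMap.comp_assoc, hs, LinearMap.comp_smul, ← hψ, LinearMap.smul_comp])
    have h1 : φ (t • s • f) = 0 := by
      rw [← ht, Submonoid.smul_def, map_smul]
      have := LinearMap.congr_fun hφ ψ'
      rw [LinearMap.comp_apply] at this
      rw [show ψ' ∘ₗ (LinearMap.ker g).subtype =
        LinearMap.lcomp R C (LinearMap.ker g).subtype ψ' from rfl, this]
      simp
    have h2 : ((t : R) * (s : R)) ∈ p := by
      rw [← ker_one_mem_iff he', mul_smul]
      rw [Submonoid.smul_def, Submonoid.smul_def, map_smul, map_smul, hf] at h1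
      exact h1
    exact (t * s).2 h2
  | succ j ih =>
    intro N _ _ _ h n g hg
    refine ih _ fun p _ e he => ?_
    exact (EV_shift (LinearMap.ker g).injective_subtype hg (exact_subtype_ker g)).1 (h p e he)

lemma TorV.of_subsingleton (F : Type u) [AddCommGroup F] [Module R F] [Subsingleton F] :
    ∀ (j : ℕ) (N : Type u) [AddCommGroup N] [Module R N], TorV R F j N := by
  intro j
  induction j with
  | zero =>
    intro N _ _ n g _
    have : Subsingleton (LinearMap.ker g ⊗[R] F) := inferInstance
    exact Function.injective_of_subsingleton _
  | succ j ih => exact fun N _ _ n g _ => ih _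

/-- If `Ext¹(N, A) = 0`, maps `N → C` lift along `B → C`. -/
lemma EV.exists_lift {A B C : Type u} [AddCommGroup A] [Module R A] [AddCommGroup B] [Module R B]
    [AddCommGroup C] [Module R C] {f : A →ₗ[R] B} {g : B →ₗ[R] C} (hf : Function.Injective f)
    (hg : Function.Surjective g) (hfg : Function.Exact f g) {N : Type u} [AddCommGroup N]
    [Module R N] (h : EV R N A 1) (φ : N →ₗ[R] C) : ∃ ψ : N →ₗ[R] B, g ∘ₗ ψ = φ := by
  obtain ⟨y, hy⟩ := Abelian.Ext.covariant_sequence_exact₃ (ModuleCat.of R N)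
    (mkS_shortExact hf hg hfg) (Abelian.Ext.mk₀ (ModuleCat.ofHom φ)) (zero_add 1) (h.eq_zero _)
  obtain ⟨ψ, rfl⟩ := Abelian.Ext.addEquiv₀.symm.surjective y
  refine ⟨ψ.hom, ?_⟩
  simp only [Abelian.Ext.addEquiv₀_symm_apply, Abelian.Ext.mk₀_comp_mk₀] at hy
  exact congrArg ModuleCat.Hom.hom ((Abelian.Ext.mk₀_bijective _ _).1 hy)

end

section
variable {R : Type u} [CommRing R]
open TensorProduct

/-! ### Modules with Bass numbers concentrated on the (shifted) height -/

/-- The class of modules `M` for which `Ext^i(R/p, M_p)` vanishes unless `i = ht p - n` and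
`ht p ≤ d`. Passing to the cokernel of an injective hull raises `n` by one, and the class is zero
once `n > d`. -/
def HtClass (R : Type u) [CommRing R] (n d : ℕ) (M : Type u) [AddCommGroup M] [Module R M] : Prop :=
  ∀ (p : Ideal R) [p.IsPrime] (i : ℕ),
    ¬ (primeHeight R p = (i + n : ℕ) ∧ primeHeight R p ≤ d) →
      EV R (R ⧸ p) (LocalizedModule p.primeCompl M) i

section hull
variable {M E : Type u} [AddCommGroup M] [Module R M] [AddCommGroup E] [Module R E]
  {ι : M →ₗ[R] E} (hess : ∀ e : E, e ≠ 0 → ∃ (r : R) (m : M), r • e = ι m ∧ m ≠ 0)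

include hess in
/-- The associated primes of an essential extension of `M` are associated to `M`. -/
lemma exists_injective_of_essential (hι : Function.Injective ι) (p : Ideal R) [hp : p.IsPrime]
    {g : (R ⧸ p) →ₗ[R] E} (hg : Function.Injective g) :
    ∃ g' : (R ⧸ p) →ₗ[R] M, Function.Injective g' := by
  have h1 : (1 : R ⧸ p) ≠ 0 := fun h =>
    hp.ne_top ((Ideal.eq_top_iff_one p).2 (Ideal.Quotient.eq_zero_iff_mem.1 h))
  obtain ⟨r, m, hrm, hm0⟩ := hess (g 1) (by rwa [Ne, map_eq_zero_iff g hg])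
  have hr : r ∉ p := by
    rw [← ker_one_mem_iff hg, hrm, map_eq_zero_iff ι hι]
    exact hm0
  have hker : ∀ a : R, a • m = 0 ↔ a ∈ p := by
    intro a
    rw [← map_eq_zero_iff ι hι, map_smul, ← hrm, ← mul_smul, ker_one_mem_iff hg]
    exact ⟨fun h => (hp.mem_or_mem h).resolve_right hr, fun h => p.mul_mem_right _ h⟩
  refine ⟨p.liftQ (LinearMap.toSpanSingleton R M m) fun a ha => (hker a).2 ha, ?_⟩
  rw [← LinearMap.ker_eq_bot]
  apply Submodule.ker_liftQ_eq_bot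
  exact fun a ha => (hker a).1 ha

include hess in
/-- Maps `R/p → E_p` land in `M_p` when `M ⊆ E` is essential: they are killed by every `q` that
vanishes on `M`, if its target has no torsion with respect to the complement of `p`. -/
lemma comp_eq_zero_of_essential [IsNoetherianRing R] (hι : Function.Injective ι) (p : Ideal R)
    [hp : p.IsPrime] {X : Type u} [AddCommGroup X] [Module R X]
    (q : LocalizedModule p.primeCompl E →ₗ[R] X)
    (hX : ∀ s ∉ p, ∀ x : X, s • x = 0 → x = 0)
    (hq : ∀ m, q (LocalizedModule.mkLinearMap p.primeCompl E (ι m)) = 0)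
    (g : (R ⧸ p) →ₗ[R] LocalizedModule p.primeCompl E) : q ∘ₗ g = 0 := by
  have := Module.finitePresentation_of_finite R (R ⧸ p)
  obtain ⟨g', s, hs⟩ := Module.FinitePresentation.exists_lift_of_isLocalizedModule p.primeCompl
      (LocalizedModule.mkLinearMap p.primeCompl E) g
  have hs1 : LocalizedModule.mkLinearMap p.primeCompl E (g' 1) = (s : R) • g 1 :=
    LinearMap.congr_fun hs 1
  have key : q (g 1) = 0 := by
    by_cases h0 : g' 1 = 0
    · apply hX s s.2
      rw [← map_smul, ← hs1, h0, map_zero, map_zero]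
    · obtain ⟨r, m, hrm, hm0⟩ := hess _ h0
      have hr : r ∉ p := by
        intro hr
        have h2 : r • (1 : R ⧸ p) = 0 := by
          rw [Algebra.smul_def, mul_one]; exact Ideal.Quotient.eq_zero_iff_mem.2 hr
        rw [← map_smul, h2, map_zero] at hrm
        exact hm0 ((map_eq_zero_iff ι hι).1 hrm.symm)
      apply hX s s.2
      apply hX r hr
      rw [← map_smul, ← hs1, ← map_smul, ← map_smul, hrm, hq]
  ext
  exact key

/-- The cokernel of an injective hull shifts the Bass numbers down by one degree. In degree `0` this
uses that maps `R/p → E_p` already land in `M_p`. -/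
lemma HtClass.quotient [IsNoetherianRing R] [Module.Injective R E] (hι : Function.Injective ι)
    (hess : ∀ e : E, e ≠ 0 → ∃ (r : R) (m : M), r • e = ι m ∧ m ≠ 0) {n d : ℕ}
    (h : HtClass R n d M) : HtClass R (n + 1) d (E ⧸ LinearMap.range ι) := by
  intro p _ i hi
  have hex : Function.Exact ι (LinearMap.range ι).mkQ := by
    intro x; simp
  let ιp := IsLocalizedModule.map p.primeCompl (LocalizedModule.mkLinearMap p.primeCompl M)
    (LocalizedModule.mkLinearMap p.primeCompl E) ι
  let qp := IsLocalizedModule.map p.primeCompl (LocalizedModule.mkLinearMap p.primeCompl E)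
    (LocalizedModule.mkLinearMap p.primeCompl (E ⧸ LinearMap.range ι)) (LinearMap.range ι).mkQ
  have e1 : Function.Injective ιp := IsLocalizedModule.map_injective p.primeCompl _ _ _ hι
  have e2 : Function.Surjective qp :=
    IsLocalizedModule.map_surjective p.primeCompl _ _ _ (Submodule.mkQ_surjective _)
  have e3 : Function.Exact ιp qp := IsLocalizedModule.map_exact p.primeCompl _ _ _ _ _ hex
  have h1 : EV R (R ⧸ p) (LocalizedModule p.primeCompl M) (i + 1) :=
    h p (i + 1) (by rwa [show i + 1 + n = i + (n + 1) by ring])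
  cases i with
  | succ i => exact EV.cov₃ e1 e2 e3 (EV.localize' p.primeCompl (EV.of_injective _ _ _)) h1
  | zero =>
    rw [EV_zero_iff]
    intro f
    obtain ⟨g, rfl⟩ := EV.exists_lift e1 e2 e3 h1 f
    refine comp_eq_zero_of_essential hess hι p qp ?_ ?_ g
    · intro s hs x hx
      have := (Module.End.isUnit_iff _).1 (IsLocalizedModule.map_units
        (LocalizedModule.mkLinearMap p.primeCompl (E ⧸ LinearMap.range ι)) (⟨s, hs⟩ : p.primeCompl))
      exact this.1 (by simpa using hx)
    · intro m
      have : (LinearMap.range ι).mkQ (ι m) = 0 := by simp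
      simp only [qp, IsLocalizedModule.map_apply, this, map_zero]

end hull

/-- The associated primes of a module in `HtClass n d` have height `n`. -/
lemma HtClass.height_eq [IsNoetherianRing R] {M : Type u} [AddCommGroup M] [Module R M] {n d : ℕ}
    (h : HtClass R n d M) (p : Ideal R) [p.IsPrime] {g : (R ⧸ p) →ₗ[R] M}
    (hg : Function.Injective g) : primeHeight R p = n ∧ n ≤ d := by
  by_contra hcon
  refine not_EV_zero_of_injective p hg (h p 0 fun h1 => hcon ?_)
  rw [Nat.zero_add] at h1
  refine ⟨h1.1, ?_⟩
  have h2 := h1.2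
  rw [h1.1] at h2
  exact_mod_cast h2

/-- For modules in `HtClass n d` the evaluation map `C ⊗ Hom(C, M) → M` is bijective, the flat
dimension of `Hom(C, M)` is at most `n`, and `Tor_{>0}(C, Hom(C, M)) = 0`. This goes by downward
induction on `n`, comparing `M` with its injective hull and the cokernel. -/
theorem HtClass.main [IsNoetherianRing R] (C : Type u) [AddCommGroup C] [Module R C]
    [Module.Finite R C]
    (hC : Function.Bijective (fun r : R => r • (LinearMap.id : C →ₗ[R] C)))
    (hE : ∀ i, EV R C C (i + 1))
    (hht : ∀ (p : Ideal R) [p.IsPrime] (N : Type u) [AddCommGroup N] [Module R N]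
      [Module.Finite R N] (i : ℕ), primeHeight R p < i → EV R N (LocalizedModule p.primeCompl C) i)
    (d : ℕ) : ∀ (k n : ℕ) (_ : d + 1 ≤ n + k) (M : Type u) [AddCommGroup M] [Module R M],
      HtClass R n d M → Function.Bijective (evMap R C M) ∧
        (∀ (N : Type u) [AddCommGroup N] [Module R N] [Module.Finite R N],
          TorV R (C →ₗ[R] M) n N) ∧ ∀ j, TorV R (C →ₗ[R] M) j C := by
  intro k
  induction k with
  | zero =>
    intro n hnk M _ _ hM
    have hs : Subsingleton M := by
      by_contra hne
      rw [not_subsingleton_iff_nontrivial] at hne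
      obtain ⟨p, hp⟩ := associatedPrimes.nonempty R M
      obtain ⟨hpp, g, hg⟩ := isAssociatedPrime_iff_exists_injective_linearMap p _ |>.1 hp
      have := (hM.height_eq p hg).2
      omega
    have hF : Subsingleton (C →ₗ[R] M) := inferInstance
    refine ⟨⟨?_, fun m => ⟨0, Subsingleton.elim _ _⟩⟩, fun N _ _ _ => TorV.of_subsingleton _ _ _,
      fun j => TorV.of_subsingleton _ _ _⟩
    exact Function.injective_of_subsingleton _
  | succ k ih =>
    intro n hnk M _ _ hM
    obtain ⟨E, _, _, _, ι, hι, hess⟩ := exists_injective_hull (R := R) M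
    have hM' := hM.quotient hι hess
    obtain ⟨ev', hN', hT'⟩ := ih (n + 1) (by omega) _ hM'
    set M' := E ⧸ LinearMap.range ι
    let π : E →ₗ[R] M' := (LinearMap.range ι).mkQ
    have hπ : Function.Surjective π := Submodule.mkQ_surjective _
    have hex : Function.Exact ι π := by
      exact fun x => Submodule.Quotient.mk_eq_zero (LinearMap.range ι)
    have evE := evMap_bijective_of_injective C E hC
    have hass : ∀ (p : Ideal R) [p.IsPrime] (g : (R ⧸ p) →ₗ[R] E), Function.Injective g →
        primeHeight R p = n := by
      intro p _ g hg
      obtain ⟨g', hg'⟩ := exists_injective_of_essential hess hι p hg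
      exact (hM.height_eq p hg').1
    have hNE : ∀ (N : Type u) [AddCommGroup N] [Module R N] [Module.Finite R N],
        TorV R (C →ₗ[R] E) n N := by
      intro N _ _ _
      refine TorV.of_injective C E n N fun p _ g hg => hht p N _ ?_
      rw [hass p g hg]
      exact_mod_cast Nat.lt_succ_self n
    have hTE : ∀ j, TorV R (C →ₗ[R] E) j C := fun j =>
      TorV.of_injective C E j C fun p _ g hg => (hE j).localize' _
    let a : (C →ₗ[R] M) →ₗ[R] (C →ₗ[R] E) := LinearMap.llcomp R C M E ι
    let b : (C →ₗ[R] E) →ₗ[R] (C →ₗ[R] M') := LinearMap.llcomp R C E M' π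
    have ha : Function.Injective a := by
      intro f g hfg
      ext c
      exact hι (LinearMap.congr_fun hfg c)
    have hb : Function.Surjective b := by
      have hsurj : Function.Surjective (b.lTensor C) := by
        intro z
        obtain ⟨e, he⟩ := hπ (evMap R C M' z)
        obtain ⟨y, rfl⟩ := evE.2 e
        refine ⟨y, ev'.1 ?_⟩
        rw [← he]
        exact evMap_natural C π y
      have h0 : Subsingleton (C ⊗[R] ((C →ₗ[R] M') ⧸ LinearMap.range b)) := by
        refine ⟨fun x y => ?_⟩
        suffices ∀ z : C ⊗[R] ((C →ₗ[R] M') ⧸ LinearMap.range b), z = 0 by rw [this x, this y]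
        intro z
        obtain ⟨y, rfl⟩ := LinearMap.lTensor_surjective C
          (Submodule.mkQ_surjective (LinearMap.range b)) z
        obtain ⟨w, rfl⟩ := hsurj y
        rw [← LinearMap.comp_apply, ← LinearMap.lTensor_comp,
          show (LinearMap.range b).mkQ ∘ₗ b = 0 from LinearMap.range_mkQ_comp b,
          LinearMap.lTensor_zero, LinearMap.zero_apply]
      have := subsingleton_of_tensor C hC.1 ((C →ₗ[R] M') ⧸ LinearMap.range b)
      rw [← LinearMap.range_eq_top]
      exact Submodule.Quotient.subsingleton_iff.1 this
    have hab : Function.Exact a b := by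
      intro f
      constructor
      · intro hf
        have : ∀ c, f c ∈ LinearMap.range ι := fun c => (hex _).1 (LinearMap.congr_fun hf c)
        choose m hm using this
        refine ⟨{ toFun := m, map_add' := ?_, map_smul' := ?_ }, ?_⟩
        · intro x y; apply hι; simp [hm]
        · intro r x; apply hι; simp [hm]
        · ext c; exact hm c
      · rintro ⟨g, rfl⟩
        ext c
        exact hex.apply_apply_eq_zero (g c)
    obtain ⟨m, g, hg⟩ := Module.Finite.exists_fin' R C
    have hinj : Function.Injective (a.lTensor C) :=
      lTensor_injective_of_quotient hg (exact_subtype_ker g) ha hb hab (hT' 0 m g hg)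
    refine ⟨⟨?_, ?_⟩, ?_, ?_⟩
    · have : Function.Injective (ι ∘ evMap R C M) := by
        have h2 := evE.1.comp hinj
        convert h2 using 1
        ext z
        exact (evMap_natural C ι z).symm
      exact this.of_comp
    · intro x
      obtain ⟨y, hy⟩ := evE.2 (ι x)
      have h3 : b.lTensor C y = 0 := by
        apply ev'.1
        rw [map_zero]
        refine (evMap_natural C π y).trans ?_
        rw [hy, hex.apply_apply_eq_zero]
      obtain ⟨w, rfl⟩ := (lTensor_exact C hab hb _).1 h3
      refine ⟨w, hι ?_⟩
      rw [← hy]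
      exact (evMap_natural C ι w).symm
    · intro N _ _ _
      exact TorV.step ha hb hab n N (hNE N) (hN' N)
    · intro j
      exact TorV.step ha hb hab j C (hTE j) (hT' (j + 1))

end

section
variable {R : Type u} [CommRing R]
open TensorProduct

/-! ### Gluing over the maximal ideals -/

/-- Composition with the localization map, `Hom(C, M) → Hom(C, M_S)`. -/
noncomputable abbrev homLoc (S : Submonoid R) (C M : Type u) [AddCommGroup C] [Module R C]
    [AddCommGroup M] [Module R M] : (C →ₗ[R] M) →ₗ[R] (C →ₗ[R] LocalizedModule S M) :=
  LinearMap.llcomp R C M (LocalizedModule S M) (LocalizedModule.mkLinearMap S M)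

section loc
variable [IsNoetherianRing R] (S : Submonoid R) (C M : Type u) [AddCommGroup C] [Module R C]
  [Module.Finite R C] [AddCommGroup M] [Module R M]

/-- `Hom(C, M)_S = Hom(C, M_S)` for `C` finitely generated. -/
lemma isLocalizedModule_hom : IsLocalizedModule S
    (homLoc S C M) := by
  have := Module.finitePresentation_of_finite R C
  set g := LocalizedModule.mkLinearMap S M
  constructor
  · intro s
    rw [Module.End.isUnit_iff]
    have := (Module.End.isUnit_iff _).mp (IsLocalizedModule.map_units (S := S) (f := g) s)
    constructor
    · exact fun _ _ e ↦ LinearMap.ext fun m ↦ this.left (LinearMap.congr_fun e m)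
    · intro h
      use ((IsLocalizedModule.map_units (S := S) (f := g) s).unit⁻¹).1 ∘ₗ h
      ext x
      exact Module.End.isUnit_apply_inv_apply_of_isUnit
        (IsLocalizedModule.map_units (S := S) (f := g) s) (h x)
  · intro h
    obtain ⟨h', s, e⟩ := Module.FinitePresentation.exists_lift_of_isLocalizedModule S g h
    exact ⟨⟨h', s⟩, e.symm⟩
  · intro h₁ h₂ e
    exact Module.Finite.exists_smul_of_comp_eq_of_isLocalizedModule S g _ _ e

lemma isLocalizedModule_tensor_hom : IsLocalizedModule S
    ((homLoc S C M).lTensor C) := by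
  have := isLocalizedModule_hom S C M
  set g := homLoc S C M
  have h1 : IsLocalizedModule S (g.rTensor C) :=
    (IsLocalizedModule.rTensor (R := R) (A := R) S g : _)
  have h2 := IsLocalizedModule.of_linearEquiv S (g.rTensor C) (TensorProduct.comm R _ C)
  have h3 := IsLocalizedModule.of_linearEquiv_right S
    ((TensorProduct.comm R _ C).toLinearMap ∘ₗ g.rTensor C) (TensorProduct.comm R C _)
  convert h3 using 1
  ext c f
  rfl

lemma evMap_bijective_of_local
    (h : ∀ m : Ideal R, ∀ _ : m.IsMaximal,
      Function.Bijective (evMap R C (LocalizedModule m.primeCompl M))) :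
    Function.Bijective (evMap R C M) := by
  refine bijective_of_localized_maximal _ fun m hm => ?_
  have h1 := isLocalizedModule_tensor_hom m.primeCompl C M
  let e := IsLocalizedModule.iso m.primeCompl ((homLoc m.primeCompl C M).lTensor C)
  have h2 : (LocalizedModule.map m.primeCompl (evMap R C M)).restrictScalars R =
      evMap R C (LocalizedModule m.primeCompl M) ∘ₗ e.toLinearMap := by
    refine IsLocalizedModule.ext m.primeCompl (LocalizedModule.mkLinearMap m.primeCompl _)
      (IsLocalizedModule.map_units (LocalizedModule.mkLinearMap m.primeCompl M)) ?_
    apply LinearMap.ext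
    intro z
    have h3 : e (LocalizedModule.mkLinearMap m.primeCompl _ z) =
        (homLoc m.primeCompl C M).lTensor C z :=
      IsLocalizedModule.iso_apply_mk m.primeCompl _ z 1 |>.trans (by simp)
    refine (IsLocalizedModule.map_apply m.primeCompl
      (LocalizedModule.mkLinearMap m.primeCompl _) (LocalizedModule.mkLinearMap m.primeCompl _)
      _ z).trans ?_
    refine (evMap_natural C _ z).symm.trans ?_
    exact congrArg _ h3.symm
  have h4 := (h m hm).comp e.bijective
  have h5 := congrArg (fun f : LocalizedModule m.primeCompl (C ⊗[R] (C →ₗ[R] M)) →ₗ[R]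
    LocalizedModule m.primeCompl M => (f : _ → _)) h2
  exact h5 ▸ h4

lemma flat_hom_of_local
    (h : ∀ m : Ideal R, ∀ _ : m.IsMaximal,
      Module.Flat R (C →ₗ[R] LocalizedModule m.primeCompl M)) :
    Module.Flat R (C →ₗ[R] M) := by
  refine Module.flat_of_localized_maximal _ fun m hm => ?_
  have := isLocalizedModule_hom m.primeCompl C M
  have := h m hm
  exact Module.Flat.of_linearEquiv (IsLocalizedModule.iso m.primeCompl (homLoc m.primeCompl C M))

end loc

/-- A module is flat if `Tor_1(N, F)` vanishes for all finitely generated `N`, already if it does so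
for the cyclic ones. -/
lemma flat_of_TorV {F : Type u} [AddCommGroup F] [Module R F]
    (h : ∀ (N : Type u) [AddCommGroup N] [Module R N] [Module.Finite R N], TorV R F 0 N) :
    Module.Flat R F := by
  rw [Module.Flat.iff_rTensor_injective']
  intro I
  let e : (Fin 1 → R) ≃ₗ[R] R := LinearEquiv.funUnique (Fin 1) R R
  let g : (Fin 1 → R) →ₗ[R] R ⧸ I := I.mkQ ∘ₗ e.toLinearMap
  have hg : Function.Surjective g := (Submodule.mkQ_surjective I).comp e.surjective
  have h1 := h (R ⧸ I) 1 g hg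
  have hk : ∀ x : LinearMap.ker g, e x ∈ I := fun x =>
    (Submodule.Quotient.mk_eq_zero I).1 x.2
  have hk' : ∀ x : I, e.symm x ∈ LinearMap.ker g := fun x =>
    (Submodule.Quotient.mk_eq_zero I).2 (by simp)
  let j : I →ₗ[R] LinearMap.ker g :=
    (e.symm.toLinearMap ∘ₗ I.subtype).codRestrict _ hk'
  let j' : LinearMap.ker g →ₗ[R] I :=
    (e.toLinearMap ∘ₗ (LinearMap.ker g).subtype).codRestrict I hk
  have hjj : j' ∘ₗ j = LinearMap.id := by
    ext x
    exact e.apply_symm_apply _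
  have hj : Function.Injective (j.rTensor F) := by
    apply Function.LeftInverse.injective (g := j'.rTensor F)
    intro z
    rw [← LinearMap.comp_apply, ← LinearMap.rTensor_comp, hjj, LinearMap.rTensor_id]
    rfl
  have h2 : Function.Injective (e.toLinearMap.rTensor F) := (e.rTensor F).injective
  have h3 : I.subtype = e.toLinearMap ∘ₗ (LinearMap.ker g).subtype ∘ₗ j := by
    ext x
    exact (e.apply_symm_apply _).symm
  rw [h3, LinearMap.rTensor_comp, LinearMap.rTensor_comp]
  exact h2.comp (h1.comp hj)

lemma primeHeight_ne_top [IsNoetherianRing R] (p : Ideal R) [hp : p.IsPrime] :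
    primeHeight R p ≠ ⊤ := by
  have h4 : p.height = primeHeight R p := PrimeSpectrum.height_eq_orderHeight ⟨p, hp⟩
  rw [← h4]
  exact Ideal.height_ne_top hp.ne_top

lemma primeHeight_mono {p q : Ideal R} [hp : p.IsPrime] [hq : q.IsPrime] (h : p ≤ q) :
    primeHeight R p ≤ primeHeight R q :=
  Order.height_mono (show (⟨p, hp⟩ : PrimeSpectrum R) ≤ ⟨q, hq⟩ from h)

/-- The localization at `m` of a module satisfying the Bass number condition satisfies it too, and
its Bass numbers are supported on the primes contained in `m`. -/
lemma HtClass.of_bass [IsNoetherianRing R] (M : Type u) [AddCommGroup M] [Module R M]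
    (h : ∀ (p : Ideal R) [p.IsPrime] (i : ℕ), (i : ℕ∞) ≠ primeHeight R p →
      EV R (R ⧸ p) (LocalizedModule p.primeCompl M) i)
    (m : Ideal R) [hm : m.IsPrime] (d : ℕ) (hd : primeHeight R m = d) :
    HtClass R 0 d (LocalizedModule m.primeCompl M) := by
  intro p hp i hi
  by_cases hpm : p ≤ m
  · have h1 : (i : ℕ∞) ≠ primeHeight R p := by
      intro h1
      refine hi ⟨h1.symm, ?_⟩
      rw [← hd]
      exact primeHeight_mono hpm
    obtain ⟨e1⟩ := locLocEquiv (primeCompl_le_of_le hpm) M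
    obtain ⟨e2⟩ := locTensorEquiv p.primeCompl (LocalizedModule m.primeCompl M)
    exact (h p i h1).congr (.refl _ _) (e1.symm ≪≫ₗ TensorProduct.comm R _ _ ≪≫ₗ e2.symm)
  · obtain ⟨x, hxp, hxm⟩ := Set.not_subset.1 hpm
    -- `x` kills `R/p` and acts invertibly on `M_m`
    refine EV.localize' p.primeCompl (EV.of_bijective (x := x) ?_ ?_ i)
    · intro n
      obtain ⟨r, rfl⟩ := Ideal.Quotient.mk_surjective n
      rw [Algebra.smul_def]
      rw [show algebraMap R (R ⧸ p) x = 0 from Ideal.Quotient.eq_zero_iff_mem.2 hxp, zero_mul]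
    · exact (Module.End.isUnit_iff _).1 (IsLocalizedModule.map_units (S := m.primeCompl)
        (LocalizedModule.mkLinearMap m.primeCompl M) ⟨x, hxm⟩)

section final
variable [IsNoetherianRing R] (C : Type u) [AddCommGroup C] [Module R C] [Module.Finite R C]

/-- A module whose Bass numbers are concentrated at the heights is `C`-flat. -/
theorem isCFlat_of_bass
    (hC : Function.Bijective (fun r : R => r • (LinearMap.id : C →ₗ[R] C)))
    (hE : ∀ i, EV R C C (i + 1))
    (hB : ∀ (p : Ideal R) [p.IsPrime] (i : ℕ), (i : ℕ∞) ≠ primeHeight R p →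
      EV R (R ⧸ p) (LocalizedModule p.primeCompl C) i)
    (M : Type u) [AddCommGroup M] [Module R M]
    (h : ∀ (p : Ideal R) [p.IsPrime] (i : ℕ), (i : ℕ∞) ≠ primeHeight R p →
      EV R (R ⧸ p) (LocalizedModule p.primeCompl M) i) : IsCFlat R C M := by
  have key : ∀ m : Ideal R, ∀ _ : m.IsMaximal,
      Function.Bijective (evMap R C (LocalizedModule m.primeCompl M)) ∧
        Module.Flat R (C →ₗ[R] LocalizedModule m.primeCompl M) := by
    intro m hm
    obtain ⟨d, hd⟩ := ENat.ne_top_iff_exists.1 (primeHeight_ne_top m)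
    obtain ⟨h1, h2, -⟩ := HtClass.main C hC hE
      (fun p _ N _ _ _ i hi => EV_of_gt_height C (fun p _ i hi => hB p i hi) p N i hi)
      d (d + 1) 0 (by omega) _ (HtClass.of_bass M h m d hd.symm)
    exact ⟨h1, flat_of_TorV fun N _ _ _ => h2 N⟩
  exact ⟨C →ₗ[R] M, inferInstance, inferInstance, flat_hom_of_local C M fun m hm => (key m hm).2,
    ⟨(LinearEquiv.ofBijective _
      (evMap_bijective_of_local C M fun m hm => (key m hm).1)).symm⟩⟩

omit [Module.Finite R C] in
/-- If the Bass numbers of `C` are concentrated at the heights, so are those of `C ⊗ F` for `F`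
flat. -/
theorem bass_of_isCFlat
    (hB : ∀ (p : Ideal R) [p.IsPrime] (i : ℕ), (i : ℕ∞) ≠ primeHeight R p →
      EV R (R ⧸ p) (LocalizedModule p.primeCompl C) i)
    (M : Type u) [AddCommGroup M] [Module R M] (h : IsCFlat R C M)
    (p : Ideal R) [p.IsPrime] (i : ℕ) (hi : (i : ℕ∞) ≠ primeHeight R p) :
    EV R (R ⧸ p) (LocalizedModule p.primeCompl M) i := by
  obtain ⟨F, _, _, _, ⟨e⟩⟩ := h
  obtain ⟨e1⟩ := locTensorEquiv p.primeCompl M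
  obtain ⟨e2⟩ := locTensorEquiv p.primeCompl C
  refine ((hB p i hi).tensor_flat _ F i _).congr (.refl _ _) ?_
  exact TensorProduct.congr e2 (.refl R _) ≪≫ₗ TensorProduct.assoc R _ _ _ ≪≫ₗ
    TensorProduct.congr (.refl R _) e.symm ≪≫ₗ e1.symm

end final
end

section
variable {R : Type u} [CommRing R]

/-! ### Finite injective dimension and localization of semidualizing modules -/

/-- Baer's criterion in degree `n`: the injective dimension is detected by cyclic modules. -/
lemma EV_of_cyclic (n : ℕ) : ∀ (D : Type u) [AddCommGroup D] [Module R D],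
    (∀ (I : Ideal R) (i : ℕ), n < i → EV R (R ⧸ I) D i) →
    ∀ (N : Type u) [AddCommGroup N] [Module R N] (i : ℕ), n < i → EV R N D i := by
  induction n with
  | zero =>
    intro D _ _ h N _ _ i hi
    have hinj : Module.Injective R D := by
      apply Module.Baer.injective
      intro I φ
      have h1 : Function.Exact I.subtype I.mkQ := fun x => by
        rw [Submodule.mkQ_apply, Submodule.Quotient.mk_eq_zero]
        exact ⟨fun hx => ⟨⟨x, hx⟩, rfl⟩, by rintro ⟨y, rfl⟩; exact y.2⟩
      obtain ⟨ψ, hψ⟩ := (EV_one_iff (N := D) I.injective_subtype I.mkQ_surjective h1).1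
        (h I 1 (by omega)) φ
      exact ⟨ψ, fun x hx => LinearMap.congr_fun hψ ⟨x, hx⟩⟩
    obtain ⟨i, rfl⟩ := Nat.exists_eq_succ_of_ne_zero hi.ne'
    exact EV.of_injective _ _ _
  | succ n ih =>
    intro D _ _ h N _ _ i hi
    obtain ⟨E, _, _, _, ι, hι⟩ := exists_injective_embedding (R := R) D
    have hex : Function.Exact ι (LinearMap.range ι).mkQ :=
      fun x => Submodule.Quotient.mk_eq_zero (LinearMap.range ι)
    have hs := Submodule.mkQ_surjective (LinearMap.range ι)
    obtain ⟨i, rfl⟩ := Nat.exists_eq_succ_of_ne_zero (Nat.ne_zero_of_lt hi)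
    refine EV.cov₁ hι hs hex (ih _ (fun I j hj => ?_) N i (by omega)) (EV.of_injective _ _ _)
    obtain ⟨j, rfl⟩ := Nat.exists_eq_succ_of_ne_zero (Nat.ne_zero_of_lt hj)
    exact EV.cov₃ hι hs hex (EV.of_injective _ _ _) (h I _ (by omega))

lemma injDim_lt_top_iff (D : Type u) [AddCommGroup D] [Module R D] :
    injDim R D < ⊤ ↔ ∃ n : ℕ, ∀ (N : Type u) [AddCommGroup N] [Module R N] (i : ℕ),
      n < i → EV R N D i := by
  simp only [injDim, sInf_lt_iff, Set.mem_ofPred_eq, extM_subsingleton_iff]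
  constructor
  · rintro ⟨n, hn, hlt⟩
    obtain ⟨n, rfl⟩ := ENat.ne_top_iff_exists.1 hlt.ne
    exact ⟨n, fun N _ _ i hi => hn N _ _ i (by exact_mod_cast hi)⟩
  · rintro ⟨n, hn⟩
    exact ⟨n, fun N _ _ i hi => hn N i (by exact_mod_cast hi), ENat.natCast_lt_top n⟩

/-- Localization preserves `C` having only the homotheties as endomorphisms: `Hom(C, C)` commutes
with it because `C` is finitely presented. -/
lemma homothety_localize [IsNoetherianRing R] (C : Type u) [AddCommGroup C] [Module R C]
    [Module.Finite R C] (S : Submonoid R)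
    (h : Function.Bijective (fun r : R => r • (LinearMap.id : C →ₗ[R] C))) :
    Function.Bijective (fun r : Localization S =>
      r • (LinearMap.id : LocalizedModule S C →ₗ[Localization S] LocalizedModule S C)) := by
  have := Module.finitePresentation_of_finite R C
  let A := Localization S
  let f := LocalizedModule.mkLinearMap S C
  let φ : R ≃ₗ[R] (C →ₗ[R] C) :=
    LinearEquiv.ofBijective (LinearMap.toSpanSingleton R (C →ₗ[R] C) LinearMap.id) h
  have h1 := IsLocalizedModule.of_linearEquiv_right S (IsLocalizedModule.mapExtendScalars S f f A) φ
  let e := IsLocalizedModule.linearEquiv S (Algebra.linearMap R A)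
    (IsLocalizedModule.mapExtendScalars S f f A ∘ₗ φ.toLinearMap)
  have hid : IsLocalizedModule.mapExtendScalars S f f A LinearMap.id = LinearMap.id := by
    apply LinearMap.ext
    intro x
    exact LinearMap.congr_fun (IsLocalizedModule.map_id S f) x
  have he : ∀ r : R, e (algebraMap R A r) = r • LinearMap.id := by
    intro r
    refine (IsLocalizedModule.linearEquiv_apply S _ _ r).trans ?_
    have h2 : φ r = r • LinearMap.id := rfl
    rw [LinearMap.comp_apply, LinearEquiv.coe_coe, h2, map_smul, hid]
  have h3 : (fun r : A => r • (LinearMap.id : LocalizedModule S C →ₗ[A] LocalizedModule S C)) =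
      e := by
    funext a
    obtain ⟨⟨r, s⟩, hrs⟩ := IsLocalization.surj S a
    have hu := IsLocalization.map_units A s
    refine hu.smul_left_cancel.1 ?_
    rw [smul_smul, mul_comm, hrs, algebraMap_smul, algebraMap_smul, ← he, ← hrs, mul_comm,
      ← Algebra.smul_def, map_smul]
  rw [h3]
  exact e.bijective

end

/-- A semidualizing module `C` over a Noetherian ring `R` is pointwise dualizing
iff: a module `M` is `C`-flat iff `μ^i(p, M) = 0` for all primes `p` and all `i ≠ ht(p)`. -/
theorem pointwiseDualizing_iff_cflat_bass (R : Type u) [CommRing R] [IsNoetherianRing R]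
    (C : Type u) [AddCommGroup C] [Module R C] (hC : IsSemidualizing R C) :
    IsPointwiseDualizing R C ↔
      ∀ (M : Type u) (_ : AddCommGroup M) (_ : Module R M),
        (IsCFlat R C M ↔ ∀ (p : Ideal R) [p.IsPrime], ∀ i : ℕ,
          (i : ℕ∞) ≠ primeHeight R p → bassNumber R p i M = 0) := by
  have hfin : Module.Finite R C := hC.1
  have hE : ∀ i, EV R C C (i + 1) := fun i =>
    (extM_subsingleton_iff C C (i + 1)).1 (hC.2.2 (i + 1) (Nat.succ_pos i))
  simp only [bassNumber_eq_zero_iff]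
  constructor
  · intro hpd M _ _
    have hB := local_degree_eq_height C hC.2.1.1 hE (by
      intro m hm
      obtain ⟨n, hn⟩ := (injDim_lt_top_iff _).1 (hpd.2 m hm).2
      exact ⟨n + 1, fun i hi => (EV_residue_iff m _).2 (hn _ i hi)⟩)
    exact ⟨fun h p _ i hi => bass_of_isCFlat C (fun p _ i hi => hB p i hi) M h p i hi,
      fun h => isCFlat_of_bass C hC.2.1 hE (fun p _ i hi => hB p i hi) M fun p _ i hi => h p i hi⟩
  · intro h
    have hB := (h C inferInstance inferInstance).1
      ⟨R, inferInstance, inferInstance, inferInstance, ⟨(TensorProduct.rid R C).symm⟩⟩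
    refine ⟨hC, fun m _ hm => ⟨⟨inferInstance, homothety_localize C _ hC.2.1, ?_⟩, ?_⟩⟩
    · intro i hi
      obtain ⟨i, rfl⟩ := Nat.exists_eq_succ_of_ne_zero hi.ne'
      exact (extM_subsingleton_iff _ _ _).2 (EV.self_localize C _ (hE i))
    · rw [injDim_lt_top_iff]
      obtain ⟨d, hd⟩ := ENat.ne_top_iff_exists.1 (primeHeight_ne_top m)
      refine ⟨d, EV_of_cyclic d _ fun I i hi => ?_⟩
      refine EV.of_residue _ (n := d + 1) (fun j hj => (EV_residue_iff m _).1 (hB m j ?_)) _ i hi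
      rw [← hd]
      exact_mod_cast (Nat.ne_of_gt hj)
end
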